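/- Let k be a field, e ≥ 3 an integer, and Q the localization of the polynomial ring k[X₁, …, X_e] at the maximal ideal (X₁, …, X_e). For every pair of integers m ≥ 3 and n ≥ 1 such that the format (1, m, m+n−1, n) is not Dynkin, i.e. such that 2(m+n−1) ≤ (m−2)(n+1), there exists a grade 3 perfect ideal I in Q of resolution format (1, m, m+n−1, n) that is not licci. -/

import Mathlib

/-- An ideal `I` in a commutative Noetherian local ring `Q` has **resolution format**
`(1, m, m+n-1, n)` if the minimal free resolution of `Q/I` over `Q` is
`0 → Q^n → Q^{m+n-1} → Q^m → Q`, i.e. there is an exact complex of free modules of the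
indicated ranks augmented by `Q → Q/I → 0`, which is minimal in the sense that each
differential maps into `𝔫` times the target (`𝔫` the maximal ideal).  Equivalently, the
`i`-th entry of the format is the Betti number `dim_k Tor_i^Q(Q/I, k)`. -/
def HasResolutionFormat {Q : Type*} [CommRing Q] [IsLocalRing Q]
    (I : Ideal Q) (m n : ℕ) : Prop :=
  ∃ (d1 : (Fin m → Q) →ₗ[Q] Q)
    (d2 : (Fin (m + n - 1) → Q) →ₗ[Q] (Fin m → Q))
    (d3 : (Fin n → Q) →ₗ[Q] (Fin (m + n - 1) → Q)),
    LinearMap.range d1 = I ∧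
    LinearMap.range d2 = LinearMap.ker d1 ∧
    LinearMap.range d3 = LinearMap.ker d2 ∧
    LinearMap.ker d3 = ⊥ ∧
    I ≤ IsLocalRing.maximalIdeal Q ∧
    LinearMap.range d2 ≤ (IsLocalRing.maximalIdeal Q) • (⊤ : Submodule Q (Fin m → Q)) ∧
    LinearMap.range d3 ≤ (IsLocalRing.maximalIdeal Q) • (⊤ : Submodule Q (Fin (m + n - 1) → Q))

/-- `I` is a grade `3` perfect ideal of resolution format `(1, m, m+n-1, n)`:
`I` contains a `Q`-regular sequence of length `3`, one has `m ≥ 3` and `n ≥ 1`, and the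
minimal free resolution of `Q/I` has the format `(1, m, m+n-1, n)` (in particular `Q/I`
has projective dimension `3` as a `Q`-module, since `n ≥ 1`). -/
def IsGrade3PerfectOfFormat {Q : Type*} [CommRing Q] [IsLocalRing Q]
    (I : Ideal Q) (m n : ℕ) : Prop :=
  (∃ x y z : Q, x ∈ I ∧ y ∈ I ∧ z ∈ I ∧ RingTheory.Sequence.IsRegular Q [x, y, z]) ∧
  3 ≤ m ∧ 1 ≤ n ∧ HasResolutionFormat I m n

/-- `J` is **directly linked** to `I` if there is a `Q`-regular sequence `x₁, x₂, x₃` of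
elements of `I` with `J = (x₁, x₂, x₃) : I`. -/
def DirectlyLinked {Q : Type*} [CommRing Q] (I J : Ideal Q) : Prop :=
  ∃ x y z : Q, x ∈ I ∧ y ∈ I ∧ z ∈ I ∧ RingTheory.Sequence.IsRegular Q [x, y, z] ∧
    J = Submodule.colon (Ideal.span {x, y, z}) I

/-- `J` is **linked** to `I` if there is a finite chain of ideals
`I = J₀, J₁, …, J_r = J` in which `J_{i+1}` is directly linked to `J_i` for every `i`. -/
def Linked {Q : Type*} [CommRing Q] (I J : Ideal Q) : Prop :=
  Relation.ReflTransGen (fun A B => DirectlyLinked A B) I J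

/-- `I` is **licci** if it is linked to an ideal generated by a `Q`-regular sequence of
length `3`, i.e. `I` is in the linkage class of a complete intersection ideal. -/
def Licci {Q : Type*} [CommRing Q] (I : Ideal Q) : Prop :=
  ∃ C : Ideal Q, Linked I C ∧
    ∃ x y z : Q, RingTheory.Sequence.IsRegular Q [x, y, z] ∧ C = Ideal.span {x, y, z}

section Part1
def Reg3 {Q : Type*} [CommRing Q] (a b c : Q) : Prop :=
  (∀ r, a * r = 0 → r = 0) ∧ (∀ r s, b * r = a * s → ∃ t, r = a * t) ∧
  (∀ r s t, c * r = a * s + b * t → ∃ u v, r = a * u + b * v)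

section
variable {Q : Type*} [CommRing Q]
open RingTheory.Sequence

theorem reg3_iff_weak (a b c : Q) : Reg3 a b c ↔ IsWeaklyRegular Q [a, b, c] := by
  constructor
  · rintro ⟨h1, h2, h3⟩
    constructor
    intro i hi
    rw [isSMulRegular_quotient_iff_mem_of_smul_mem]
    intro x hx
    simp at hi
    interval_cases i
    · simp [Ideal.ofList] at hx ⊢; exact h1 x hx
    · simp [Ideal.ofList, Ideal.mem_span_singleton] at hx ⊢
      obtain ⟨s, hs⟩ := hx
      exact h2 x s hs
    · simp [Ideal.ofList, Set.insert_def, Ideal.mem_span_insert, Ideal.mem_span_singleton] at hx ⊢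
      have e : {x | x = a ∨ x = b} = ({a, b} : Set Q) := rfl
      rw [e, Ideal.mem_span_pair] at hx ⊢
      obtain ⟨s, t, hs⟩ := hx
      obtain ⟨u, v, huv⟩ := h3 x s t (by rw [← hs]; ring)
      exact ⟨u, v, by rw [huv]; ring⟩
  · intro h
    have H := h.regular_mod_prev
    have H0 := H 0 (by simp)
    have H1 := H 1 (by simp)
    have H2 := H 2 (by simp)
    rw [isSMulRegular_quotient_iff_mem_of_smul_mem] at H0 H1 H2
    have e : {x | x = a ∨ x = b} = ({a, b} : Set Q) := rfl
    simp [Ideal.ofList, Ideal.mem_span_singleton, e, Ideal.mem_span_pair] at H0 H1 H2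
    refine ⟨H0, fun r s hrs => ?_, fun r s t hrs => ?_⟩
    · obtain ⟨t, ht⟩ := H1 r ⟨s, hrs⟩
      exact ⟨t, ht⟩
    · obtain ⟨u, v, huv⟩ := H2 r s t (by rw [hrs]; ring)
      exact ⟨u, v, by rw [← huv]; ring⟩

theorem Reg3.k1 {a b c : Q} (h : Reg3 a b c) {u v w : Q} (e : a * u + b * v + c * w = 0) :
    ∃ p q r, u = b * p + c * q ∧ v = - a * p + c * r ∧ w = - a * q - b * r := by
  obtain ⟨h1, h2, h3⟩ := h
  obtain ⟨q, r, hw⟩ := h3 w (-u) (-v) (by linear_combination e)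
  obtain ⟨p, hp⟩ := h2 (v + c * r) (-(u + c * q)) (by rw [hw] at e; linear_combination e)
  refine ⟨-p, -q, -r, ?_, ?_, ?_⟩
  · have := h1 (u + c * q + b * p) (by rw [hw] at e; linear_combination e - b * hp)
    linear_combination this
  · linear_combination hp
  · linear_combination hw

theorem Reg3.k2 {a b c : Q} (h : Reg3 a b c) {p q r : Q} (e1 : b * p + c * q = 0)
    (e2 : - a * p + c * r = 0) (e3 : - a * q - b * r = 0) :
    ∃ t, p = c * t ∧ q = - b * t ∧ r = a * t := by
  obtain ⟨h1, h2, h3⟩ := h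
  obtain ⟨t, ht⟩ := h2 r (-q) (by linear_combination -e3)
  refine ⟨t, ?_, ?_, ht⟩
  · have := h1 (p - c * t) (by rw [ht] at e2; linear_combination -e2)
    linear_combination this
  · have := h1 (q + b * t) (by rw [ht] at e3; linear_combination -e3)
    linear_combination this

theorem Reg3.mul_last {a b c d : Q} (h : Reg3 a b c) (h' : Reg3 a b d) : Reg3 a b (c * d) := by
  refine ⟨h.1, h.2.1, fun r s t e => ?_⟩
  obtain ⟨u, v, e'⟩ := h.2.2 (d * r) s t (by linear_combination e)
  exact h'.2.2 r u v e'

theorem Reg3.pow_last {a b c : Q} (h : Reg3 a b c) (n : ℕ) (hn : 1 ≤ n) : Reg3 a b (c ^ n) := by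
  induction n, hn using Nat.le_induction with
  | base => simpa using h
  | succ n hn ih => rw [pow_succ]; exact ih.mul_last h

theorem Reg3.add {a b c : Q} (h : Reg3 a b c) (s t : Q) : Reg3 a (b + a * s) (c + a * t) := by
  refine ⟨h.1, fun r s' e => h.2.1 r (s' - s * r) (by linear_combination e), fun r s' t' e => ?_⟩
  obtain ⟨u, v, e'⟩ := h.2.2 r (s' + s * t' - t * r) t' (by linear_combination e)
  exact ⟨u - s * v, v, by rw [e']; ring⟩

variable [IsLocalRing Q]

open IsLocalRing in
theorem reg3_iff {a b c : Q} (ha : a ∈ maximalIdeal Q) (hb : b ∈ maximalIdeal Q)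
    (hc : c ∈ maximalIdeal Q) : Reg3 a b c ↔ IsRegular Q [a, b, c] := by
  rw [reg3_iff_weak, IsLocalRing.isRegular_iff_isWeaklyRegular_of_subset_maximalIdeal]
  intro r hr
  simp at hr
  rcases hr with rfl | rfl | rfl <;> assumption

open IsLocalRing in
theorem IsReg.mem {a b c : Q} (h : IsRegular Q [a, b, c]) :
    a ∈ maximalIdeal Q ∧ b ∈ maximalIdeal Q ∧ c ∈ maximalIdeal Q := by
  have h' := h.top_ne_smul
  have key : ∀ x ∈ [a, b, c], x ∈ maximalIdeal Q := by
    intro x hx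
    rw [mem_maximalIdeal, mem_nonunits_iff]
    intro hu
    apply h'
    have : Ideal.ofList [a, b, c] = ⊤ :=
      Ideal.eq_top_of_isUnit_mem _ (Ideal.subset_span hx) hu
    rw [this]; simp
  refine ⟨key _ (by simp), key _ (by simp), key _ (by simp)⟩

variable [IsNoetherianRing Q]
open IsLocalRing in
theorem Reg3.perm {a b c a' b' c' : Q} (h : Reg3 a b c) (ha : a ∈ maximalIdeal Q)
    (hb : b ∈ maximalIdeal Q) (hc : c ∈ maximalIdeal Q) (hp : [a, b, c].Perm [a', b', c']) :
    Reg3 a' b' c' := by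
  have := IsLocalRing.isRegular_of_perm ((reg3_iff ha hb hc).1 h) hp
  exact (reg3_iff_weak _ _ _).2 this.toIsWeaklyRegular

open IsLocalRing in
theorem Reg3.rot {a b c : Q} (h : Reg3 a b c) (ha : a ∈ maximalIdeal Q)
    (hb : b ∈ maximalIdeal Q) (hc : c ∈ maximalIdeal Q) : Reg3 b c a :=
  h.perm ha hb hc (by
    have := List.perm_append_comm (l₁ := [a]) (l₂ := [b, c]); simpa using this)

open IsLocalRing in
theorem Reg3.pow {a b c : Q} (h : Reg3 a b c) (ha : a ∈ maximalIdeal Q)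
    (hb : b ∈ maximalIdeal Q) (hc : c ∈ maximalIdeal Q) (i j l : ℕ) (hi : 1 ≤ i) (hj : 1 ≤ j)
    (hl : 1 ≤ l) : Reg3 (a ^ i) (b ^ j) (c ^ l) := by
  have h1 := (h.pow_last l hl).rot ha hb (Ideal.pow_mem_of_mem _ hc _ hl)
  have h2 := (h1.pow_last i hi).rot hb (Ideal.pow_mem_of_mem _ hc _ hl)
    (Ideal.pow_mem_of_mem _ ha _ hi)
  have h3 := (h2.pow_last j hj).rot (Ideal.pow_mem_of_mem _ hc _ hl)
    (Ideal.pow_mem_of_mem _ ha _ hi) (Ideal.pow_mem_of_mem _ hb _ hj)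
  exact h3
end
end Part1

section Part2
section
variable {Q : Type*} [CommRing Q]

theorem lift_lem {P M N : Type*} [AddCommGroup P] [Module Q P] [AddCommGroup M] [Module Q M]
    [AddCommGroup N] [Module Q N] [Module.Projective Q P] (f : P →ₗ[Q] N) (g : M →ₗ[Q] N)
    (h : ∀ p, ∃ m, g m = f p) : ∃ l : P →ₗ[Q] M, ∀ p, g (l p) = f p := by
  let f' : P →ₗ[Q] LinearMap.range g := f.codRestrict _ (fun p => h p)
  obtain ⟨l, hl⟩ := Module.projective_lifting_property g.rangeRestrict f' g.surjective_rangeRestrict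
  exact ⟨l, fun p => congrArg Subtype.val (LinearMap.congr_fun hl p)⟩

section
variable {G0 G1 G2 G3 : Type*} [AddCommGroup G0] [Module Q G0] [AddCommGroup G1] [Module Q G1]
  [AddCommGroup G2] [Module Q G2] [AddCommGroup G3] [Module Q G3]
  [Module.Projective Q G0] [Module.Projective Q G1] [Module.Projective Q G2]
  {d1 : G1 →ₗ[Q] G0} {d2 : G2 →ₗ[Q] G1} {d3 : G3 →ₗ[Q] G2}

theorem homot (c1 : ∀ w, d1 (d2 w) = 0) (c2 : ∀ w, d2 (d3 w) = 0)
    (e1 : ∀ v, d1 v = 0 → ∃ w, d2 w = v) (e2 : ∀ v, d2 v = 0 → ∃ w, d3 w = v)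
    (e3 : ∀ v, d3 v = 0 → v = 0) (x : Q) (hx : ∀ g, ∃ v, d1 v = x • g) :
    ∃ (h0 : G0 →ₗ[Q] G1) (h1 : G1 →ₗ[Q] G2) (h2 : G2 →ₗ[Q] G3),
      (∀ g, d1 (h0 g) = x • g) ∧ (∀ g, d2 (h1 g) = x • g - h0 (d1 g)) ∧
      (∀ g, d3 (h2 g) = x • g - h1 (d2 g)) ∧ (∀ g, h2 (d3 g) = x • g) := by
  obtain ⟨h0, H0⟩ := lift_lem (x • LinearMap.id) d1 (by simpa using hx)
  simp only [LinearMap.smul_apply, LinearMap.id_apply] at H0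
  obtain ⟨h1, H1⟩ := lift_lem (x • LinearMap.id - h0 ∘ₗ d1) d2 (fun p => e1 _ (by simp [H0]))
  simp only [LinearMap.smul_apply, LinearMap.id_apply, LinearMap.sub_apply,
    LinearMap.comp_apply] at H1
  obtain ⟨h2, H2⟩ := lift_lem (x • LinearMap.id - h1 ∘ₗ d2) d3
    (fun p => e2 _ (by simp [H1, c1]))
  simp only [LinearMap.smul_apply, LinearMap.id_apply, LinearMap.sub_apply,
    LinearMap.comp_apply] at H2
  refine ⟨h0, h1, h2, H0, H1, H2, fun g => ?_⟩
  have := e3 (h2 (d3 g) - x • g) (by simp [H2, c2])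
  exact sub_eq_zero.1 this

theorem dual_e0 {x : Q} (hr : ∀ r, x * r = 0 → r = 0)
    (hx : ∀ g, ∃ v, d1 v = x • g) (σ : G0 →ₗ[Q] Q) (h : ∀ v, σ (d1 v) = 0) : σ = 0 := by
  ext g
  obtain ⟨v, hv⟩ := hx g
  apply hr
  have := h v
  rw [hv] at this
  simpa using this

theorem dual_e1 (c1 : ∀ w, d1 (d2 w) = 0) (c2 : ∀ w, d2 (d3 w) = 0)
    (e1 : ∀ v, d1 v = 0 → ∃ w, d2 w = v) (e2 : ∀ v, d2 v = 0 → ∃ w, d3 w = v)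
    (e3 : ∀ v, d3 v = 0 → v = 0) {x y z : Q} (hr : Reg3 x y z)
    (hx : ∀ g, ∃ v, d1 v = x • g) (hy : ∀ g, ∃ v, d1 v = y • g)
    (η : G1 →ₗ[Q] Q) (h : ∀ v, η (d2 v) = 0) : ∃ ρ : G0 →ₗ[Q] Q, ∀ v, η v = ρ (d1 v) := by
  obtain ⟨h0, h1, h2, H0, H1, H2, H3⟩ := homot c1 c2 e1 e2 e3 x hx
  have key : ∀ v, η (h0 (d1 v)) = x * η v := by
    intro v
    have : h0 (d1 v) = x • v - d2 (h1 v) := by rw [H1]; abel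
    rw [this, map_sub, h]; simp
  have k2 : ∀ g, ∃ t, LinearMap.toSpanSingleton Q Q x t = (η ∘ₗ h0) g := by
    intro g
    obtain ⟨v, hv⟩ := hy g
    have := key v
    rw [hv] at this
    obtain ⟨t, ht⟩ := hr.2.1 (η (h0 g)) (η v) (by simpa using this)
    exact ⟨t, by simp [ht, mul_comm]⟩
  obtain ⟨τ, hτ⟩ := lift_lem _ _ k2
  refine ⟨τ, fun v => ?_⟩
  have := hτ (d1 v)
  simp [key] at this
  have := hr.1 (η v - τ (d1 v)) (by linear_combination -this)
  linear_combination this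

theorem dual_e1' (c1 : ∀ w, d1 (d2 w) = 0) (c2 : ∀ w, d2 (d3 w) = 0)
    (e1 : ∀ v, d1 v = 0 → ∃ w, d2 w = v) (e2 : ∀ v, d2 v = 0 → ∃ w, d3 w = v)
    (e3 : ∀ v, d3 v = 0 → v = 0) {x y z : Q} (hr : Reg3 x y z)
    (hy : ∀ g, ∃ v, d1 v = y • g) (hz : ∀ g, ∃ v, d1 v = z • g)
    (η : G1 →ₗ[Q] Q) (h : ∀ v, ∃ t, η (d2 v) = x * t) :
    ∃ ρ : G0 →ₗ[Q] Q, ∀ v, ∃ t, η v = ρ (d1 v) + x * t := by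
  obtain ⟨h0, h1, h2, H0, H1, H2, H3⟩ := homot c1 c2 e1 e2 e3 y hy
  have key : ∀ v, ∃ t, η (h0 (d1 v)) = y * η v + x * t := by
    intro v
    obtain ⟨t, ht⟩ := h (h1 v)
    have : h0 (d1 v) = y • v - d2 (h1 v) := by rw [H1]; abel
    rw [this, map_sub, ht]; exact ⟨-t, by simp; ring⟩
  have k2 : ∀ g, ∃ t : Q × Q, (LinearMap.toSpanSingleton Q Q x).coprod
      (LinearMap.toSpanSingleton Q Q y) t = (η ∘ₗ h0) g := by
    intro g
    obtain ⟨v, hv⟩ := hz g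
    obtain ⟨t, ht⟩ := key v
    rw [hv] at ht
    obtain ⟨a, b, hab⟩ := hr.2.2 (η (h0 g)) t (η v) (by simp at ht; rw [ht]; ring)
    exact ⟨(a, b), by simp [hab, mul_comm]⟩
  obtain ⟨τ, hτ⟩ := lift_lem _ _ k2
  refine ⟨LinearMap.snd Q Q Q ∘ₗ τ, fun v => ?_⟩
  have := hτ (d1 v)
  obtain ⟨t, ht⟩ := key v
  simp [ht] at this
  obtain ⟨s, hs⟩ := hr.2.1 (η v - (τ (d1 v)).2) ((τ (d1 v)).1 - t) (by linear_combination -this)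
  exact ⟨s, by simp; linear_combination hs⟩

theorem dual_e2 (c1 : ∀ w, d1 (d2 w) = 0) (c2 : ∀ w, d2 (d3 w) = 0)
    (e1 : ∀ v, d1 v = 0 → ∃ w, d2 w = v) (e2 : ∀ v, d2 v = 0 → ∃ w, d3 w = v)
    (e3 : ∀ v, d3 v = 0 → v = 0) {x y z : Q} (hr : Reg3 x y z)
    (hx : ∀ g, ∃ v, d1 v = x • g)
    (hy : ∀ g, ∃ v, d1 v = y • g) (hz : ∀ g, ∃ v, d1 v = z • g)
    (η : G2 →ₗ[Q] Q) (h : ∀ v, η (d3 v) = 0) :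
    ∃ ρ : G1 →ₗ[Q] Q, ∀ v, η v = ρ (d2 v) := by
  obtain ⟨h0, h1, h2, H0, H1, H2, H3⟩ := homot c1 c2 e1 e2 e3 x hx
  have key : ∀ v, (η ∘ₗ h1) (d2 v) = x * η v := by
    intro v
    have : h1 (d2 v) = x • v - d3 (h2 v) := by rw [H2]; abel
    rw [LinearMap.comp_apply, this, map_sub, h]; simp
  obtain ⟨ρ, hρ⟩ := dual_e1' c1 c2 e1 e2 e3 hr hy hz (η ∘ₗ h1) (fun v => ⟨_, key v⟩)
  obtain ⟨τ, hτ⟩ := lift_lem (η ∘ₗ h1 - ρ ∘ₗ d1) (LinearMap.toSpanSingleton Q Q x) (by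
    intro p
    obtain ⟨t, ht⟩ := hρ p
    exact ⟨t, by simp at ht ⊢; rw [ht]; ring⟩)
  refine ⟨τ, fun v => ?_⟩
  have := hτ (d2 v)
  rw [LinearMap.sub_apply, key] at this
  simp [c1] at this
  have := hr.1 (η v - τ (d2 v)) (by linear_combination -this)
  linear_combination this
end

/-- transpose -/
noncomputable def tr {ι κ : Type} [Fintype ι] [Fintype κ] [DecidableEq ι] [DecidableEq κ]
    (d : (ι → Q) →ₗ[Q] (κ → Q)) : (κ → Q) →ₗ[Q] (ι → Q) :=
  Matrix.toLin' (LinearMap.toMatrix' d).transpose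

section
variable {ι κ : Type} [Fintype ι] [Fintype κ] [DecidableEq ι] [DecidableEq κ]

theorem tr_dot (d : (ι → Q) →ₗ[Q] (κ → Q)) (η : κ → Q) (v : ι → Q) :
    tr d η ⬝ᵥ v = η ⬝ᵥ d v := by
  rw [tr, Matrix.toLin'_apply, Matrix.mulVec_transpose, ← Matrix.dotProduct_mulVec,
    LinearMap.toMatrix'_mulVec]

theorem tr_apply (d : (ι → Q) →ₗ[Q] (κ → Q)) (η : κ → Q) (i : ι) :
    tr d η i = η ⬝ᵥ d (Pi.single i 1) := by
  rw [← tr_dot]; simp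

theorem dual_rep (σ : (ι → Q) →ₗ[Q] Q) : ∃ η : ι → Q, ∀ v, σ v = η ⬝ᵥ v := by
  refine ⟨(dotProductEquiv Q ι).symm σ, fun v => ?_⟩
  conv_lhs => rw [← (dotProductEquiv Q ι).apply_symm_apply σ]
  rfl

def dotL (η : ι → Q) : (ι → Q) →ₗ[Q] Q := dotProductEquiv Q ι η
@[simp] theorem dotL_apply (η v : ι → Q) : dotL η v = η ⬝ᵥ v := rfl

theorem dot_ext {η η' : ι → Q} (h : ∀ v, η ⬝ᵥ v = η' ⬝ᵥ v) : η = η' := by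
  ext i; simpa using h (Pi.single i 1)

theorem dot_mem {J : Ideal Q} (η v : ι → Q) (h : ∀ i, v i ∈ J) : η ⬝ᵥ v ∈ J :=
  J.sum_mem (fun i _ => J.mul_mem_left _ (h i))
end
end
end Part2

section Part3
open IsLocalRing

structure Cx (Q : Type*) [CommRing Q] [IsLocalRing Q] (I : Ideal Q) (ι1 ι2 ι3 : Type) where
  d1 : (ι1 → Q) →ₗ[Q] Q
  d2 : (ι2 → Q) →ₗ[Q] (ι1 → Q)
  d3 : (ι3 → Q) →ₗ[Q] (ι2 → Q)
  r1 : ∀ r, r ∈ I ↔ ∃ v, d1 v = r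
  c1 : ∀ w, d1 (d2 w) = 0
  c2 : ∀ w, d2 (d3 w) = 0
  e1 : ∀ v, d1 v = 0 → ∃ w, d2 w = v
  e2 : ∀ v, d2 v = 0 → ∃ w, d3 w = v
  e3 : ∀ v, d3 v = 0 → v = 0
  m1 : ∀ r ∈ I, r ∈ maximalIdeal Q
  m2 : ∀ w i, d2 w i ∈ maximalIdeal Q
  m3 : ∀ w i, d3 w i ∈ maximalIdeal Q

section
variable {Q : Type*} [CommRing Q] [IsLocalRing Q] {I : Ideal Q} {ι1 ι2 ι3 : Type}
  [Fintype ι1] [Fintype ι2] [Fintype ι3] [DecidableEq ι1] [DecidableEq ι2] [DecidableEq ι3]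

/-- generators -/
def Cx.g (C : Cx Q I ι1 ι2 ι3) (i : ι1) : Q := C.d1 (Pi.single i 1)

theorem Cx.g_mem (C : Cx Q I ι1 ι2 ι3) (i : ι1) : C.g i ∈ I := (C.r1 _).2 ⟨_, rfl⟩

theorem Cx.g_max (C : Cx Q I ι1 ι2 ι3) (i : ι1) : C.g i ∈ maximalIdeal Q := C.m1 _ (C.g_mem i)

def KosAt (C : Cx Q I ι1 ι2 ι3) (i j : ι1) (κ : ι2 → Q) : Prop :=
  C.d2 κ = C.g j • (Pi.single i 1 : ι1 → Q) - C.g i • (Pi.single j 1 : ι1 → Q)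

theorem Cx.kos (C : Cx Q I ι1 ι2 ι3) (i j : ι1) : ∃ κ, KosAt C i j κ :=
  C.e1 _ (by simp [Cx.g]; ring)

structure Good (C : Cx Q I ι1 ι2 ι3) where
  i0 : ι1
  i1 : ι1
  i2 : ι1
  i3 : ι1
  i4 : ι1
  nd : [i0, i1, i2, i3, i4].Nodup
  h : Q
  hm : h ∈ maximalIdeal Q
  N : ℕ
  hN : 1 ≤ N
  reg : Reg3 (C.g i0) (C.g i1) h
  pw : C.g i4 = h ^ N
  k01 : ι2 → Q
  k04 : ι2 → Q
  k14 : ι2 → Q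
  K01 : KosAt C i0 i1 k01
  K04 : KosAt C i0 i4 k04
  K14 : KosAt C i1 i4 k14
  M01 : ∀ t, k01 t ∈ maximalIdeal Q
  M04 : ∀ t, k04 t ∈ maximalIdeal Q
  M14 : ∀ t, k14 t ∈ maximalIdeal Q

def St (I : Ideal Q) (m n : ℕ) : Prop :=
  ∃ (ι1 ι2 ι3 : Type) (_ : Fintype ι1) (_ : Fintype ι2) (_ : Fintype ι3)
    (_ : DecidableEq ι1) (_ : DecidableEq ι2) (_ : DecidableEq ι3) (C : Cx Q I ι1 ι2 ι3),
    Nonempty (Good C) ∧ Fintype.card ι1 = m ∧ Fintype.card ι2 + 1 = m + n ∧ Fintype.card ι3 = n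

theorem mem_span3 (a b c r : Q) : r ∈ Ideal.span {a, b, c} ↔ ∃ s t u, r = a * s + b * t + c * u := by
  rw [Ideal.mem_span_insert]
  constructor
  · rintro ⟨s, z, hz, rfl⟩
    obtain ⟨t, u, rfl⟩ := Ideal.mem_span_pair.1 hz
    exact ⟨s, t, u, by ring⟩
  · rintro ⟨s, t, u, rfl⟩
    exact ⟨s, b * t + c * u, Ideal.mem_span_pair.2 ⟨t, u, by ring⟩, by ring⟩

theorem mem_colon3 (a b c r : Q) : r ∈ Submodule.colon (Ideal.span {a, b, c}) I ↔
    ∀ s ∈ I, ∃ t u v, r * s = a * t + b * u + c * v := by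
  rw [Submodule.mem_colon]
  simp only [smul_eq_mul, mem_span3, SetLike.mem_coe]

/-- The lift of top Koszul element and link coordinates. -/
theorem Cx.w_mem (C : Cx Q I ι1 ι2 ι3) {a0 a1 a2 : Q} {k01 k20 k12 : ι2 → Q} {w : ι3 → Q}
    (hw : C.d3 w = a0 • k12 + a1 • k20 + a2 • k01) (i : ι3) :
    w i ∈ Submodule.colon (Ideal.span {a0, a1, a2}) I := by
  rw [mem_colon3]
  intro s hs
  obtain ⟨h0, h1, h2, H0, H1, H2, H3⟩ := homot C.c1 C.c2 C.e1 C.e2 C.e3 s (by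
    intro g
    obtain ⟨v, hv⟩ := (C.r1 _).1 (I.mul_mem_left g hs)
    exact ⟨v, by rw [hv]; simp [mul_comm]⟩)
  have := H3 w
  rw [hw] at this
  have := congrFun this i
  simp at this
  exact ⟨h2 k12 i, h2 k20 i, h2 k01 i, by linear_combination -this⟩

/-- reflexivity: `α : (α : I) ⊆ I` -/
theorem Cx.refl (C : Cx Q I ι1 ι2 ι3) {i j l : ι1} (hij : i ≠ j) (hil : i ≠ l) (hjl : j ≠ l)
    (hr : Reg3 (C.g i) (C.g j) (C.g l)) (r : Q)
    (h : ∀ s ∈ Submodule.colon (Ideal.span {C.g i, C.g j, C.g l}) I,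
      ∃ t u v, r * s = C.g i * t + C.g j * u + C.g l * v) : r ∈ I := by
  obtain ⟨k01, K01⟩ := C.kos i j
  obtain ⟨k20, K20⟩ := C.kos l i
  obtain ⟨k12, K12⟩ := C.kos j l
  obtain ⟨w, hw⟩ := C.e2 (C.g i • k12 + C.g j • k20 + C.g l • k01) (by
    unfold KosAt at *
    simp only [map_add, map_smul]
    rw [K01, K20, K12]
    ext x; simp; ring)
  choose t u v htuv using fun x => h _ (C.w_mem hw x)
  unfold KosAt at *
  -- a0 (r k12 - d3 t) + a1 (r k20 - d3 u) + a2 (r k01 - d3 v) = 0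
  have E : C.g i • (r • k12 - C.d3 t) + C.g j • (r • k20 - C.d3 u) + C.g l • (r • k01 - C.d3 v)
      = 0 := by
    have e : r • w = C.g i • t + C.g j • u + C.g l • v := by
      ext x; simpa using htuv x
    have := congrArg C.d3 e
    simp only [map_add, map_smul, hw] at this
    calc _ = r • (C.g i • k12 + C.g j • k20 + C.g l • k01) - (C.g i • C.d3 t + C.g j • C.d3 u
        + C.g l • C.d3 v) := by module
      _ = 0 := by rw [this]; abel
  have E' := fun x => congrFun E x
  simp only [Pi.add_apply, Pi.smul_apply, smul_eq_mul, Pi.zero_apply] at E'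
  choose p q s hp hq hs using fun x => hr.k1 (E' x)
  have e1 : r • k01 - C.d3 v = - (C.g i • q) - C.g j • s := by
    ext x; have := hs x; simp only [Pi.sub_apply, Pi.smul_apply, smul_eq_mul, Pi.neg_apply] at this ⊢
    rw [this]; ring
  have e2 := congrArg C.d2 e1
  simp only [map_sub, map_smul, map_neg, C.c2, K01, sub_zero] at e2
  -- r (g_j e_i - g_i e_j) = - g_i d2 q - g_j d2 s
  have e3 : ∀ x, ∃ y, r * (Pi.single i 1 : ι1 → Q) x + C.d2 s x = C.g i * y := by
    intro x
    have := congrFun e2 x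
    simp at this
    exact hr.2.1 _ (r * (Pi.single j 1 : ι1 → Q) x - C.d2 q x)
      (by linear_combination this)
  choose y hy using e3
  have e4 : r • (Pi.single i 1 : ι1 → Q) + C.d2 s = C.g i • y := by
    ext x; simpa using hy x
  have e5 := congrArg C.d1 e4
  simp only [map_add, map_smul, C.c1] at e5
  rw [← Cx.g] at e5
  have := hr.1 (r - C.d1 y) (by simp at e5; linear_combination e5)
  rw [C.r1]; exact ⟨y, by linear_combination -this⟩
end
end Part3

section Part4
open IsLocalRing
section
variable {Q : Type*} [CommRing Q] [IsLocalRing Q] {I : Ideal Q} {ι1 ι2 ι3 : Type}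
  [Fintype ι1] [Fintype ι2] [Fintype ι3] [DecidableEq ι1] [DecidableEq ι2] [DecidableEq ι3]

theorem lin_mem (f : (ι1 → Q) →ₗ[Q] (ι2 → Q)) (J : Ideal Q) (v : ι1 → Q) (h : ∀ i, v i ∈ J)
    (j : ι2) : f v j ∈ J := by
  rw [LinearMap.pi_apply_eq_sum_univ f v]
  simp only [Finset.sum_apply, Pi.smul_apply, smul_eq_mul]
  exact J.sum_mem (fun i _ => J.mul_mem_right _ (h i))

/-- change of basis -/
def Cx.theta (C : Cx Q I ι1 ι2 ι3) (θ : (ι1 → Q) ≃ₗ[Q] (ι1 → Q)) : Cx Q I ι1 ι2 ι3 where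
  d1 := C.d1 ∘ₗ θ.toLinearMap
  d2 := θ.symm.toLinearMap ∘ₗ C.d2
  d3 := C.d3
  r1 r := by
    rw [C.r1]
    constructor
    · rintro ⟨v, rfl⟩; exact ⟨θ.symm v, by simp⟩
    · rintro ⟨v, rfl⟩; exact ⟨θ v, by simp⟩
  c1 w := by simp [C.c1]
  c2 w := by simp [C.c2]
  e1 v hv := by
    obtain ⟨w, hw⟩ := C.e1 _ hv
    exact ⟨w, by simp [hw]⟩
  e2 v hv := C.e2 v (by simpa using hv)
  e3 := C.e3
  m1 := C.m1
  m2 w i := lin_mem θ.symm.toLinearMap _ _ (C.m2 w) i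
  m3 := C.m3

def scal (s : ι1 → Q) : (ι1 → Q) →ₗ[Q] (ι1 → Q) where
  toFun v i := s i * v i
  map_add' _ _ := by ext; simp [mul_add]
  map_smul' _ _ := by ext; simp; ring

@[simp] theorem scal_apply (s v : ι1 → Q) (i : ι1) : scal s v i = s i * v i := rfl

def DI (I : Ideal Q) (a b h : Q) : Ideal Q := Ideal.span {h} * I ⊔ Ideal.span {a, b}

theorem mem_DI (a b h r : Q) : r ∈ DI I a b h ↔ ∃ s ∈ I, ∃ t u, r = h * s + a * t + b * u := by
  rw [DI, Submodule.mem_sup]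
  constructor
  · rintro ⟨y, hy, z, hz, rfl⟩
    obtain ⟨s, hs, rfl⟩ := Ideal.mem_span_singleton_mul.1 hy
    obtain ⟨t, u, rfl⟩ := Ideal.mem_span_pair.1 hz
    exact ⟨s, hs, t, u, by ring⟩
  · rintro ⟨s, hs, t, u, rfl⟩
    exact ⟨h * s, Ideal.mem_span_singleton_mul.2 ⟨s, hs, rfl⟩, a * t + b * u,
      Ideal.mem_span_pair.2 ⟨t, u, by ring⟩, by ring⟩

/-- 2-coordinate vector splitting -/
theorem split2 (i0 i1 : ι1) (h01 : i0 ≠ i1) (v : ι1 → Q)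
    (hv : ∀ i, i ≠ i0 → i ≠ i1 → v i = 0) :
    v = v i0 • (Pi.single i0 1 : ι1 → Q) + v i1 • (Pi.single i1 1 : ι1 → Q) := by
  ext i
  by_cases e0 : i = i0
  · subst e0; simp [h01]
  · by_cases e1 : i = i1
    · subst e1; simp [Ne.symm h01]
    · simp [hv i e0 e1, e0, e1]

def Cx.D (C : Cx Q I ι1 ι2 ι3) (i0 i1 : ι1) (h01 : i0 ≠ i1) (h : Q)
    (hm : h ∈ maximalIdeal Q) (hr : Reg3 (C.g i0) (C.g i1) h) (hreg : ∀ r, h * r = 0 → r = 0)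
    (κ : ι2 → Q) (K : KosAt C i0 i1 κ) (M : ∀ t, κ t ∈ maximalIdeal Q) :
    Cx Q (DI I (C.g i0) (C.g i1) h) ι1 (ι2 ⊕ Unit) (ι3 ⊕ Unit) where
  d1 := C.d1 ∘ₗ scal (fun i => if i = i0 ∨ i = i1 then 1 else h)
  d2 := scal (fun i => if i = i0 ∨ i = i1 then h else 1) ∘ₗ C.d2 ∘ₗ
      LinearMap.funLeft Q Q Sum.inl +
    (LinearMap.proj (Sum.inr ())).smulRight
      (C.g i1 • (Pi.single i0 1 : ι1 → Q) - C.g i0 • (Pi.single i1 1 : ι1 → Q))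
  d3 :=
    { toFun := fun v => Sum.elim (C.d3 (LinearMap.funLeft Q Q Sum.inl v) + v (Sum.inr ()) • κ)
        (fun _ => - h * v (Sum.inr ()))
      map_add' := by
        intro v w
        ext (i | i)
        · simp only [map_add, Sum.elim_inl, Pi.add_apply, Pi.smul_apply, smul_eq_mul]; ring
        · simp only [Sum.elim_inr, Pi.add_apply]; ring
      map_smul' := by
        intro r v
        ext (i | i)
        · simp only [map_smul, Sum.elim_inl, Pi.add_apply, Pi.smul_apply, smul_eq_mul,
            RingHom.id_apply]; ring
        · simp only [Sum.elim_inr, Pi.smul_apply, smul_eq_mul, RingHom.id_apply]; ring }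
  r1 r := by
    rw [mem_DI]
    constructor
    · rintro ⟨s, hs, t, u, rfl⟩
      obtain ⟨v, rfl⟩ := (C.r1 s).1 hs
      refine ⟨scal (fun i => if i = i0 ∨ i = i1 then h else 1) v +
        t • (Pi.single i0 1 : ι1 → Q) + u • (Pi.single i1 1 : ι1 → Q), ?_⟩
      have : scal (fun i => if i = i0 ∨ i = i1 then 1 else h)
         (scal (fun i => if i = i0 ∨ i = i1 then h else 1) v +
        t • (Pi.single i0 1 : ι1 → Q) + u • (Pi.single i1 1 : ι1 → Q)) = h • v +
        t • (Pi.single i0 1 : ι1 → Q) + u • (Pi.single i1 1 : ι1 → Q) := by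
        ext i
        by_cases e0 : i = i0
        · subst e0; simp [h01]
        · by_cases e1 : i = i1
          · subst e1; simp [Ne.symm h01]
          · simp [e0, e1]
      rw [LinearMap.comp_apply, this]
      simp [Cx.g]; ring
    · rintro ⟨v, rfl⟩
      refine ⟨C.d1 (v - v i0 • (Pi.single i0 1 : ι1 → Q) - v i1 • (Pi.single i1 1 : ι1 → Q)),
        (C.r1 _).2 ⟨_, rfl⟩, v i0, v i1, ?_⟩
      have : scal (fun i => if i = i0 ∨ i = i1 then 1 else h) v = h •
        (v - v i0 • (Pi.single i0 1 : ι1 → Q) - v i1 • (Pi.single i1 1 : ι1 → Q))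
        + v i0 • (Pi.single i0 1 : ι1 → Q) + v i1 • (Pi.single i1 1 : ι1 → Q) := by
        ext i
        by_cases e0 : i = i0
        · subst e0; simp [h01]
        · by_cases e1 : i = i1
          · subst e1; simp [Ne.symm h01]
          · simp [e0, e1]
      rw [LinearMap.comp_apply, this]
      simp only [map_add, map_smul, smul_eq_mul, Cx.g]
      ring
  c1 w := by
    have : ∀ v, scal (fun i => if i = i0 ∨ i = i1 then 1 else h)
         (scal (fun i => if i = i0 ∨ i = i1 then h else 1) v) = h • v := by
      intro v; ext i
      by_cases e : i = i0 ∨ i = i1 <;> simp [e]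
    have h2 : scal (fun i => if i = i0 ∨ i = i1 then 1 else h)
         (C.g i1 • (Pi.single i0 1 : ι1 → Q) - C.g i0 • (Pi.single i1 1 : ι1 → Q)) =
         (C.g i1 • (Pi.single i0 1 : ι1 → Q) - C.g i0 • (Pi.single i1 1 : ι1 → Q)) := by
      ext i
      by_cases e0 : i = i0
      · subst e0; simp
      · by_cases e1 : i = i1
        · subst e1; simp
        · simp [e0, e1]
    simp only [LinearMap.comp_apply, LinearMap.add_apply, map_add, this, LinearMap.smulRight_apply,
      map_smul, h2, C.c1]
    simp only [Cx.g, smul_eq_mul, map_sub, map_smul]; ring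
  c2 v := by
    have h3 : ∀ (a : ι2 → Q) (b : Unit → Q), LinearMap.funLeft Q Q Sum.inl (Sum.elim a b) = a := by
      intro a b; ext i; simp
    have h2 : scal (fun i => if i = i0 ∨ i = i1 then h else 1)
         (C.g i1 • (Pi.single i0 1 : ι1 → Q) - C.g i0 • (Pi.single i1 1 : ι1 → Q)) =
         h • (C.g i1 • (Pi.single i0 1 : ι1 → Q) - C.g i0 • (Pi.single i1 1 : ι1 → Q)) := by
      ext i
      by_cases e0 : i = i0
      · subst e0; simp
      · by_cases e1 : i = i1
        · subst e1; simp
        · simp [e0, e1]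
    unfold KosAt at K
    simp only [LinearMap.coe_mk, AddHom.coe_mk, LinearMap.comp_apply, LinearMap.add_apply, h3,
      map_add, map_zero, C.c2, map_smul, K, h2, LinearMap.smulRight_apply, LinearMap.proj_apply,
      Sum.elim_inr]
    module
  e1 v hv := by
    have hs : scal (fun i => if i = i0 ∨ i = i1 then 1 else h) v = h •
        (v - v i0 • (Pi.single i0 1 : ι1 → Q) - v i1 • (Pi.single i1 1 : ι1 → Q))
        + v i0 • (Pi.single i0 1 : ι1 → Q) + v i1 • (Pi.single i1 1 : ι1 → Q) := by
      ext i
      by_cases e0 : i = i0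
      · subst e0; simp [h01]
      · by_cases e1 : i = i1
        · subst e1; simp [Ne.symm h01]
        · simp [e0, e1]
    rw [LinearMap.comp_apply, hs] at hv
    set vb := v - v i0 • (Pi.single i0 1 : ι1 → Q) - v i1 • (Pi.single i1 1 : ι1 → Q) with hvb
    simp only [map_add, map_smul, smul_eq_mul] at hv
    rw [← Cx.g, ← Cx.g] at hv
    obtain ⟨a, b, hab⟩ := hr.2.2 (C.d1 vb) (-v i0) (-v i1) (by linear_combination hv)
    obtain ⟨w, hw⟩ := C.e1 (vb - a • (Pi.single i0 1 : ι1 → Q) - b • (Pi.single i1 1 : ι1 → Q)) (by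
      simp only [map_sub, map_smul, smul_eq_mul, hab, Cx.g]; ring)
    obtain ⟨t, ht⟩ := hr.2.1 (v i1 + h * b) (-(v i0 + h * a)) (by
      linear_combination hv - h * hab)
    have ht' : v i0 + h * a = - C.g i1 * t := by
      have := hr.1 (v i0 + h * a + C.g i1 * t) (by linear_combination hv - h * hab - C.g i1 * ht)
      linear_combination this
    refine ⟨Sum.elim w (fun _ => - t), ?_⟩
    have h3 : LinearMap.funLeft Q Q Sum.inl (Sum.elim w (fun _ : Unit => -t)) = w := by
      ext i; simp
    simp only [LinearMap.comp_apply, LinearMap.add_apply, h3, hw, LinearMap.smulRight_apply,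
      LinearMap.proj_apply, Sum.elim_inr]
    ext i
    by_cases e0 : i = i0
    · subst e0; simp [hvb, h01]; linear_combination -ht'
    · by_cases e1 : i = i1
      · subst e1; simp [hvb, Ne.symm h01]; linear_combination -ht
      · simp [hvb, e0, e1]
  e2 w hw := by
    set w0 : ι2 → Q := LinearMap.funLeft Q Q Sum.inl w with hw0
    set t : Q := w (Sum.inr ()) with ht
    have H : ∀ i, (if i = i0 ∨ i = i1 then h else 1) * C.d2 w0 i + t *
      (C.g i1 * (Pi.single i0 1 : ι1 → Q) i - C.g i0 * (Pi.single i1 1 : ι1 → Q) i) = 0 := by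
      intro i
      have := congrFun hw i
      simpa only [LinearMap.comp_apply, LinearMap.add_apply, LinearMap.smulRight_apply,
        LinearMap.proj_apply, Pi.add_apply, Pi.smul_apply, Pi.sub_apply, smul_eq_mul,
        scal_apply, Pi.zero_apply] using this
    have H0 := H i0
    have H1 := H i1
    simp [h01, Ne.symm h01] at H0 H1
    have hsp := split2 i0 i1 h01 (C.d2 w0) (fun i e0 e1 => by simpa [e0, e1] using H i)
    have hz := C.c1 w0
    rw [hsp] at hz
    simp only [map_add, map_smul, smul_eq_mul] at hz
    rw [← Cx.g, ← Cx.g] at hz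
    obtain ⟨r, hr1⟩ := hr.2.1 (C.d2 w0 i1) (-C.d2 w0 i0) (by linear_combination hz)
    have hr0 : C.d2 w0 i0 = - C.g i1 * r := by
      have := hr.1 (C.d2 w0 i0 + C.g i1 * r) (by linear_combination hz - C.g i1 * hr1)
      linear_combination this
    have htr : t = h * r := by
      have := hr.1 (h * r - t) (by linear_combination H1 - h * hr1)
      linear_combination -this
    obtain ⟨v, hv⟩ := C.e2 (w0 + r • κ) (by
      unfold KosAt at K
      rw [map_add, map_smul, K, hsp, hr0, hr1]; module)
    refine ⟨Sum.elim v (fun _ => -r), ?_⟩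
    ext (i | i)
    · have h3 : LinearMap.funLeft Q Q Sum.inl (Sum.elim v (fun _ : Unit => -r)) = v := by
        ext i; simp
      simp only [LinearMap.coe_mk, AddHom.coe_mk, Sum.elim_inl, h3, hv]
      simp [hw0]
    · simp [← htr, ht]
  e3 v hv := by
    have h1 : h * v (Sum.inr ()) = 0 := by simpa using congrFun hv (Sum.inr ())
    have h2 := hreg _ h1
    have h3 : C.d3 (LinearMap.funLeft Q Q Sum.inl v) = 0 := by
      ext i; simpa [h2] using congrFun hv (Sum.inl i)
    have h4 := C.e3 _ h3
    ext (i | i)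
    · exact congrFun h4 i
    · exact h2
  m1 r hr := by
    obtain ⟨s, hs, t, u, rfl⟩ := (mem_DI _ _ _ _).1 hr
    exact Ideal.add_mem _ (Ideal.add_mem _ (Ideal.mul_mem_right _ _ hm)
      (Ideal.mul_mem_right _ _ (C.g_max _))) (Ideal.mul_mem_right _ _ (C.g_max _))
  m2 w i := by
    have H : (if i = i0 ∨ i = i1 then h else 1) * C.d2 (LinearMap.funLeft Q Q Sum.inl w) i +
       w (Sum.inr ()) *
      (C.g i1 * (Pi.single i0 1 : ι1 → Q) i - C.g i0 * (Pi.single i1 1 : ι1 → Q) i)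
      ∈ maximalIdeal Q := by
      refine Ideal.add_mem _ (Ideal.mul_mem_left _ _ (C.m2 _ _)) (Ideal.mul_mem_left _ _
        (Ideal.sub_mem _ (Ideal.mul_mem_right _ _ (C.g_max _))
          (Ideal.mul_mem_right _ _ (C.g_max _))))
    simpa only [LinearMap.comp_apply, LinearMap.add_apply, LinearMap.smulRight_apply,
        LinearMap.proj_apply, Pi.add_apply, Pi.smul_apply, Pi.sub_apply, smul_eq_mul,
        scal_apply, Pi.zero_apply] using H
  m3 v i := by
    rcases i with i | i
    · simp only [LinearMap.coe_mk, AddHom.coe_mk, Sum.elim_inl, Pi.add_apply, Pi.smul_apply,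
        smul_eq_mul]
      exact Ideal.add_mem _ (C.m3 _ _) (Ideal.mul_mem_left _ _ (M i))
    · simp only [LinearMap.coe_mk, AddHom.coe_mk, Sum.elim_inr]
      exact Ideal.mul_mem_right _ _ (neg_mem hm)
end
end Part4

section Part5
open IsLocalRing
section
variable {Q : Type*} [CommRing Q] [IsLocalRing Q] {I : Ideal Q} {ι1 ι2 ι3 : Type}
  [Fintype ι1] [Fintype ι2] [Fintype ι3] [DecidableEq ι1] [DecidableEq ι2] [DecidableEq ι3]

theorem licci_of_linked {I J : Ideal Q} (h : Linked I J) (hJ : Licci J) : Licci I := by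
  obtain ⟨C, hC, hh⟩ := hJ
  exact ⟨C, Relation.ReflTransGen.trans h hC, hh⟩

theorem Cx.link (C : Cx Q I ι1 ι2 ι3) {i j l : ι1} (hr : Reg3 (C.g i) (C.g j) (C.g l)) :
    DirectlyLinked I (Submodule.colon (Ideal.span {C.g i, C.g j, C.g l}) I) :=
  ⟨_, _, _, C.g_mem i, C.g_mem j, C.g_mem l,
    (reg3_iff (C.g_max i) (C.g_max j) (C.g_max l)).1 hr, rfl⟩

theorem Cx.D_link (C : Cx Q I ι1 ι2 ι3) {i j l : ι1} (hij : i ≠ j) (hil : i ≠ l) (hjl : j ≠ l)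
    {h : Q} (hm : h ∈ maximalIdeal Q) {N : ℕ} (hN : 1 ≤ N) (hr : Reg3 (C.g i) (C.g j) h)
    (hl : C.g l = h ^ N) : Linked I (DI I (C.g i) (C.g j) h) := by
  have hr2 : Reg3 (C.g i) (C.g j) (C.g l) := by rw [hl]; exact hr.pow_last N hN
  refine (Relation.ReflTransGen.single (C.link hr2)).tail ?_
  set J := Submodule.colon (Ideal.span {C.g i, C.g j, C.g l}) I with hJ
  refine ⟨C.g i, C.g j, h * C.g l, ?_, ?_, ?_, ?_, ?_⟩
  · rw [hJ, mem_colon3]; exact fun s hs => ⟨s, 0, 0, by ring⟩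
  · rw [hJ, mem_colon3]; exact fun s hs => ⟨0, s, 0, by ring⟩
  · rw [hJ, mem_colon3]; exact fun s hs => ⟨0, 0, h * s, by ring⟩
  · exact (reg3_iff (C.g_max i) (C.g_max j) (Ideal.mul_mem_right _ _ hm)).1 (hr.mul_last hr2)
  · ext r
    rw [mem_colon3, mem_DI]
    constructor
    · rintro ⟨s, hs, t, u, rfl⟩ x hx
      rw [hJ, mem_colon3] at hx
      obtain ⟨a, b, d, e⟩ := hx s hs
      exact ⟨h * a + t * x, h * b + u * x, d, by linear_combination h * e⟩
    · intro H
      obtain ⟨a, b, d, e⟩ := H (C.g l) (by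
        rw [hJ, mem_colon3]; exact fun s hs => ⟨0, 0, s, by ring⟩)
      obtain ⟨u, v, e2⟩ := hr2.2.2 (r - h * d) a b (by linear_combination e)
      refine ⟨d, ?_, u, v, by linear_combination e2⟩
      apply C.refl hij hil hjl hr2
      intro x hx
      obtain ⟨a', b', d', e'⟩ := H x hx
      obtain ⟨u', v', e3⟩ := hr.2.2 (d * x - C.g l * d') (a' - u * x) (b' - v * x)
        (by linear_combination e' - x * e2)
      exact ⟨u', v', d', by linear_combination e3⟩

/-- shear -/
def shear (i0 i1 i2 i3 : ι1) (a b : Q) : (ι1 → Q) →ₗ[Q] (ι1 → Q) :=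
  LinearMap.id + (LinearMap.proj i2).smulRight (a • (Pi.single i0 1 : ι1 → Q)) +
    (LinearMap.proj i3).smulRight (b • (Pi.single i1 1 : ι1 → Q))

theorem shear_shear {i0 i1 i2 i3 : ι1} (h20 : i2 ≠ i0) (h21 : i2 ≠ i1) (h30 : i3 ≠ i0)
    (h31 : i3 ≠ i1) (a b a' b' : Q) (ha : a + a' = 0) (hb : b + b' = 0) (v : ι1 → Q) :
    shear i0 i1 i2 i3 a b (shear i0 i1 i2 i3 a' b' v) = v := by
  ext x
  simp [shear, h20, h21, h30, h31]
  linear_combination v i2 * (Pi.single i0 1 : ι1 → Q) x * ha +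
    v i3 * (Pi.single i1 1 : ι1 → Q) x * hb

def shearE {i0 i1 i2 i3 : ι1} (h20 : i2 ≠ i0) (h21 : i2 ≠ i1) (h30 : i3 ≠ i0)
    (h31 : i3 ≠ i1) (a b : Q) : (ι1 → Q) ≃ₗ[Q] (ι1 → Q) :=
  LinearEquiv.ofLinear (shear i0 i1 i2 i3 a b) (shear i0 i1 i2 i3 (-a) (-b))
    (by apply LinearMap.ext; intro v
        exact shear_shear h20 h21 h30 h31 _ _ _ _ (by ring) (by ring) v)
    (by apply LinearMap.ext; intro v
        exact shear_shear h20 h21 h30 h31 _ _ _ _ (by ring) (by ring) v)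

theorem kos_theta (C : Cx Q I ι1 ι2 ι3) (θ : (ι1 → Q) ≃ₗ[Q] (ι1 → Q)) (i j : ι1) (κ : ι2 → Q)
    (h : C.d2 κ = C.d1 (θ (Pi.single j 1)) • θ (Pi.single i 1)
      - C.d1 (θ (Pi.single i 1)) • θ (Pi.single j 1)) : KosAt (C.theta θ) i j κ := by
  show θ.symm (C.d2 κ) = C.d1 (θ (Pi.single j 1)) • _ - C.d1 (θ (Pi.single i 1)) • _
  rw [h]; simp

variable [IsNoetherianRing Q]

theorem D_step {m n : ℕ} (h : St I m n) : ∃ I' : Ideal Q, St I' m (n + 1) ∧ Linked I I' := by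
  obtain ⟨ι1, ι2, ι3, _, _, _, _, _, _, C, ⟨G⟩, h1, h2, h3⟩ := h
  obtain ⟨i0, i1, i2, i3, i4, nd, h, hm, N, hN, reg, pw, k01, k04, k14, K01, K04, K14, M01, M04,
    M14⟩ := G
  simp at nd
  obtain ⟨⟨n01, n02, n03, n04⟩, ⟨n12, n13, n14⟩, ⟨n23, n24⟩, n34⟩ := nd
  have hreg : ∀ r, h * r = 0 → r = 0 :=
    ((reg.rot (C.g_max _) (C.g_max _) hm).rot (C.g_max _) hm (C.g_max _)).1
  refine ⟨DI I (C.g i0) (C.g i1) h, ?_, C.D_link n01 n04 n14 hm hN reg pw⟩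
  let C' := C.D i0 i1 n01 h hm reg hreg k01 K01 M01
  let θ := shearE (Ne.symm n02) (Ne.symm n12) (Ne.symm n03) (Ne.symm n13) (C.g i0) (C.g i1)
  have θ0 : θ (Pi.single i0 1) = Pi.single i0 1 := by
    ext x
    simp [θ, shearE, shear, n02, n03]
  have θ1 : θ (Pi.single i1 1) = Pi.single i1 1 := by
    ext x
    simp [θ, shearE, shear, n12, n13]
  have θ2 : θ (Pi.single i2 1) = Pi.single i2 1 + C.g i0 • Pi.single i0 1 := by
    ext x
    simp [θ, shearE, shear, n23]
  have θ3 : θ (Pi.single i3 1) = Pi.single i3 1 + C.g i1 • Pi.single i1 1 := by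
    ext x
    simp [θ, shearE, shear, Ne.symm n23]
  have θ4 : θ (Pi.single i4 1) = Pi.single i4 1 := by
    ext x
    simp [θ, shearE, shear, Ne.symm n24, Ne.symm n34]
  have D1 : ∀ i, C'.d1 (Pi.single i 1) = (if i = i0 ∨ i = i1 then 1 else h) * C.g i := by
    intro i
    have : scal (fun i => if i = i0 ∨ i = i1 then 1 else h) (Pi.single i (1 : Q)) =
      (if i = i0 ∨ i = i1 then 1 else h) • Pi.single i (1 : Q) := by
      ext x
      by_cases e : x = i
      · subst e; simp
      · simp [e]
    show C.d1 (scal _ _) = _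
    rw [this, map_smul]; rfl
  have D10 : C'.d1 (Pi.single i0 1) = C.g i0 := by rw [D1]; simp
  have D11 : C'.d1 (Pi.single i1 1) = C.g i1 := by rw [D1]; simp
  have D12 : C'.d1 (Pi.single i2 1) = h * C.g i2 := by
    rw [D1]; simp [Ne.symm n02, Ne.symm n12]
  have D13 : C'.d1 (Pi.single i3 1) = h * C.g i3 := by
    rw [D1]; simp [Ne.symm n03, Ne.symm n13]
  have D14 : C'.d1 (Pi.single i4 1) = h * C.g i4 := by
    rw [D1]; simp [Ne.symm n04, Ne.symm n14]
  have D2 : ∀ (w : ι2 → Q) (t : Q), C'.d2 (Sum.elim w (fun _ => t)) =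
      scal (fun i => if i = i0 ∨ i = i1 then h else 1) (C.d2 w) +
      t • (C.g i1 • (Pi.single i0 1 : ι1 → Q) - C.g i0 • (Pi.single i1 1 : ι1 → Q)) := by
    intro w t; rfl
  have S0 : scal (fun i => if i = i0 ∨ i = i1 then h else 1) (Pi.single i0 (1 : Q)) =
      h • Pi.single i0 (1 : Q) := by
    ext x; by_cases e : x = i0
    · subst e; simp
    · simp [e]
  have S1 : scal (fun i => if i = i0 ∨ i = i1 then h else 1) (Pi.single i1 (1 : Q)) =
      h • Pi.single i1 (1 : Q) := by
    ext x; by_cases e : x = i1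
    · subst e; simp
    · simp [e]
  have S : ∀ j, i0 ≠ j → i1 ≠ j → scal (fun i => if i = i0 ∨ i = i1 then h else 1)
      (Pi.single j (1 : Q)) = Pi.single j (1 : Q) := by
    intro j a b
    ext x; by_cases e : x = j
    · subst e; simp [Ne.symm a, Ne.symm b]
    · simp [e]
  obtain ⟨k24, K24⟩ := C.kos i2 i4
  obtain ⟨k34, K34⟩ := C.kos i3 i4
  obtain ⟨k23, K23⟩ := C.kos i2 i3
  obtain ⟨k21, K21⟩ := C.kos i2 i1
  obtain ⟨k03, K03⟩ := C.kos i0 i3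
  unfold KosAt at K24 K34 K23 K21 K03 K01 K04 K14
  have hg0 := C.g_max i0
  have hg1 := C.g_max i1
  refine ⟨ι1, ι2 ⊕ Unit, ι3 ⊕ Unit, inferInstance, inferInstance, inferInstance, inferInstance,
    inferInstance, inferInstance, C'.theta θ, ⟨⟨i2, i3, i0, i1, i4, ?_, h, hm, N + 1, by omega,
    ?_, ?_, Sum.elim (h • k23 + C.g i1 • k21 + C.g i0 • k03) (fun _ => C.g i0 * C.g i1),
    Sum.elim (h • k24 + C.g i0 • k04) (fun _ => 0), Sum.elim (h • k34 + C.g i1 • k14) (fun _ => 0),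
    ?_, ?_, ?_, ?_, ?_, ?_⟩⟩, h1, ?_, ?_⟩
  · simp [n01, n02, n03, n04, n12, n13, n14, n23, n24, n34, Ne.symm n02, Ne.symm n03,
      Ne.symm n12, Ne.symm n13]
  · show Reg3 (C'.d1 (θ (Pi.single i2 1))) (C'.d1 (θ (Pi.single i3 1))) h
    rw [θ2, θ3]
    simp only [map_add, map_smul, D10, D11, D12, D13, smul_eq_mul]
    have r1 := (reg.rot hg0 hg1 hm).rot hg1 hm hg0
    have r2 := r1.pow hm hg0 hg1 1 2 2 le_rfl (by norm_num) (by norm_num)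
    rw [pow_one] at r2
    have r3 := (r2.add (C.g i2) (C.g i3)).rot hm
      (Ideal.add_mem _ (Ideal.pow_mem_of_mem _ hg0 _ (by norm_num)) (Ideal.mul_mem_right _ _ hm))
      (Ideal.add_mem _ (Ideal.pow_mem_of_mem _ hg1 _ (by norm_num)) (Ideal.mul_mem_right _ _ hm))
    convert r3 using 1 <;> ring
  · show C'.d1 (θ (Pi.single i4 1)) = _
    rw [θ4, D14, pw, pow_succ, mul_comm]
  · apply kos_theta
    rw [D2, θ2, θ3]
    simp only [map_add, map_smul, D10, D11, D12, D13, smul_eq_mul, K23, K21, K03, map_sub, S0, S1,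
      S _ n02 n12, S _ n03 n13]
    module
  · apply kos_theta
    rw [D2, θ2, θ4]
    simp only [map_add, map_smul, D10, D12, D14, smul_eq_mul, K24, K04, map_sub, S0,
      S _ n02 n12, S _ n04 n14]
    module
  · apply kos_theta
    rw [D2, θ3, θ4]
    simp only [map_add, map_smul, D11, D13, D14, smul_eq_mul, K34, K14, map_sub, S1,
      S _ n03 n13, S _ n04 n14]
    module
  · rintro (t | t)
    · simp only [Sum.elim_inl, Pi.add_apply, Pi.smul_apply, smul_eq_mul]
      exact Ideal.add_mem _ (Ideal.add_mem _ (Ideal.mul_mem_right _ _ hm)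
        (Ideal.mul_mem_right _ _ hg1)) (Ideal.mul_mem_right _ _ hg0)
    · exact Ideal.mul_mem_right _ _ hg0
  · rintro (t | t)
    · simp only [Sum.elim_inl, Pi.add_apply, Pi.smul_apply, smul_eq_mul]
      exact Ideal.add_mem _ (Ideal.mul_mem_right _ _ hm) (Ideal.mul_mem_right _ _ hg0)
    · exact Ideal.zero_mem _
  · rintro (t | t)
    · simp only [Sum.elim_inl, Pi.add_apply, Pi.smul_apply, smul_eq_mul]
      exact Ideal.add_mem _ (Ideal.mul_mem_right _ _ hm) (Ideal.mul_mem_right _ _ hg1)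
    · exact Ideal.zero_mem _
  · simp; omega
  · simp; omega
end
end Part5

section Part6
open IsLocalRing
section
variable {Q : Type*} [CommRing Q] [IsLocalRing Q] {I : Ideal Q} {ι1 ι2 ι3 : Type}
  [Fintype ι1] [Fintype ι2] [Fintype ι3] [DecidableEq ι1] [DecidableEq ι2] [DecidableEq ι3]

theorem split3 (i0 i1 i2 : ι1) (h01 : i0 ≠ i1) (h02 : i0 ≠ i2) (h12 : i1 ≠ i2) (v : ι1 → Q)
    (hv : ∀ i, (i ≠ i0 ∧ i ≠ i1 ∧ i ≠ i2) → v i = 0) :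
    v = v i0 • (Pi.single i0 1 : ι1 → Q) + v i1 • (Pi.single i1 1 : ι1 → Q)
      + v i2 • (Pi.single i2 1 : ι1 → Q) := by
  ext i
  by_cases e0 : i = i0
  · subst e0; simp [h01, h02]
  · by_cases e1 : i = i1
    · subst e1; simp [Ne.symm h01, h12]
    · by_cases e2 : i = i2
      · subst e2; simp [Ne.symm h02, Ne.symm h12]
      · simp [hv i ⟨e0, e1, e2⟩, e0, e1, e2]

/-- extension by zero from the complementary index set -/
def ext0 (p : ι1 → Prop) [DecidablePred p] (v : {i // p i} → Q) : ι1 → Q :=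
  fun i => if h : p i then v ⟨i, h⟩ else 0

theorem L_cx (C : Cx Q I ι1 ι2 ι3) {i0 i1 i2 : ι1} (h01 : i0 ≠ i1) (h02 : i0 ≠ i2) (h12 : i1 ≠ i2)
    {j : ι1} (hj : j ≠ i0 ∧ j ≠ i1 ∧ j ≠ i2)
    (hr : Reg3 (C.g i0) (C.g i1) (C.g i2)) {k01 k20 k12 : ι2 → Q}
    (K01 : KosAt C i0 i1 k01) (K20 : KosAt C i2 i0 k20) (K12 : KosAt C i1 i2 k12)
    (M01 : ∀ t, k01 t ∈ maximalIdeal Q) (M20 : ∀ t, k20 t ∈ maximalIdeal Q)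
    (M12 : ∀ t, k12 t ∈ maximalIdeal Q) :
    ∃ C' : Cx Q (Submodule.colon (Ideal.span {C.g i0, C.g i1, C.g i2}) I) (ι3 ⊕ Fin 3) ι2
      {i // i ≠ i0 ∧ i ≠ i1 ∧ i ≠ i2},
      C'.g (Sum.inr 2) = C.g i0 ∧ C'.g (Sum.inr 1) = C.g i1 ∧ C'.g (Sum.inr 0) = C.g i2 ∧
      (∃ κ, KosAt C' (Sum.inr 2) (Sum.inr 1) κ ∧ ∀ t, κ t ∈ maximalIdeal Q) ∧
      (∃ κ, KosAt C' (Sum.inr 2) (Sum.inr 0) κ ∧ ∀ t, κ t ∈ maximalIdeal Q) ∧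
      (∃ κ, KosAt C' (Sum.inr 1) (Sum.inr 0) κ ∧ ∀ t, κ t ∈ maximalIdeal Q) := by
  unfold KosAt at K01 K20 K12
  set a0 := C.g i0 with ha0
  set a1 := C.g i1 with ha1
  set a2 := C.g i2 with ha2
  have a0' : C.d1 (Pi.single i0 1) = a0 := rfl
  have a1' : C.d1 (Pi.single i1 1) = a1 := rfl
  have a2' : C.d1 (Pi.single i2 1) = a2 := rfl
  obtain ⟨w, hw⟩ := C.e2 (a0 • k12 + a1 • k20 + a2 • k01) (by
    simp only [map_add, map_smul]
    rw [K01, K20, K12]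
    ext x; simp; ring)
  let P := fun i => i ≠ i0 ∧ i ≠ i1 ∧ i ≠ i2
  let vec : ι3 ⊕ Fin 3 → Q := Sum.elim (-w) ![a2, a1, a0]
  let D1 : (ι2 → Q) →ₗ[Q] ({i // P i} → Q) := LinearMap.funLeft Q Q Subtype.val ∘ₗ C.d2
  let D2 : (ι3 ⊕ Fin 3 → Q) →ₗ[Q] (ι2 → Q) := C.d3 ∘ₗ LinearMap.funLeft Q Q Sum.inl +
    (LinearMap.proj (Sum.inr 0)).smulRight k01 + (LinearMap.proj (Sum.inr 1)).smulRight k20 +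
    (LinearMap.proj (Sum.inr 2)).smulRight k12
  let D3 : Q →ₗ[Q] (ι3 ⊕ Fin 3 → Q) := LinearMap.toSpanSingleton Q _ vec
  have D2a : ∀ v, D2 v = C.d3 (LinearMap.funLeft Q Q Sum.inl v) + v (Sum.inr 0) • k01 +
    v (Sum.inr 1) • k20 + v (Sum.inr 2) • k12 := fun v => rfl
  have D1a : ∀ v i, D1 v i = C.d2 v i.1 := fun v i => rfl
  have c1 : ∀ v, D1 (D2 v) = 0 := by
    intro v
    ext ⟨i, p0, p1, p2⟩
    rw [D1a, D2a]
    simp only [map_add, map_smul, C.c2, K01, K20, K12]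
    simp [p0, p1, p2]
  have c2 : ∀ t, D2 (D3 t) = 0 := by
    intro t
    have : LinearMap.funLeft Q Q Sum.inl (D3 t) = - t • w := by
      ext i; simp [D3, vec]
    rw [D2a, this, map_smul, hw]
    have x0 : D3 t (Sum.inr 0) = t * a2 := rfl
    have x1 : D3 t (Sum.inr 1) = t * a1 := rfl
    have x2 : D3 t (Sum.inr 2) = t * a0 := rfl
    rw [x0, x1, x2]
    module
  have e1 : ∀ v, D1 v = 0 → ∃ w, D2 w = v := by
    intro u hu
    have hs := split3 i0 i1 i2 h01 h02 h12 (C.d2 u) (fun i hi => congrFun hu ⟨i, hi⟩)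
    have hz := C.c1 u
    rw [hs] at hz
    simp only [map_add, map_smul, a0', a1', a2', smul_eq_mul] at hz
    obtain ⟨p, q, r, hp, hq, hr'⟩ := hr.k1 (u := C.d2 u i0) (v := C.d2 u i1) (w := C.d2 u i2)
      (by linear_combination hz)
    obtain ⟨v, hv⟩ := C.e2 (u - p • k01 + q • k20 - r • k12) (by
      simp only [map_add, map_sub, map_smul, K01, K20, K12]
      rw [hs, hp, hq, hr']; module)
    refine ⟨Sum.elim v ![p, -q, r], ?_⟩
    rw [D2a]
    have : LinearMap.funLeft Q Q Sum.inl (Sum.elim v ![p, -q, r]) = v := by ext; simp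
    rw [this, hv]
    simp only [Sum.elim_inr, Matrix.cons_val]
    module
  have e2 : ∀ v, D2 v = 0 → ∃ w, D3 w = v := by
    intro v hv
    rw [D2a] at hv
    have hv2 := congrArg C.d2 hv
    simp only [map_add, map_smul, C.c2, K01, K20, K12, map_zero] at hv2
    have f0 := congrFun hv2 i0
    have f1 := congrFun hv2 i1
    have f2 := congrFun hv2 i2
    simp [h01, h02, h12, Ne.symm h01, Ne.symm h02, Ne.symm h12] at f0 f1 f2
    obtain ⟨t, t1, t2, t3⟩ := hr.k2 (p := v (Sum.inr 0)) (q := - v (Sum.inr 1))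
      (r := v (Sum.inr 2)) (by linear_combination f0) (by linear_combination f1)
      (by linear_combination f2)
    have t2' : v (Sum.inr 1) = a1 * t := by linear_combination -t2
    have := C.e3 (LinearMap.funLeft Q Q Sum.inl v + t • w) (by
      rw [map_add, map_smul, hw]
      rw [t1, t2', t3] at hv
      rw [← hv]; module)
    refine ⟨t, ?_⟩
    ext (i | i)
    · have := congrFun this i
      simp [D3, vec] at this ⊢
      linear_combination -this
    · fin_cases i
      · simp [D3, vec, t1, mul_comm]
      · simp [D3, vec, t2', mul_comm]
      · simp [D3, vec, t3, mul_comm]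
  have e3 : ∀ t, D3 t = 0 → t = 0 := by
    intro t ht
    have : D3 t (Sum.inr 2) = t * a0 := rfl
    rw [ht] at this
    exact hr.1 t (by simp at this; linear_combination -this)
  have e0 : ∀ c ∈ Submodule.colon (Ideal.span {a0, a1, a2}) I, ∀ v, ∃ u, D1 u = c • v := by
    intro c hc v
    rw [mem_colon3] at hc
    obtain ⟨x, y, z, h⟩ := hc (C.d1 (ext0 P v)) ((C.r1 _).2 ⟨_, rfl⟩)
    obtain ⟨u, hu⟩ := C.e1 (c • ext0 P v - x • Pi.single i0 1 - y • Pi.single i1 1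
      - z • Pi.single i2 1) (by
        simp only [map_sub, map_smul, a0', a1', a2', smul_eq_mul]; linear_combination h)
    refine ⟨u, ?_⟩
    ext i
    rw [D1a, hu]
    obtain ⟨i, p0, p1, p2⟩ := i
    have : ext0 P v i = v ⟨i, p0, p1, p2⟩ := by
      have : P i := ⟨p0, p1, p2⟩
      simp [ext0, this]
    simp [p0, p1, p2, this]
  have hA0 : a0 ∈ Submodule.colon (Ideal.span {a0, a1, a2}) I := by
    rw [mem_colon3]; exact fun s _ => ⟨s, 0, 0, by ring⟩
  have hA1 : a1 ∈ Submodule.colon (Ideal.span {a0, a1, a2}) I := by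
    rw [mem_colon3]; exact fun s _ => ⟨0, s, 0, by ring⟩
  have hA2 : a2 ∈ Submodule.colon (Ideal.span {a0, a1, a2}) I := by
    rw [mem_colon3]; exact fun s _ => ⟨0, 0, s, by ring⟩
  let C' : Cx Q (Submodule.colon (Ideal.span {a0, a1, a2}) I) (ι3 ⊕ Fin 3) ι2
      {i // i ≠ i0 ∧ i ≠ i1 ∧ i ≠ i2} :=
    { d1 := dotL vec
      d2 := tr D2
      d3 := tr D1
      r1 := by
        intro c
        constructor
        · intro hc
          obtain ⟨h0, h1, h2, H0, H1, H2, H3⟩ := homot c1 c2 e1 e2 e3 c (e0 c hc)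
          obtain ⟨η, hη⟩ := dual_rep h2
          refine ⟨η, ?_⟩
          have := H3 1
          rw [hη] at this
          rw [dotL_apply, dotProduct_comm]
          simpa [D3] using this
        · rintro ⟨v, rfl⟩
          rw [dotL_apply, dotProduct_comm]
          apply dot_mem
          rintro (i | i)
          · exact neg_mem (C.w_mem hw i)
          · fin_cases i
            · exact hA2
            · exact hA1
            · exact hA0
      c1 := by
        intro η
        rw [dotL_apply, dotProduct_comm, tr_dot]
        have := c2 1
        simp only [D3, LinearMap.toSpanSingleton_apply, one_smul] at this
        rw [this]; simp
      c2 := by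
        intro η
        apply dot_ext
        intro v
        rw [tr_dot, tr_dot, c1]; simp
      e1 := by
        intro η hη
        rw [dotL_apply, dotProduct_comm] at hη
        obtain ⟨ρ, hρ⟩ := dual_e2 c1 c2 e1 e2 e3 hr (e0 _ hA0) (e0 _ hA1) (e0 _ hA2) (dotL η) (by
          intro t; simp [D3, hη])
        obtain ⟨ρ', hρ'⟩ := dual_rep ρ
        refine ⟨ρ', dot_ext fun v => ?_⟩
        rw [tr_dot, ← hρ', ← hρ]; rfl
      e2 := by
        intro η hη
        obtain ⟨ρ, hρ⟩ := dual_e1 c1 c2 e1 e2 e3 hr (e0 _ hA0) (e0 _ hA1) (dotL η) (by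
          intro t; rw [dotL_apply, ← tr_dot, hη]; simp)
        obtain ⟨ρ', hρ'⟩ := dual_rep ρ
        refine ⟨ρ', dot_ext fun v => ?_⟩
        rw [tr_dot, ← hρ', ← hρ]; rfl
      e3 := by
        intro η hη
        have := dual_e0 hr.1 (e0 _ hA0) (dotL η) (by
          intro t; rw [dotL_apply, ← tr_dot, hη]; simp)
        apply dot_ext
        intro v
        have := LinearMap.congr_fun this v
        simpa using this
      m1 := by
        intro r hr'
        by_contra hu
        have hu : IsUnit r := by
          rw [mem_maximalIdeal, mem_nonunits_iff, not_not] at hu; exact hu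
        obtain ⟨s, hs⟩ := hu.exists_left_inv
        rw [mem_colon3] at hr'
        obtain ⟨x, y, z, h⟩ := hr' (C.g j) (C.g_mem j)
        obtain ⟨u, hu⟩ := C.e1 (Pi.single j 1 - (s * x) • Pi.single i0 1 -
          (s * y) • Pi.single i1 1 - (s * z) • Pi.single i2 1) (by
          have : C.d1 (Pi.single j 1) = C.g j := rfl
          simp only [map_sub, map_smul, a0', a1', a2', this, smul_eq_mul]
          linear_combination s * h - C.g j * hs)
        have := C.m2 u j
        rw [hu] at this
        simp [hj.1, hj.2.1, hj.2.2] at this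
      m2 := by
        intro η
        rintro (i | i)
        · rw [tr_apply]
          apply dot_mem
          intro t
          have : D2 (Pi.single (Sum.inl i) 1) = C.d3 (Pi.single i 1) := by
            rw [D2a]
            have : LinearMap.funLeft Q Q Sum.inl (Pi.single (Sum.inl i : ι3 ⊕ Fin 3) (1 : Q)) =
              Pi.single i 1 := by
              ext x; simp [Pi.single_apply]
            rw [this]; simp
          rw [this]; exact C.m3 _ _
        · rw [tr_apply]
          apply dot_mem
          intro t
          have : LinearMap.funLeft Q Q Sum.inl (Pi.single (Sum.inr i : ι3 ⊕ Fin 3) (1 : Q)) =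
              (0 : ι3 → Q) := by
              ext x; simp [Pi.single_apply]
          rw [D2a, this]
          fin_cases i
          · simpa [Pi.single_apply] using M01 t
          · simpa [Pi.single_apply] using M20 t
          · simpa [Pi.single_apply] using M12 t
      m3 := by
        intro η i
        rw [tr_apply]
        apply dot_mem
        intro t
        exact C.m2 _ _ }
  have G : ∀ i, C'.g i = vec i := by
    intro i; show vec ⬝ᵥ Pi.single i 1 = _; simp
  have KK : ∀ i l (ρ : (ι1 → Q)), (∀ v, ρ ⬝ᵥ C.d2 (D2 v) = vec l * v i - vec i * v l) →
      ∃ κ, KosAt C' i l κ ∧ ∀ t, κ t ∈ maximalIdeal Q := by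
    intro i l ρ h
    refine ⟨tr C.d2 ρ, ?_, ?_⟩
    · unfold KosAt
      show tr D2 _ = _
      rw [G, G]
      apply dot_ext
      intro v
      rw [tr_dot, tr_dot, h]
      simp [sub_dotProduct, smul_dotProduct]
    · intro t
      rw [tr_apply]
      exact dot_mem _ _ (C.m2 _)
  have X : ∀ v, C.d2 (D2 v) = v (Sum.inr 0) • (a1 • (Pi.single i0 1 : ι1 → Q) -
      a0 • (Pi.single i1 1 : ι1 → Q)) +
    v (Sum.inr 1) • (a0 • (Pi.single i2 1 : ι1 → Q) - a2 • (Pi.single i0 1 : ι1 → Q)) +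
      v (Sum.inr 2) • (a2 • (Pi.single i1 1 : ι1 → Q) - a1 • (Pi.single i2 1 : ι1 → Q)) := by
    intro v
    rw [D2a]
    simp only [map_add, map_smul, C.c2, K01, K20, K12, zero_add]
  refine ⟨C', G _, G _, G _, KK _ _ (- Pi.single i2 1) ?_, KK _ _ (Pi.single i1 1) ?_,
    KK _ _ (- Pi.single i0 1) ?_⟩
  · intro v; rw [X]; simp [vec, h01, h02, h12, Ne.symm h01, Ne.symm h02, Ne.symm h12]; ring
  · intro v; rw [X]; simp [vec, h01, h02, h12, Ne.symm h01, Ne.symm h02, Ne.symm h12]; ring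
  · intro v; rw [X]; simp [vec, h01, h02, h12, Ne.symm h01, Ne.symm h02, Ne.symm h12]; ring

theorem L_step {m n : ℕ} (hn : 2 ≤ n) (h : St I m n) :
    ∃ I' : Ideal Q, St I' (n + 3) (m - 3) ∧ Linked I I' := by
  obtain ⟨ι1, ι2, ι3, _, _, _, _, _, _, C, ⟨G⟩, h1, h2, h3⟩ := h
  obtain ⟨i0, i1, i2, i3, i4, nd, h, hm, N, hN, reg, pw, k01, k04, k14, K01, K04, K14, M01, M04,
    M14⟩ := G
  simp at nd
  obtain ⟨⟨n01, n02, n03, n04⟩, ⟨n12, n13, n14⟩, ⟨n23, n24⟩, n34⟩ := nd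
  have hr : Reg3 (C.g i0) (C.g i1) (C.g i4) := by rw [pw]; exact reg.pow_last N hN
  refine ⟨_, ?_, Relation.ReflTransGen.single (C.link hr)⟩
  obtain ⟨C', g0, g1, g2, ⟨κ1, K1, N1⟩, ⟨κ2, K2, N2⟩, ⟨κ3, K3, N3⟩⟩ := L_cx C n01 n04 n14
    (j := i2) ⟨Ne.symm n02, Ne.symm n12, n24⟩ hr K01 (k20 := - k04) (k12 := k14)
    (by unfold KosAt at *; rw [map_neg, K04]; abel) K14 M01 (fun t => neg_mem (M04 t)) M14
  have : 1 < Fintype.card ι3 := by omega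
  obtain ⟨j0, j1, hj⟩ := Fintype.exists_pair_of_one_lt_card this
  have hc : Fintype.card {i // i ≠ i0 ∧ i ≠ i1 ∧ i ≠ i4} + 3 = m := by
    rw [← h1, Fintype.card_subtype]
    have : (Finset.univ.filter fun i => i ≠ i0 ∧ i ≠ i1 ∧ i ≠ i4) = ({i0, i1, i4} : Finset ι1)ᶜ := by
      ext; simp
    have hcard : ({i0, i1, i4} : Finset ι1).card = 3 := by
      rw [Finset.card_eq_three]; exact ⟨_, _, _, n01, n04, n14, rfl⟩
    rw [this, ← Finset.card_add_card_compl ({i0, i1, i4} : Finset ι1), hcard]; ring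
  refine ⟨ι3 ⊕ Fin 3, ι2, {i // i ≠ i0 ∧ i ≠ i1 ∧ i ≠ i4}, inferInstance, inferInstance,
    inferInstance, inferInstance, inferInstance, inferInstance, C',
    ⟨⟨Sum.inr 2, Sum.inr 1, Sum.inl j0, Sum.inl j1, Sum.inr 0, ?_, C.g i4, C.g_max _, 1, le_rfl,
      ?_, ?_, κ1, κ2, κ3, K1, K2, K3, N1, N2, N3⟩⟩, ?_, ?_, ?_⟩
  · simp [hj]
  · rw [g0, g1]; exact hr
  · rw [g2, pow_one]
  · simp [h3]
  · omega
  · omega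
end
end Part6

section Part7
open IsLocalRing Matrix
section
variable {Q : Type*} [CommRing Q]

def A1 (x y z : Q) : Fin 5 → Q :=
  ![x ^ 3, y ^ 3, x * y * z, x ^ 2 * y + x * z ^ 2 + y ^ 2 * z, z ^ 3]

theorem A1a (x y z : Q) (w : Fin 5 → Q) : A1 x y z ⬝ᵥ w =
  (x ^ 3) * w 0 + (y ^ 3) * w 1 + (x * y * z) * w 2 + (x ^ 2 * y + x * z ^ 2 + y ^ 2 * z) * w 3 + (z ^ 3) * w 4 := by
  simp [A1, Matrix.mulVec, dotProduct, Fin.sum_univ_succ, Fin.sum_univ_zero]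
  ring

def A2 (x y z : Q) : Matrix (Fin 5) (Fin 9) Q :=
  !![-y * z, 0, -x * y - z ^ 2, -y ^ 2, -y * z, 0, 0, 0, 0;
    0, -x * z, 0, -x * z, 0, -x ^ 2 - y * z, -z ^ 2, 0, 0;
    x ^ 2, y ^ 2, -x * y, -x * z, -y * z, -y * z, -x * y - z ^ 2, -x * z, -z ^ 2;
    0, 0, x ^ 2, x * y, x * z, y ^ 2, y * z, z ^ 2, 0;
    0, 0, 0, 0, -x ^ 2, 0, 0, -x * z - y ^ 2, x * y]

theorem A2a (x y z : Q) (w : Fin 9 → Q) : A2 x y z *ᵥ w =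
  ![(-y * z) * w 0 + (-x * y - z ^ 2) * w 2 + (-y ^ 2) * w 3 + (-y * z) * w 4,
    (-x * z) * w 1 + (-x * z) * w 3 + (-x ^ 2 - y * z) * w 5 + (-z ^ 2) * w 6,
    (x ^ 2) * w 0 + (y ^ 2) * w 1 + (-x * y) * w 2 + (-x * z) * w 3 + (-y * z) * w 4 + (-y * z) * w 5 + (-x * y - z ^ 2) * w 6 + (-x * z) * w 7 + (-z ^ 2) * w 8,
    (x ^ 2) * w 2 + (x * y) * w 3 + (x * z) * w 4 + (y ^ 2) * w 5 + (y * z) * w 6 + (z ^ 2) * w 7,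
    (-x ^ 2) * w 4 + (-x * z - y ^ 2) * w 7 + (x * y) * w 8] := by
  ext i; fin_cases i <;> simp [A2, Matrix.mulVec, dotProduct, Fin.sum_univ_succ, Fin.sum_univ_zero, -neg_add_rev] <;> ring

def A3 (x y z : Q) : Matrix (Fin 9) (Fin 5) Q :=
  !![z, -y, -z, 0, 0;
    -x, 0, 0, -x, -z;
    -y, 0, 0, 0, 0;
    x, z, 0, 0, z;
    0, 0, z, 0, -y;
    0, 0, 0, z, 0;
    0, -x, 0, -y, 0;
    0, 0, -x, 0, 0;
    0, 0, -y, 0, -x]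

theorem A3a (x y z : Q) (w : Fin 5 → Q) : A3 x y z *ᵥ w =
  ![(z) * w 0 + (-y) * w 1 + (-z) * w 2,
    (-x) * w 0 + (-x) * w 3 + (-z) * w 4,
    (-y) * w 0,
    (x) * w 0 + (z) * w 1 + (z) * w 4,
    (z) * w 2 + (-y) * w 4,
    (z) * w 3,
    (-x) * w 1 + (-y) * w 3,
    (-x) * w 2,
    (-y) * w 2 + (-x) * w 4] := by
  ext i; fin_cases i <;> simp [A3, Matrix.mulVec, dotProduct, Fin.sum_univ_succ, Fin.sum_univ_zero, -neg_add_rev] <;> ring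

def Ah11 (x y z : Q) : Matrix (Fin 9) (Fin 5) Q :=
  !![0, 0, x, y, 0;
    0, 0, 0, 0, 0;
    0, 0, 0, x, z;
    0, y, 0, 0, 0;
    0, 0, 0, 0, -x;
    0, -x, 0, 0, 0;
    0, 0, 0, 0, 0;
    0, 0, 0, 0, 0;
    0, 0, 0, 0, 0]

theorem Ah11a (x y z : Q) (w : Fin 5 → Q) : Ah11 x y z *ᵥ w =
  ![(x) * w 2 + (y) * w 3,
    0,
    (x) * w 3 + (z) * w 4,
    (y) * w 1,
    (-x) * w 4,
    (-x) * w 1,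
    0,
    0,
    0] := by
  ext i; fin_cases i <;> simp [Ah11, Matrix.mulVec, dotProduct, Fin.sum_univ_succ, Fin.sum_univ_zero, -neg_add_rev] <;> ring

def Ah21 (x y z : Q) : Matrix (Fin 5) (Fin 9) Q :=
  !![0, 0, 0, x ^ 2, 0, x * y, x * z, -y * z, x * z;
    0, x * y, 0, x * y, 0, y ^ 2, -x ^ 2 + y * z, 0, 0;
    0, 0, 0, 0, 0, 0, 0, -x ^ 2, 0;
    0, -x ^ 2, 0, -x ^ 2, 0, -x * y, -x * z, 0, 0;
    0, 0, 0, 0, 0, 0, 0, x * y, -x ^ 2]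

theorem Ah21a (x y z : Q) (w : Fin 9 → Q) : Ah21 x y z *ᵥ w =
  ![(x ^ 2) * w 3 + (x * y) * w 5 + (x * z) * w 6 + (-y * z) * w 7 + (x * z) * w 8,
    (x * y) * w 1 + (x * y) * w 3 + (y ^ 2) * w 5 + (-x ^ 2 + y * z) * w 6,
    (-x ^ 2) * w 7,
    (-x ^ 2) * w 1 + (-x ^ 2) * w 3 + (-x * y) * w 5 + (-x * z) * w 6,
    (x * y) * w 7 + (-x ^ 2) * w 8] := by
  ext i; fin_cases i <;> simp [Ah21, Matrix.mulVec, dotProduct, Fin.sum_univ_succ, Fin.sum_univ_zero, -neg_add_rev] <;> ring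

def Ah12 (x y z : Q) : Matrix (Fin 9) (Fin 5) Q :=
  !![0, 0, 0, 0, 0;
    0, 0, y, z, 0;
    0, 0, 0, 0, 0;
    -y, 0, 0, 0, 0;
    0, 0, 0, 0, 0;
    x, 0, 0, y, 0;
    0, 0, 0, 0, z;
    0, 0, 0, 0, -y;
    0, 0, 0, 0, -z]

theorem Ah12a (x y z : Q) (w : Fin 5 → Q) : Ah12 x y z *ᵥ w =
  ![0,
    (y) * w 2 + (z) * w 3,
    0,
    (-y) * w 0,
    0,
    (x) * w 0 + (y) * w 3,
    (z) * w 4,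
    (-y) * w 4,
    (-z) * w 4] := by
  ext i; fin_cases i <;> simp [Ah12, Matrix.mulVec, dotProduct, Fin.sum_univ_succ, Fin.sum_univ_zero, -neg_add_rev] <;> ring

def Ah22 (x y z : Q) : Matrix (Fin 5) (Fin 9) Q :=
  !![0, 0, -y ^ 2, 0, 0, 0, 0, 0, 0;
    -y ^ 2, 0, -y * z, 0, -x * z, 0, 0, -z ^ 2, y * z;
    0, 0, 0, 0, x * y, 0, 0, y * z, -y ^ 2;
    x * y, 0, x * z, 0, 0, 0, -y ^ 2, -y * z, 0;
    0, 0, 0, 0, x * z - y ^ 2, 0, 0, z ^ 2, -y * z]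

theorem Ah22a (x y z : Q) (w : Fin 9 → Q) : Ah22 x y z *ᵥ w =
  ![(-y ^ 2) * w 2,
    (-y ^ 2) * w 0 + (-y * z) * w 2 + (-x * z) * w 4 + (-z ^ 2) * w 7 + (y * z) * w 8,
    (x * y) * w 4 + (y * z) * w 7 + (-y ^ 2) * w 8,
    (x * y) * w 0 + (x * z) * w 2 + (-y ^ 2) * w 6 + (-y * z) * w 7,
    (x * z - y ^ 2) * w 4 + (z ^ 2) * w 7 + (-y * z) * w 8] := by
  ext i; fin_cases i <;> simp [Ah22, Matrix.mulVec, dotProduct, Fin.sum_univ_succ, Fin.sum_univ_zero, -neg_add_rev] <;> ring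

def Ah13 (x y z : Q) : Matrix (Fin 9) (Fin 5) Q :=
  !![0, 0, 0, 0, 0;
    0, 0, 0, 0, 0;
    -z, 0, 0, 0, 0;
    0, 0, 0, 0, 0;
    x, 0, 0, 0, 0;
    0, 0, 0, 0, 0;
    0, -z, 0, 0, 0;
    0, y, 0, z, 0;
    0, z, -z, -x, 0]

theorem Ah13a (x y z : Q) (w : Fin 5 → Q) : Ah13 x y z *ᵥ w =
  ![0,
    0,
    (-z) * w 0,
    0,
    (x) * w 0,
    0,
    (-z) * w 1,
    (y) * w 1 + (z) * w 3,
    (z) * w 1 + (-z) * w 2 + (-x) * w 3] := by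
  ext i; fin_cases i <;> simp [Ah13, Matrix.mulVec, dotProduct, Fin.sum_univ_succ, Fin.sum_univ_zero, -neg_add_rev] <;> ring

theorem Ac1 (x y z : Q) (w : Fin 9 → Q) : A1 x y z ⬝ᵥ (A2 x y z *ᵥ w) = 0 := by
  rw [A1a, A2a]
  simp only [Matrix.cons_val]
  ring

theorem Ac2 (x y z : Q) (w : Fin 5 → Q) : A2 x y z *ᵥ (A3 x y z *ᵥ w) = 0 := by
  rw [A2a, A3a]
  ext i; fin_cases i <;> simp <;> ring

theorem Ak11 (x y z : Q) (w : Fin 5 → Q) : A2 x y z *ᵥ (Ah11 x y z *ᵥ w) = x ^ 3 • w - (A1 x y z ⬝ᵥ w) • Pi.single 0 1 := by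
  rw [A2a, Ah11a, A1a]
  ext i; fin_cases i <;> simp <;> ring

theorem Ak21 (x y z : Q) (w : Fin 9 → Q) : A3 x y z *ᵥ (Ah21 x y z *ᵥ w) = x ^ 3 • w - Ah11 x y z *ᵥ (A2 x y z *ᵥ w) := by
  rw [A3a, Ah21a, Ah11a, A2a]
  ext i; fin_cases i <;> simp <;> ring

theorem Ak12 (x y z : Q) (w : Fin 5 → Q) : A2 x y z *ᵥ (Ah12 x y z *ᵥ w) = y ^ 3 • w - (A1 x y z ⬝ᵥ w) • Pi.single 1 1 := by
  rw [A2a, Ah12a, A1a]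
  ext i; fin_cases i <;> simp <;> ring

theorem Ak22 (x y z : Q) (w : Fin 9 → Q) : A3 x y z *ᵥ (Ah22 x y z *ᵥ w) = y ^ 3 • w - Ah12 x y z *ᵥ (A2 x y z *ᵥ w) := by
  rw [A3a, Ah22a, Ah12a, A2a]
  ext i; fin_cases i <;> simp <;> ring

theorem Ak13 (x y z : Q) (w : Fin 5 → Q) : A2 x y z *ᵥ (Ah13 x y z *ᵥ w) = z ^ 3 • w - (A1 x y z ⬝ᵥ w) • Pi.single 4 1 := by
  rw [A2a, Ah13a, A1a]
  ext i; fin_cases i <;> simp <;> ring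

theorem Ak3 (x y z : Q) (w : Fin 5 → Q) : Ah21 x y z *ᵥ (A3 x y z *ᵥ w) = x ^ 3 • w := by
  rw [Ah21a, A3a]
  ext i; fin_cases i <;> simp <;> ring

def B1 (x y z : Q) : Fin 6 → Q :=
  ![x ^ 2, y ^ 2, x * y, x * z, z ^ 2, y * z]

theorem B1a (x y z : Q) (w : Fin 6 → Q) : B1 x y z ⬝ᵥ w =
  (x ^ 2) * w 0 + (y ^ 2) * w 1 + (x * y) * w 2 + (x * z) * w 3 + (z ^ 2) * w 4 + (y * z) * w 5 := by
  simp [B1, Matrix.mulVec, dotProduct, Fin.sum_univ_succ, Fin.sum_univ_zero]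
  ring

def B2 (x y z : Q) : Matrix (Fin 6) (Fin 8) Q :=
  !![-y, 0, -z, 0, 0, 0, 0, 0;
    0, -x, 0, 0, 0, 0, -z, 0;
    x, y, 0, -z, 0, -z, 0, 0;
    0, 0, x, y, -z, 0, 0, 0;
    0, 0, 0, 0, x, 0, 0, -y;
    0, 0, 0, 0, 0, x, y, z]

theorem B2a (x y z : Q) (w : Fin 8 → Q) : B2 x y z *ᵥ w =
  ![(-y) * w 0 + (-z) * w 2,
    (-x) * w 1 + (-z) * w 6,
    (x) * w 0 + (y) * w 1 + (-z) * w 3 + (-z) * w 5,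
    (x) * w 2 + (y) * w 3 + (-z) * w 4,
    (x) * w 4 + (-y) * w 7,
    (x) * w 5 + (y) * w 6 + (z) * w 7] := by
  ext i; fin_cases i <;> simp [B2, Matrix.mulVec, dotProduct, Fin.sum_univ_succ, Fin.sum_univ_zero, -neg_add_rev] <;> ring

def B3 (x y z : Q) : Matrix (Fin 8) (Fin 3) Q :=
  !![-z, 0, 0;
    0, 0, -z;
    y, 0, 0;
    -x, -z, 0;
    0, -y, 0;
    0, z, -y;
    0, 0, x;
    0, -x, 0]

theorem B3a (x y z : Q) (w : Fin 3 → Q) : B3 x y z *ᵥ w =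
  ![(-z) * w 0,
    (-z) * w 2,
    (y) * w 0,
    (-x) * w 0 + (-z) * w 1,
    (-y) * w 1,
    (z) * w 1 + (-y) * w 2,
    (x) * w 2,
    (-x) * w 1] := by
  ext i; fin_cases i <;> simp [B3, Matrix.mulVec, dotProduct, Fin.sum_univ_succ, Fin.sum_univ_zero, -neg_add_rev] <;> ring

def Bh11 (x y z : Q) : Matrix (Fin 8) (Fin 6) Q :=
  !![0, y, x, 0, 0, z;
    0, -x, 0, 0, 0, 0;
    0, 0, 0, x, z, 0;
    0, 0, 0, 0, 0, 0;
    0, 0, 0, 0, x, 0;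
    0, 0, 0, 0, 0, x;
    0, 0, 0, 0, 0, 0;
    0, 0, 0, 0, 0, 0]

theorem Bh11a (x y z : Q) (w : Fin 6 → Q) : Bh11 x y z *ᵥ w =
  ![(y) * w 1 + (x) * w 2 + (z) * w 5,
    (-x) * w 1,
    (x) * w 3 + (z) * w 4,
    0,
    (x) * w 4,
    (x) * w 5,
    0,
    0] := by
  ext i; fin_cases i <;> simp [Bh11, Matrix.mulVec, dotProduct, Fin.sum_univ_succ, Fin.sum_univ_zero, -neg_add_rev] <;> ring

def Bh21 (x y z : Q) : Matrix (Fin 3) (Fin 8) Q :=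
  !![0, 0, 0, -x, 0, 0, 0, z;
    0, 0, 0, 0, 0, 0, 0, -x;
    0, 0, 0, 0, 0, 0, x, 0]

theorem Bh21a (x y z : Q) (w : Fin 8 → Q) : Bh21 x y z *ᵥ w =
  ![(-x) * w 3 + (z) * w 7,
    (-x) * w 7,
    (x) * w 6] := by
  ext i; fin_cases i <;> simp [Bh21, Matrix.mulVec, dotProduct, Fin.sum_univ_succ, Fin.sum_univ_zero, -neg_add_rev] <;> ring

def Bh12 (x y z : Q) : Matrix (Fin 8) (Fin 6) Q :=
  !![-y, 0, 0, 0, 0, 0;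
    x, 0, y, z, 0, 0;
    0, 0, 0, 0, 0, 0;
    0, 0, 0, y, 0, 0;
    0, 0, 0, 0, 0, 0;
    0, 0, 0, 0, 0, 0;
    0, 0, 0, 0, z, y;
    0, 0, 0, 0, -y, 0]

theorem Bh12a (x y z : Q) (w : Fin 6 → Q) : Bh12 x y z *ᵥ w =
  ![(-y) * w 0,
    (x) * w 0 + (y) * w 2 + (z) * w 3,
    0,
    (y) * w 3,
    0,
    0,
    (z) * w 4 + (y) * w 5,
    (-y) * w 4] := by
  ext i; fin_cases i <;> simp [Bh12, Matrix.mulVec, dotProduct, Fin.sum_univ_succ, Fin.sum_univ_zero, -neg_add_rev] <;> ring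

def Bh22 (x y z : Q) : Matrix (Fin 3) (Fin 8) Q :=
  !![0, 0, y, 0, 0, 0, 0, 0;
    0, 0, 0, 0, -y, 0, 0, 0;
    0, 0, 0, 0, -z, -y, 0, 0]

theorem Bh22a (x y z : Q) (w : Fin 8 → Q) : Bh22 x y z *ᵥ w =
  ![(y) * w 2,
    (-y) * w 4,
    (-z) * w 4 + (-y) * w 5] := by
  ext i; fin_cases i <;> simp [Bh22, Matrix.mulVec, dotProduct, Fin.sum_univ_succ, Fin.sum_univ_zero, -neg_add_rev] <;> ring

def Bh13 (x y z : Q) : Matrix (Fin 8) (Fin 6) Q :=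
  !![0, 0, 0, 0, 0, 0;
    0, 0, 0, 0, 0, 0;
    -z, 0, 0, 0, 0, 0;
    0, 0, -z, 0, 0, 0;
    -x, 0, -y, -z, 0, 0;
    0, 0, 0, 0, 0, 0;
    0, -z, 0, 0, 0, 0;
    0, y, 0, 0, 0, z]

theorem Bh13a (x y z : Q) (w : Fin 6 → Q) : Bh13 x y z *ᵥ w =
  ![0,
    0,
    (-z) * w 0,
    (-z) * w 2,
    (-x) * w 0 + (-y) * w 2 + (-z) * w 3,
    0,
    (-z) * w 1,
    (y) * w 1 + (z) * w 5] := by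
  ext i; fin_cases i <;> simp [Bh13, Matrix.mulVec, dotProduct, Fin.sum_univ_succ, Fin.sum_univ_zero, -neg_add_rev] <;> ring

theorem Bc1 (x y z : Q) (w : Fin 8 → Q) : B1 x y z ⬝ᵥ (B2 x y z *ᵥ w) = 0 := by
  rw [B1a, B2a]
  simp only [Matrix.cons_val]
  ring

theorem Bc2 (x y z : Q) (w : Fin 3 → Q) : B2 x y z *ᵥ (B3 x y z *ᵥ w) = 0 := by
  rw [B2a, B3a]
  ext i; fin_cases i <;> simp <;> ring

theorem Bk11 (x y z : Q) (w : Fin 6 → Q) : B2 x y z *ᵥ (Bh11 x y z *ᵥ w) = x ^ 2 • w - (B1 x y z ⬝ᵥ w) • Pi.single 0 1 := by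
  rw [B2a, Bh11a, B1a]
  ext i; fin_cases i <;> simp <;> ring

theorem Bk21 (x y z : Q) (w : Fin 8 → Q) : B3 x y z *ᵥ (Bh21 x y z *ᵥ w) = x ^ 2 • w - Bh11 x y z *ᵥ (B2 x y z *ᵥ w) := by
  rw [B3a, Bh21a, Bh11a, B2a]
  ext i; fin_cases i <;> simp <;> ring

theorem Bk12 (x y z : Q) (w : Fin 6 → Q) : B2 x y z *ᵥ (Bh12 x y z *ᵥ w) = y ^ 2 • w - (B1 x y z ⬝ᵥ w) • Pi.single 1 1 := by
  rw [B2a, Bh12a, B1a]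
  ext i; fin_cases i <;> simp <;> ring

theorem Bk22 (x y z : Q) (w : Fin 8 → Q) : B3 x y z *ᵥ (Bh22 x y z *ᵥ w) = y ^ 2 • w - Bh12 x y z *ᵥ (B2 x y z *ᵥ w) := by
  rw [B3a, Bh22a, Bh12a, B2a]
  ext i; fin_cases i <;> simp <;> ring

theorem Bk13 (x y z : Q) (w : Fin 6 → Q) : B2 x y z *ᵥ (Bh13 x y z *ᵥ w) = z ^ 2 • w - (B1 x y z ⬝ᵥ w) • Pi.single 4 1 := by
  rw [B2a, Bh13a, B1a]
  ext i; fin_cases i <;> simp <;> ring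

theorem Bk3 (x y z : Q) (w : Fin 3 → Q) : Bh21 x y z *ᵥ (B3 x y z *ᵥ w) = x ^ 2 • w := by
  rw [Bh21a, B3a]
  ext i; fin_cases i <;> simp <;> ring
end
end Part7

section Part8
open IsLocalRing Matrix
section
variable {Q : Type*} [CommRing Q] {ι1 ι2 ι3 : Type}

theorem acyc {M0 : Type*} [AddCommGroup M0] [Module Q M0] {d1 : (ι1 → Q) →ₗ[Q] M0}
    {d2 : (ι2 → Q) →ₗ[Q] (ι1 → Q)}
    {d3 : (ι3 → Q) →ₗ[Q] (ι2 → Q)} (c2 : ∀ w, d2 (d3 w) = 0)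
    {a b c : Q} (hr : Reg3 a b c) (h1a : ∀ v, d1 v = 0 → ∃ w, d2 w = a • v)
    (h1b : ∀ v, d1 v = 0 → ∃ w, d2 w = b • v) (h1c : ∀ v, d1 v = 0 → ∃ w, d2 w = c • v)
    (h2a : ∀ v, d2 v = 0 → ∃ w, d3 w = a • v) (h2b : ∀ v, d2 v = 0 → ∃ w, d3 w = b • v)
    (e3 : ∀ v, d3 v = 0 → v = 0) :
    (∀ v, d1 v = 0 → ∃ w, d2 w = v) ∧ (∀ v, d2 v = 0 → ∃ w, d3 w = v) := by
  have e2 : ∀ v, d2 v = 0 → ∃ w, d3 w = v := by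
    intro v hv
    obtain ⟨p, hp⟩ := h2a v hv
    obtain ⟨q, hq⟩ := h2b v hv
    have := e3 (b • p - a • q) (by rw [map_sub, map_smul, map_smul, hp, hq]; module)
    choose w hw using fun i => hr.2.1 (p i) (q i) (by
      have := congrFun this i
      simp at this; linear_combination this)
    have hw' : p = a • w := by ext i; simpa using hw i
    refine ⟨w, ?_⟩
    ext i
    have := congrFun hp i
    rw [hw', map_smul] at this
    simp at this
    have := hr.1 (d3 w i - v i) (by linear_combination this)
    linear_combination this
  refine ⟨?_, e2⟩
  intro v hv
  obtain ⟨w1, W1⟩ := h1a v hv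
  obtain ⟨w2, W2⟩ := h1b v hv
  obtain ⟨w3, W3⟩ := h1c v hv
  obtain ⟨t12, T12⟩ := e2 (b • w1 - a • w2) (by simp only [map_sub, map_smul, W1, W2]; module)
  obtain ⟨t13, T13⟩ := e2 (c • w1 - a • w3) (by simp only [map_sub, map_smul, W1, W3]; module)
  obtain ⟨t23, T23⟩ := e2 (c • w2 - b • w3) (by simp only [map_sub, map_smul, W2, W3]; module)
  have E := e3 (a • t23 - b • t13 + c • t12) (by
    simp only [map_add, map_sub, map_smul, T12, T13, T23]; module)
  choose p q r hp hq hr' using fun i => hr.k1 (u := t23 i) (v := - t13 i) (w := t12 i) (by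
    have := congrFun E i
    simp at this; linear_combination this)
  have e1 : t12 = - (a • q) - b • r := by ext i; simp [hr' i]
  rw [e1] at T12
  simp only [map_sub, map_neg, map_smul] at T12
  choose y hy using fun i => hr.2.1 (w1 i + d3 r i) (w2 i - d3 q i) (by
    have := congrFun T12 i
    simp at this; linear_combination -this)
  have hy' : w1 + d3 r = a • y := by ext i; simpa using hy i
  have := congrArg d2 hy'
  rw [map_add, c2, W1, map_smul] at this
  refine ⟨y, ?_⟩
  ext i
  have := congrFun this i
  simp at this
  have := hr.1 (d2 y i - v i) (by linear_combination -this)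
  linear_combination this

def dotL' {ι : Type} [Fintype ι] (η : ι → Q) : (ι → Q) →ₗ[Q] Q where
  toFun v := η ⬝ᵥ v
  map_add' := dotProduct_add η
  map_smul' r v := by simp

variable [IsLocalRing Q]

def IA (x y z : Q) : Ideal Q := Ideal.span (Set.range (A1 x y z))
def IB (x y z : Q) : Ideal Q := Ideal.span (Set.range (B1 x y z))

variable {x y z : Q} (hr : Reg3 (x ^ 3) (y ^ 3) (z ^ 3)) (hr2 : Reg3 (x ^ 2) (y ^ 2) (z ^ 2))
  (hx : residue Q x = 0) (hy : residue Q y = 0) (hz : residue Q z = 0)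

section
include hr hx hy hz
theorem IA_exact : (∀ v, A1 x y z ⬝ᵥ v = 0 → ∃ w, A2 x y z *ᵥ w = v) ∧
    (∀ v, A2 x y z *ᵥ v = 0 → ∃ w, A3 x y z *ᵥ w = v) := by
  refine acyc (d1 := dotL' (A1 x y z)) (d2 := (A2 x y z).mulVecLin) (d3 := (A3 x y z).mulVecLin)
    (Ac2 x y z) hr ?_ ?_ ?_ ?_ ?_ ?_
  · intro v hv
    exact ⟨_, (Ak11 x y z v).trans (by
      rw [show A1 x y z ⬝ᵥ v = 0 from hv, zero_smul, sub_zero])⟩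
  · intro v hv
    exact ⟨_, (Ak12 x y z v).trans (by
      rw [show A1 x y z ⬝ᵥ v = 0 from hv, zero_smul, sub_zero])⟩
  · intro v hv
    exact ⟨_, (Ak13 x y z v).trans (by
      rw [show A1 x y z ⬝ᵥ v = 0 from hv, zero_smul, sub_zero])⟩
  · intro v hv
    exact ⟨_, (Ak21 x y z v).trans (by
      rw [show A2 x y z *ᵥ v = 0 from hv, mulVec_zero, sub_zero])⟩
  · intro v hv
    exact ⟨_, (Ak22 x y z v).trans (by
      rw [show A2 x y z *ᵥ v = 0 from hv, mulVec_zero, sub_zero])⟩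
  · intro v hv
    have := Ak3 x y z v
    rw [show A3 x y z *ᵥ v = 0 from hv, mulVec_zero] at this
    ext i
    exact hr.1 _ (by simpa using (congrFun this i).symm)

def CA : Cx Q (IA x y z) (Fin 5) (Fin 9) (Fin 5) where
  d1 := dotL' (A1 x y z)
  d2 := (A2 x y z).mulVecLin
  d3 := (A3 x y z).mulVecLin
  r1 r := by
    rw [IA, Ideal.mem_span_range_iff_exists_fun]
    simp only [dotL', LinearMap.coe_mk, AddHom.coe_mk, dotProduct, mul_comm]
  c1 := Ac1 x y z
  c2 := Ac2 x y z
  e1 := (IA_exact hr hx hy hz).1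
  e2 := (IA_exact hr hx hy hz).2
  e3 v hv := by
    have := Ak3 x y z v
    rw [show A3 x y z *ᵥ v = 0 from hv, mulVec_zero] at this
    ext i
    exact hr.1 _ (by simpa using (congrFun this i).symm)
  m1 r hrr := by
    rw [IA, Ideal.mem_span_range_iff_exists_fun] at hrr
    obtain ⟨v, rfl⟩ := hrr
    rw [← residue_eq_zero_iff]
    simp [A1, Fin.sum_univ_succ, hx, hy, hz]
  m2 w i := by
    rw [← residue_eq_zero_iff, mulVecLin_apply, A2a]
    fin_cases i <;> simp [hx, hy, hz]
  m3 w i := by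
    rw [← residue_eq_zero_iff, mulVecLin_apply, A3a]
    fin_cases i <;> simp [hx, hy, hz]

theorem CAg (i : Fin 5) : (CA hr hx hy hz).g i = A1 x y z i := by
  show A1 x y z ⬝ᵥ Pi.single i 1 = _
  simp

theorem StA (hrz : Reg3 (x ^ 3) (y ^ 3) z) : St (IA x y z) 5 5 := by
  refine ⟨Fin 5, Fin 9, Fin 5, inferInstance, inferInstance, inferInstance, inferInstance,
    inferInstance, inferInstance, CA hr hx hy hz, ⟨⟨0, 1, 2, 3, 4, by decide, z,
      (residue_eq_zero_iff _).1 hz, 3, by norm_num, ?_, ?_,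
      -(Ah11 x y z *ᵥ Pi.single 1 1), -(Ah11 x y z *ᵥ Pi.single 4 1),
      -(Ah12 x y z *ᵥ Pi.single 4 1), ?_, ?_, ?_, ?_, ?_, ?_⟩⟩, rfl, rfl, rfl⟩
  · rw [CAg, CAg]; exact hrz
  · rw [CAg]; rfl
  · unfold KosAt
    rw [CAg, CAg, map_neg]
    refine (congrArg Neg.neg (Ak11 x y z _)).trans ?_
    simp only [dotProduct_single, A1, Matrix.cons_val]; module
  · unfold KosAt
    rw [CAg, CAg, map_neg]
    refine (congrArg Neg.neg (Ak11 x y z _)).trans ?_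
    simp only [dotProduct_single, A1, Matrix.cons_val]; module
  · unfold KosAt
    rw [CAg, CAg, map_neg]
    refine (congrArg Neg.neg (Ak12 x y z _)).trans ?_
    simp only [dotProduct_single, A1, Matrix.cons_val]; module
  · intro t
    rw [← residue_eq_zero_iff, Ah11a]
    fin_cases t <;> simp [hx, hy, hz]
  · intro t
    rw [← residue_eq_zero_iff, Ah11a]
    fin_cases t <;> simp [hx, hy, hz]
  · intro t
    rw [← residue_eq_zero_iff, Ah12a]
    fin_cases t <;> simp [hx, hy, hz]
end

section
include hr2 hx hy hz
theorem IB_exact : (∀ v, B1 x y z ⬝ᵥ v = 0 → ∃ w, B2 x y z *ᵥ w = v) ∧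
    (∀ v, B2 x y z *ᵥ v = 0 → ∃ w, B3 x y z *ᵥ w = v) := by
  refine acyc (d1 := dotL' (B1 x y z)) (d2 := (B2 x y z).mulVecLin) (d3 := (B3 x y z).mulVecLin)
    (Bc2 x y z) hr2 ?_ ?_ ?_ ?_ ?_ ?_
  · intro v hv
    exact ⟨_, (Bk11 x y z v).trans (by
      rw [show B1 x y z ⬝ᵥ v = 0 from hv, zero_smul, sub_zero])⟩
  · intro v hv
    exact ⟨_, (Bk12 x y z v).trans (by
      rw [show B1 x y z ⬝ᵥ v = 0 from hv, zero_smul, sub_zero])⟩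
  · intro v hv
    exact ⟨_, (Bk13 x y z v).trans (by
      rw [show B1 x y z ⬝ᵥ v = 0 from hv, zero_smul, sub_zero])⟩
  · intro v hv
    exact ⟨_, (Bk21 x y z v).trans (by
      rw [show B2 x y z *ᵥ v = 0 from hv, mulVec_zero, sub_zero])⟩
  · intro v hv
    exact ⟨_, (Bk22 x y z v).trans (by
      rw [show B2 x y z *ᵥ v = 0 from hv, mulVec_zero, sub_zero])⟩
  · intro v hv
    have := Bk3 x y z v
    rw [show B3 x y z *ᵥ v = 0 from hv, mulVec_zero] at this
    ext i
    exact hr2.1 _ (by simpa using (congrFun this i).symm)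

def CB : Cx Q (IB x y z) (Fin 6) (Fin 8) (Fin 3) where
  d1 := dotL' (B1 x y z)
  d2 := (B2 x y z).mulVecLin
  d3 := (B3 x y z).mulVecLin
  r1 r := by
    rw [IB, Ideal.mem_span_range_iff_exists_fun]
    simp only [dotL', LinearMap.coe_mk, AddHom.coe_mk, dotProduct, mul_comm]
  c1 := Bc1 x y z
  c2 := Bc2 x y z
  e1 := (IB_exact hr2 hx hy hz).1
  e2 := (IB_exact hr2 hx hy hz).2
  e3 v hv := by
    have := Bk3 x y z v
    rw [show B3 x y z *ᵥ v = 0 from hv, mulVec_zero] at this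
    ext i
    exact hr2.1 _ (by simpa using (congrFun this i).symm)
  m1 r hrr := by
    rw [IB, Ideal.mem_span_range_iff_exists_fun] at hrr
    obtain ⟨v, rfl⟩ := hrr
    rw [← residue_eq_zero_iff]
    simp [B1, Fin.sum_univ_succ, hx, hy, hz]
  m2 w i := by
    rw [← residue_eq_zero_iff, mulVecLin_apply, B2a]
    fin_cases i <;> simp [hx, hy, hz]
  m3 w i := by
    rw [← residue_eq_zero_iff, mulVecLin_apply, B3a]
    fin_cases i <;> simp [hx, hy, hz]

theorem CBg (i : Fin 6) : (CB hr2 hx hy hz).g i = B1 x y z i := by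
  show B1 x y z ⬝ᵥ Pi.single i 1 = _
  simp

theorem StB (hrz : Reg3 (x ^ 2) (y ^ 2) z) : St (IB x y z) 6 3 := by
  refine ⟨Fin 6, Fin 8, Fin 3, inferInstance, inferInstance, inferInstance, inferInstance,
    inferInstance, inferInstance, CB hr2 hx hy hz, ⟨⟨0, 1, 2, 3, 4, by decide, z,
      (residue_eq_zero_iff _).1 hz, 2, by norm_num, ?_, ?_,
      -(Bh11 x y z *ᵥ Pi.single 1 1), -(Bh11 x y z *ᵥ Pi.single 4 1),
      -(Bh12 x y z *ᵥ Pi.single 4 1), ?_, ?_, ?_, ?_, ?_, ?_⟩⟩, rfl, rfl, rfl⟩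
  · rw [CBg, CBg]; exact hrz
  · rw [CBg]; rfl
  · unfold KosAt
    rw [CBg, CBg, map_neg]
    refine (congrArg Neg.neg (Bk11 x y z _)).trans ?_
    simp only [dotProduct_single, B1, Matrix.cons_val]; module
  · unfold KosAt
    rw [CBg, CBg, map_neg]
    refine (congrArg Neg.neg (Bk11 x y z _)).trans ?_
    simp only [dotProduct_single, B1, Matrix.cons_val]; module
  · unfold KosAt
    rw [CBg, CBg, map_neg]
    refine (congrArg Neg.neg (Bk12 x y z _)).trans ?_
    simp only [dotProduct_single, B1, Matrix.cons_val]; module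
  · intro t
    rw [← residue_eq_zero_iff, Bh11a]
    fin_cases t <;> simp [hx, hy, hz]
  · intro t
    rw [← residue_eq_zero_iff, Bh11a]
    fin_cases t <;> simp [hx, hy, hz]
  · intro t
    rw [← residue_eq_zero_iff, Bh12a]
    fin_cases t <;> simp [hx, hy, hz]
end
end
end Part8

section Part9
open IsLocalRing
section
variable {B : Type*} [CommRing B]

/-- Koszul maps on `Fin 3 → B`, in coordinates. -/
def kd2 (a b c : B) : (Fin 3 → B) →ₗ[B] (Fin 3 → B) where
  toFun p := ![b * p 0 + c * p 1, -a * p 0 + c * p 2, -a * p 1 - b * p 2]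
  map_add' p q := by ext i; fin_cases i <;> simp <;> ring
  map_smul' r q := by ext i; fin_cases i <;> simp <;> ring

def SocData (x y z a b c : B) (s t : B) : Prop :=
  ∃ G1 G2 G3 p12 p13 p23 : Fin 3 → B,
    dotL' ![a, b, c] G1 = x * s ∧ dotL' ![a, b, c] G2 = y * s ∧ dotL' ![a, b, c] G3 = z * s ∧
    kd2 a b c p12 = y • G1 - x • G2 ∧ kd2 a b c p13 = z • G1 - x • G3 ∧
    kd2 a b c p23 = z • G2 - y • G3 ∧ x • p23 - y • p13 + z • p12 = t • ![c, -b, a]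

theorem SocData.sub {x y z a b c s t s' t' : B} (h : SocData x y z a b c s t)
    (h' : SocData x y z a b c s' t') (r : B) :
    SocData x y z a b c (s' - r * s) (t' - r * t) := by
  obtain ⟨G1, G2, G3, p12, p13, p23, h1, h2, h3, h4, h5, h6, h7⟩ := h
  obtain ⟨G1', G2', G3', p12', p13', p23', h1', h2', h3', h4', h5', h6', h7'⟩ := h'
  refine ⟨G1' - r • G1, G2' - r • G2, G3' - r • G3, p12' - r • p12, p13' - r • p13,
    p23' - r • p23, ?_, ?_, ?_, ?_, ?_, ?_, ?_⟩
  · rw [map_sub, map_smul, h1, h1']; simp; ring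
  · rw [map_sub, map_smul, h2, h2']; simp; ring
  · rw [map_sub, map_smul, h3, h3']; simp; ring
  · rw [map_sub, map_smul, h4, h4']; module
  · rw [map_sub, map_smul, h5, h5']; module
  · rw [map_sub, map_smul, h6, h6']; module
  · calc _ = (x • p23' - y • p13' + z • p12') - r • (x • p23 - y • p13 + z • p12) := by module
      _ = _ := by rw [h7, h7']; module

theorem kd_e1 {a b c : B} (hr : Reg3 a b c) (v : Fin 3 → B) (hv : dotL' ![a, b, c] v = 0) :
    ∃ w, kd2 a b c w = v := by
  have : a * v 0 + b * v 1 + c * v 2 = 0 := by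
    rw [← hv]; simp [dotL', dotProduct, Fin.sum_univ_succ]; ring
  obtain ⟨p, q, r, h1, h2, h3⟩ := hr.k1 this
  refine ⟨![p, q, r], ?_⟩
  ext i; fin_cases i
  · simp [kd2, h1]
  · simp [kd2, h2]
  · simp [kd2, h3]

theorem kd_e2 {a b c : B} (hr : Reg3 a b c) (v : Fin 3 → B) (hv : kd2 a b c v = 0) :
    ∃ t : B, v = t • ![c, -b, a] := by
  have h0 := congrFun hv 0
  have h1 := congrFun hv 1
  have h2 := congrFun hv 2
  simp [kd2] at h0 h1 h2
  obtain ⟨t, e0, e1, e2⟩ := hr.k2 (p := v 0) (q := v 1) (r := v 2) h0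
    (by linear_combination h1) (by linear_combination h2)
  refine ⟨t, ?_⟩
  ext i; fin_cases i
  · simp [e0, mul_comm]
  · simp [e1, mul_comm]
  · simp [e2, mul_comm]

theorem kd_c1 (a b c : B) (v : Fin 3 → B) : dotL' ![a, b, c] (kd2 a b c v) = 0 := by
  simp [kd2, dotL', dotProduct, Fin.sum_univ_succ]; ring

theorem kd_c2 (a b c : B) : kd2 a b c ![c, -b, a] = 0 := by
  ext i; fin_cases i <;> simp [kd2] <;> ring

theorem SocData.exists {x y z a b c s : B} (hr : Reg3 a b c)
    (hx : x * s ∈ Ideal.span {a, b, c}) (hy : y * s ∈ Ideal.span {a, b, c})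
    (hz : z * s ∈ Ideal.span {a, b, c}) : ∃ t, SocData x y z a b c s t := by
  have key : ∀ r ∈ Ideal.span {a, b, c}, ∃ G, dotL' ![a, b, c] G = r := by
    intro r hr
    obtain ⟨u, v, w, rfl⟩ : ∃ u v w, r = u * a + (v * b + w * c) := by
      rw [Ideal.mem_span_insert] at hr
      obtain ⟨s, z, hz, rfl⟩ := hr
      obtain ⟨t, u, rfl⟩ := Ideal.mem_span_pair.1 hz
      exact ⟨s, t, u, rfl⟩
    exact ⟨![u, v, w], by simp [dotL', dotProduct, Fin.sum_univ_succ]; ring⟩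
  obtain ⟨G1, h1⟩ := key _ hx
  obtain ⟨G2, h2⟩ := key _ hy
  obtain ⟨G3, h3⟩ := key _ hz
  obtain ⟨p12, h12⟩ := kd_e1 hr (y • G1 - x • G2) (by
    rw [map_sub, map_smul, map_smul, h1, h2]; simp; ring)
  obtain ⟨p13, h13⟩ := kd_e1 hr (z • G1 - x • G3) (by
    rw [map_sub, map_smul, map_smul, h1, h3]; simp; ring)
  obtain ⟨p23, h23⟩ := kd_e1 hr (z • G2 - y • G3) (by
    rw [map_sub, map_smul, map_smul, h2, h3]; simp; ring)
  obtain ⟨t, ht⟩ := kd_e2 hr (x • p23 - y • p13 + z • p12) (by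
    simp only [map_sub, map_add, map_smul, h12, h13, h23]; module)
  exact ⟨t, G1, G2, G3, p12, p13, p23, h1, h2, h3, h12, h13, h23, ht⟩

theorem SocData.mem {x y z a b c s t : B} (hX : Reg3 x y z) (h : SocData x y z a b c s t)
    (ht : t ∈ Ideal.span {x, y, z}) : s ∈ Ideal.span {a, b, c} := by
  obtain ⟨G1, G2, G3, p12, p13, p23, h1, h2, h3, h4, h5, h6, h7⟩ := h
  obtain ⟨t1, t2, t3, rfl⟩ : ∃ t1 t2 t3, t = t1 * x + (t2 * y + t3 * z) := by
    rw [Ideal.mem_span_insert] at ht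
    obtain ⟨s, z, hz, rfl⟩ := ht
    obtain ⟨t, u, rfl⟩ := Ideal.mem_span_pair.1 hz
    exact ⟨s, t, u, rfl⟩
  obtain ⟨v, hv⟩ : ∃ v : Fin 3 → B, v = ![c, -b, a] := ⟨_, rfl⟩
  have hv0 : kd2 a b c v = 0 := by rw [hv]; exact kd_c2 a b c
  rw [← hv] at h7
  have E : x • (p23 - t1 • v) + y • (-(p13 + t2 • v)) + z • (p12 - t3 • v) = 0 := by
    calc _ = (x • p23 - y • p13 + z • p12) - (t1 * x + (t2 * y + t3 * z)) • v := by module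
      _ = 0 := by rw [h7]; simp
  choose p q r e1 e2 e3 using fun i => hX.k1
    (u := (p23 - t1 • v) i) (v := (-(p13 + t2 • v)) i) (w := (p12 - t3 • v) i) (by
      have := congrFun E i
      simp only [Pi.add_apply, Pi.smul_apply, smul_eq_mul, Pi.zero_apply] at this
      exact this)
  have e3' : p12 - t3 • v = - (x • q) - y • r := by
    ext i; have := e3 i; simp at this ⊢; linear_combination this
  have e4 : kd2 a b c p12 = - (x • kd2 a b c q) - y • kd2 a b c r := by
    have := congrArg (kd2 a b c) e3'
    simpa [hv0] using this
  rw [h4] at e4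
  choose w hw using fun i => hX.2.1 (G1 i + kd2 a b c r i) (G2 i - kd2 a b c q i) (by
    have := congrFun e4 i
    simp at this
    linear_combination this)
  have hw' : G1 + kd2 a b c r = x • w := by ext i; simpa using hw i
  have := congrArg (dotL' ![a, b, c]) hw'
  rw [map_add, kd_c1, h1, map_smul] at this
  have h8 := hX.1 (s - dotL' ![a, b, c] w) (by simp at this; linear_combination this)
  have h9 : s = dotL' ![a, b, c] w := by linear_combination h8
  rw [h9]
  show ![a, b, c] ⬝ᵥ w ∈ _
  refine Ideal.sum_mem _ fun i _ => Ideal.mul_mem_right _ _ (Ideal.subset_span ?_)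
  fin_cases i <;> simp

/-- Any two socle elements modulo a regular sequence are proportional. -/
theorem socle_prop [IsLocalRing B] {x y z a b c : B} (hX : Reg3 x y z)
    (hmax : maximalIdeal B = Ideal.span {x, y, z}) (hr : Reg3 a b c) {s s' : B}
    (hs : ∀ m ∈ maximalIdeal B, m * s ∈ Ideal.span {a, b, c})
    (hs' : ∀ m ∈ maximalIdeal B, m * s' ∈ Ideal.span {a, b, c})
    (hn : s ∉ Ideal.span {a, b, c}) : ∃ r, s' - r * s ∈ Ideal.span {a, b, c} := by
  have hx : x ∈ maximalIdeal B := by rw [hmax]; exact Ideal.subset_span (by simp)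
  have hy : y ∈ maximalIdeal B := by rw [hmax]; exact Ideal.subset_span (by simp)
  have hz : z ∈ maximalIdeal B := by rw [hmax]; exact Ideal.subset_span (by simp)
  obtain ⟨t, ht⟩ := SocData.exists hr (hs x hx) (hs y hy) (hs z hz)
  obtain ⟨t', ht'⟩ := SocData.exists hr (hs' x hx) (hs' y hy) (hs' z hz)
  have hu : IsUnit t := by
    by_contra hu
    exact hn (ht.mem hX (by rw [← hmax]; exact (mem_maximalIdeal _).2 hu))
  obtain ⟨u, hu⟩ := hu.exists_left_inv
  refine ⟨t' * u, (ht.sub ht' (t' * u)).mem hX ?_⟩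
  have : t' - t' * u * t = 0 := by linear_combination -t' * hu
  rw [this]; exact Ideal.zero_mem _
end
end Part9

section Part10
open IsLocalRing
section
variable {B : Type*} [CommRing B]

theorem len_le_one {K : Type*} [AddCommGroup K] [Module B K]
    (h : ∀ f g : K, f ≠ 0 → ∃ r : B, g = r • f) : Module.length B K ≤ 1 := by
  rcases subsingleton_or_nontrivial K with hK | hK
  · simp
  · have : IsSimpleModule B K := by
      rw [isSimpleModule_iff_toSpanSingleton_surjective]
      refine ⟨hK, fun f hf g => ?_⟩
      obtain ⟨r, hr⟩ := h f g hf
      exact ⟨r, by simp [hr]⟩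
    exact le_of_eq (Module.length_eq_one B K)

theorem len_ker_add {M N : Type*} [AddCommGroup M] [Module B M] [AddCommGroup N] [Module B N]
    (f : M →ₗ[B] N) : Module.length B M =
      Module.length B (LinearMap.ker f) + Module.length B (LinearMap.range f) := by
  refine Module.length_eq_add_of_exact (LinearMap.ker f).subtype f.rangeRestrict
    (Submodule.subtype_injective _) (LinearMap.surjective_rangeRestrict f) ?_
  have := LinearMap.exact_subtype_ker_map f.rangeRestrict
  intro v
  constructor
  · intro h
    exact ⟨⟨v, by simpa using congrArg Subtype.val h⟩, rfl⟩
  · rintro ⟨w, rfl⟩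
    ext; exact w.2

theorem hom_len [IsLocalRing B] {A : Type*} [AddCommGroup A] [Module B A]
    (hsoc : ∀ s s' : A, (∀ m ∈ maximalIdeal B, m • s = 0) → (∀ m ∈ maximalIdeal B, m • s' = 0) →
      s ≠ 0 → ∃ r : B, s' = r • s) {M : Type*} [AddCommGroup M] [Module B M]
    (hM : IsFiniteLength B M) : Module.length B (M →ₗ[B] A) ≤ Module.length B M := by
  induction hM with
  | of_subsingleton => simp
  | @of_simple_quotient M _ _ N hs hN ih =>
    have e1 := len_ker_add (LinearMap.lcomp B A N.subtype)
    have e2 : Module.length B M = Module.length B N + 1 := by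
      rw [Module.length_eq_add_of_exact N.subtype N.mkQ (Submodule.subtype_injective _)
        (Submodule.mkQ_surjective _) (LinearMap.exact_subtype_mkQ N), Module.length_eq_one B (M ⧸ N)]
    rw [e1, e2, add_comm]
    refine add_le_add ((Module.length_le_of_injective _
      (Submodule.subtype_injective _)).trans ih) (len_le_one ?_)
    have hnt := IsSimpleModule.nontrivial B (M ⧸ N)
    obtain ⟨q, hq⟩ := exists_ne (0 : M ⧸ N)
    obtain ⟨e, rfl⟩ := Submodule.mkQ_surjective N q
    have hgen : ∀ v : M, ∃ r : B, v - r • e ∈ N := by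
      intro v
      obtain ⟨r, hr⟩ := IsSimpleModule.toSpanSingleton_surjective B hq (N.mkQ v)
      refine ⟨r, ?_⟩
      rw [← Submodule.Quotient.mk_eq_zero, Submodule.Quotient.mk_sub, sub_eq_zero]
      simpa using hr.symm
    have hann : ∀ m ∈ maximalIdeal B, m • e ∈ N := by
      intro m hm
      have := IsSimpleModule.annihilator_isMaximal (R := B) (M := M ⧸ N)
      rw [← IsLocalRing.eq_maximalIdeal this, Module.mem_annihilator] at hm
      rw [← Submodule.Quotient.mk_eq_zero]
      exact hm (N.mkQ e)
    have hk : ∀ f : LinearMap.ker (LinearMap.lcomp B A N.subtype), ∀ v ∈ N, f.1 v = 0 := by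
      intro f v hv
      exact LinearMap.congr_fun f.2 ⟨v, hv⟩
    have hval : ∀ f : LinearMap.ker (LinearMap.lcomp B A N.subtype), ∀ (v : M) (r : B), v - r • e ∈ N →
        f.1 v = r • f.1 e := by
      intro f v r h
      have := hk f _ h
      rwa [map_sub, map_smul, sub_eq_zero] at this
    intro f g hf
    have hf0 : f.1 e ≠ 0 := by
      intro h0
      apply hf
      ext v
      obtain ⟨r, hr⟩ := hgen v
      rw [hval f v r hr, h0]; simp
    have hkill : ∀ f : LinearMap.ker (LinearMap.lcomp B A N.subtype),
        ∀ m ∈ maximalIdeal B, m • f.1 e = 0 := by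
      intro f m hm
      rw [← map_smul]; exact hk f _ (hann m hm)
    obtain ⟨r, hr⟩ := hsoc _ _ (hkill f) (hkill g) hf0
    refine ⟨r, ?_⟩
    ext v
    obtain ⟨t, ht⟩ := hgen v
    rw [hval g v t ht, hr, Submodule.coe_smul, LinearMap.smul_apply, hval f v t ht, smul_comm]

theorem ofList3 (a b c : B) : Ideal.ofList [a, b, c] = Ideal.span {a, b, c} := by
  unfold Ideal.ofList; congr 1; ext; simp

theorem finlen [IsLocalRing B] [IsNoetherianRing B] {x y z a b c : B} (hX : Reg3 x y z)
    (hmax : maximalIdeal B = Ideal.span {x, y, z}) (hr : Reg3 a b c) (ha : a ∈ maximalIdeal B)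
    (hb : b ∈ maximalIdeal B) (hc : c ∈ maximalIdeal B) :
    Module.length B (B ⧸ Ideal.span {a, b, c}) ≠ ⊤ := by
  have hx : x ∈ maximalIdeal B := by rw [hmax]; exact Ideal.subset_span (by simp)
  have hy : y ∈ maximalIdeal B := by rw [hmax]; exact Ideal.subset_span (by simp)
  have hz : z ∈ maximalIdeal B := by rw [hmax]; exact Ideal.subset_span (by simp)
  have h1 := ringKrullDim_add_length_eq_ringKrullDim_of_isRegular _ ((reg3_iff hx hy hz).1 hX)
  have h2 := ringKrullDim_add_length_eq_ringKrullDim_of_isRegular _ ((reg3_iff ha hb hc).1 hr)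
  rw [ofList3] at h1 h2
  rw [← h1] at h2
  have h3 : ringKrullDim (B ⧸ Ideal.span {x, y, z}) = 0 := by
    rw [← hmax]; exact ringKrullDim_eq_zero_of_field (ResidueField B)
  rw [h3] at h2
  have hne : Ideal.span {a, b, c} ≠ ⊤ := by
    intro h
    have : Ideal.span {a, b, c} ≤ maximalIdeal B := Ideal.span_le.2 (by
      rintro w (rfl | rfl | rfl) <;> assumption)
    rw [h] at this
    exact (Ideal.IsMaximal.ne_top (maximalIdeal.isMaximal B)) (top_le_iff.1 this)
  have : Nontrivial (B ⧸ Ideal.span {a, b, c}) := Ideal.Quotient.nontrivial_iff.2 hne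
  have h4 : ringKrullDim (B ⧸ Ideal.span {a, b, c}) = 0 := by
    obtain ⟨d, hd⟩ : ∃ d : ℕ∞, ringKrullDim (B ⧸ Ideal.span {a, b, c}) = d := by
      have : ringKrullDim (B ⧸ Ideal.span {a, b, c}) ≠ ⊥ := by
        intro h0
        have := ringKrullDim_nonneg_of_nontrivial (R := B ⧸ Ideal.span {a, b, c})
        rw [h0] at this; exact absurd this (by decide)
      exact ⟨_, (WithBot.coe_unbot _ this).symm⟩
    rw [hd] at h2 ⊢
    have h2' : d + 3 = 0 + (3 : ℕ∞) := by
      have : ((d + 3 : ℕ∞) : WithBot ℕ∞) = ((0 + 3 : ℕ∞) : WithBot ℕ∞) := by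
        simpa using h2
      exact_mod_cast this
    have := (ENat.add_left_injective_of_ne_top (n := 3) (by simp)) h2'
    rw [this]; rfl
  have h5 : IsArtinianRing (B ⧸ Ideal.span {a, b, c}) := by
    rw [isArtinianRing_iff_isNoetherianRing_krullDimLE_zero]
    exact ⟨inferInstance, by
      rw [ringKrullDimZero_iff_ringKrullDim_eq_zero]; exact h4⟩
  rw [Module.length_eq_of_surjective (R := B ⧸ Ideal.span {a, b, c})
    Ideal.Quotient.mk_surjective]
  exact Module.length_ne_top
end
end Part10

section Part11
open IsLocalRing
section
variable {B : Type*} [CommRing B]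

structure LinkD (α I J : Ideal B) : Prop where
  leI : α ≤ I
  leJ : α ≤ J
  mI : ∀ r, r ∈ I ↔ ∀ j ∈ J, r * j ∈ α
  mJ : ∀ r, r ∈ J ↔ ∀ i ∈ I, r * i ∈ α
  exI : ∀ φ : I →ₗ[B] B ⧸ α, (∀ i : I, i.1 ∈ α → φ i = 0) →
    ∃ s : B, ∀ i : I, φ i = Submodule.Quotient.mk (s * i.1)
  exJ : ∀ φ : J →ₗ[B] B ⧸ α, (∀ i : J, i.1 ∈ α → φ i = 0) →
    ∃ s : B, ∀ i : J, φ i = Submodule.Quotient.mk (s * i.1)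
  fin : Module.length B (B ⧸ α) ≠ ⊤
  len : Module.length B (B ⧸ I) + Module.length B (B ⧸ J) = Module.length B (B ⧸ α)

theorem LinkD.symm {α I J : Ideal B} (h : LinkD α I J) : LinkD α J I :=
  ⟨h.leJ, h.leI, h.mJ, h.mI, h.exJ, h.exI, h.fin, by rw [add_comm]; exact h.len⟩

def SocOne [IsLocalRing B] (A : Type*) [AddCommGroup A] [Module B A] : Prop :=
  ∀ s s' : A, (∀ m ∈ maximalIdeal B, m • s = 0) → (∀ m ∈ maximalIdeal B, m • s' = 0) →
      s ≠ 0 → ∃ r : B, s' = r • s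

theorem dual_aux [IsLocalRing B] {α I J : Ideal B} (hs : SocOne (B := B) (B ⧸ α))
    (fin : Module.length B (B ⧸ α) ≠ ⊤) (leI : α ≤ I)
    (mJ : ∀ r, r ∈ J ↔ ∀ i ∈ I, r * i ∈ α) :
    Module.length B (B ⧸ I) + Module.length B (B ⧸ J) = Module.length B (B ⧸ α) ∧
    ∀ φ : I →ₗ[B] B ⧸ α, (∀ i : I, i.1 ∈ α → φ i = 0) →
      ∃ s : B, ∀ i : I, φ i = Submodule.Quotient.mk (s * i.1) := by
  have leJ : α ≤ J := fun a ha => (mJ a).2 fun i _ => α.mul_mem_right _ ha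
  set ψ : I →ₗ[B] B ⧸ α := α.mkQ ∘ₗ I.subtype with hψ
  have hψk : ∀ i : I, ψ i = 0 ↔ i.1 ∈ α := fun i => Submodule.Quotient.mk_eq_zero α
  set M := I ⧸ LinearMap.ker ψ
  let ι : M →ₗ[B] B ⧸ α := (LinearMap.ker ψ).liftQ ψ le_rfl
  have hι : Function.Injective ι :=
    LinearMap.ker_eq_bot.1 (Submodule.ker_liftQ_eq_bot _ _ _ le_rfl)
  -- length M
  have eM : Module.length B (B ⧸ α) = Module.length B M + Module.length B (B ⧸ I) := by
    refine Module.length_eq_add_of_exact ι (Submodule.factor leI) hι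
      (Submodule.factor_surjective leI) ?_
    intro v
    obtain ⟨v, rfl⟩ := Submodule.Quotient.mk_surjective _ v
    constructor
    · intro h
      have hv : v ∈ I := (Submodule.Quotient.mk_eq_zero I).1 h
      exact ⟨Submodule.Quotient.mk ⟨v, hv⟩, rfl⟩
    · rintro ⟨w, hw⟩
      obtain ⟨w, rfl⟩ := Submodule.Quotient.mk_surjective _ w
      rw [← hw]
      exact (Submodule.Quotient.mk_eq_zero I).2 w.2
  have finM : IsFiniteLength B M := by
    rw [← Module.length_ne_top_iff]; intro h; rw [h, top_add] at eM; exact fin eM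
  have finR : IsFiniteLength B (B ⧸ I) := by
    rw [← Module.length_ne_top_iff]; intro h; rw [h, add_top] at eM; exact fin eM
  have hM := hom_len hs finM
  have hR := hom_len hs finR
  -- J/α in Hom(R, A)
  let ev : ((B ⧸ I) →ₗ[B] (B ⧸ α)) →ₗ[B] B ⧸ α :=
    LinearMap.applyₗ (Submodule.Quotient.mk (1 : B))
  have eK := len_ker_add (Submodule.factor leJ)
  have hK : Module.length B (LinearMap.ker (Submodule.factor leJ)) ≤ Module.length B (B ⧸ I) := by
    refine le_trans ?_ ((Module.length_le_of_surjective ev.rangeRestrict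
      (LinearMap.surjective_rangeRestrict _)).trans hR)
    have hle : LinearMap.ker (Submodule.factor leJ) ≤ LinearMap.range ev := by
      intro v hv
      obtain ⟨v, rfl⟩ := Submodule.Quotient.mk_surjective _ v
      have hv : v ∈ J := (Submodule.Quotient.mk_eq_zero J).1 hv
      refine ⟨Submodule.mapQ I α (LinearMap.mulLeft B v) (fun i hi => (mJ v).1 hv i hi), ?_⟩
      show Submodule.Quotient.mk (v * 1) = _
      rw [mul_one]
    exact Module.length_le_of_injective (Submodule.inclusion hle)
      (Submodule.inclusion_injective hle)
  rw [LinearMap.range_eq_top.2 (Submodule.factor_surjective leJ), Module.length_top] at eK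
  -- mult map
  let μ : B →ₗ[B] (M →ₗ[B] (B ⧸ α)) := LinearMap.toSpanSingleton B _ ι
  have hμk : LinearMap.ker μ = J := by
    ext s
    rw [mJ, LinearMap.mem_ker]
    constructor
    · intro h i hi
      have := LinearMap.congr_fun h (Submodule.Quotient.mk ⟨i, hi⟩)
      exact (Submodule.Quotient.mk_eq_zero α).1 this
    · intro h
      ext i
      exact (Submodule.Quotient.mk_eq_zero α).2 (h i.1 i.2)
  have eS : Module.length B (B ⧸ J) = Module.length B (LinearMap.range μ) := by
    rw [← hμk]; exact (LinearMap.quotKerEquivRange μ).length_eq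
  have leS : Module.length B (LinearMap.range μ) ≤ Module.length B (M →ₗ[B] (B ⧸ α)) :=
    Module.length_le_of_injective _ (Submodule.subtype_injective _)
  have finM' := Module.length_ne_top_iff.2 finM
  have finR' := Module.length_ne_top_iff.2 finR
  have finH : Module.length B (M →ₗ[B] (B ⧸ α)) ≠ ⊤ := ne_top_of_le_ne_top finM' hM
  have finS : Module.length B (B ⧸ J) ≠ ⊤ := by rw [eS]; exact ne_top_of_le_ne_top finH leS
  have finK := ne_top_of_le_ne_top finR' hK
  have key : Module.length B (B ⧸ I) + Module.length B (B ⧸ J) = Module.length B (B ⧸ α) ∧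
      Module.length B (LinearMap.range μ) = Module.length B (M →ₗ[B] (B ⧸ α)) := by
    rw [← eS] at leS ⊢
    generalize Module.length B (B ⧸ I) = r at *
    generalize Module.length B (B ⧸ J) = s at *
    generalize Module.length B (B ⧸ α) = a at *
    generalize Module.length B (M →ₗ[B] (B ⧸ α)) = h at *
    generalize Module.length B M = m at *
    generalize Module.length B (LinearMap.ker (Submodule.factor leJ)) = k at *
    clear eS hR
    lift r to ℕ using finR'
    lift s to ℕ using finS
    lift a to ℕ using fin
    lift h to ℕ using finH
    lift m to ℕ using finM'
    lift k to ℕ using finK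
    norm_cast at *
    omega
  refine ⟨key.1, fun φ hφ => ?_⟩
  have hrange : LinearMap.range μ = ⊤ := by
    by_contra hne
    obtain ⟨_, _⟩ := isFiniteLength_iff_isNoetherian_isArtinian.1
      (Module.length_ne_top_iff.1 finH)
    exact absurd key.2 (ne_of_lt (Submodule.length_lt hne))
  let φ' : M →ₗ[B] B ⧸ α := (LinearMap.ker ψ).liftQ φ (fun i hi => hφ i ((hψk i).1 hi))
  obtain ⟨s, hs⟩ : φ' ∈ LinearMap.range μ := hrange ▸ Submodule.mem_top
  exact ⟨s, fun i => (LinearMap.congr_fun hs (Submodule.Quotient.mk i)).symm⟩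

theorem linkD [IsLocalRing B] {α I J : Ideal B} (hs : SocOne (B := B) (B ⧸ α))
    (fin : Module.length B (B ⧸ α) ≠ ⊤) (leI : α ≤ I)
    (mJ : ∀ r, r ∈ J ↔ ∀ i ∈ I, r * i ∈ α) : LinkD α I J := by
  have leJ : α ≤ J := fun a ha => (mJ a).2 fun i _ => α.mul_mem_right _ ha
  obtain ⟨e, exI⟩ := dual_aux hs fin leI mJ
  obtain ⟨e', exJ⟩ := dual_aux (J := Submodule.colon α J) hs fin leJ
    (fun r => Submodule.mem_colon)
  have hle : I ≤ Submodule.colon α J := fun i hi =>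
    Submodule.mem_colon.2 fun j hj => by
      have := (mJ j).1 hj i hi
      rwa [mul_comm] at this
  have eK := len_ker_add (Submodule.factor hle)
  rw [LinearMap.range_eq_top.2 (Submodule.factor_surjective hle), Module.length_top] at eK
  have fS : Module.length B (B ⧸ J) ≠ ⊤ := by
    intro h; rw [h, add_top] at e; exact fin e.symm
  have fR : Module.length B (B ⧸ Submodule.colon α J) ≠ ⊤ := by
    intro h; rw [h, add_top] at e'; exact fin e'.symm
  have k0 : Module.length B (LinearMap.ker (Submodule.factor hle)) = 0 := by
    rw [eK, ← e'] at e
    generalize Module.length B (B ⧸ J) = s at *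
    generalize Module.length B (B ⧸ Submodule.colon α J) = r at *
    have e3 : Module.length B (LinearMap.ker (Submodule.factor hle)) + (s + r) = 0 + (s + r) := by
      rw [zero_add, ← add_comm r s, ← add_assoc, e, add_comm]
    exact ENat.add_left_injective_of_ne_top (n := s + r) (by simp [fS, fR]) e3
  rw [Module.length_eq_zero_iff, Submodule.subsingleton_iff_eq_bot] at k0
  refine ⟨leI, leJ, fun r => ⟨fun hr j hj => Submodule.mem_colon.1 (hle hr) j hj, fun hr => ?_⟩,
    mJ, exI, exJ, fin, e⟩
  have : (Submodule.Quotient.mk r : B ⧸ I) ∈ LinearMap.ker (Submodule.factor hle) :=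
    (Submodule.Quotient.mk_eq_zero _).2 (Submodule.mem_colon.2 hr)
  rw [k0, Submodule.mem_bot] at this
  exact (Submodule.Quotient.mk_eq_zero _).1 this
end
end Part11

section Part12
open IsLocalRing
section
variable {B : Type*} [CommRing B]

/-- Pairs of compatible homs. -/
def PairM {α I : Ideal B} (le : α ≤ I) : Submodule B ((α →ₗ[B] B ⧸ α) × (I →ₗ[B] B ⧸ I)) where
  carrier := {p | ∀ a : α, Submodule.factor le (p.1 a) = p.2 ⟨a.1, le a.2⟩}
  zero_mem' := by intro a; simp
  add_mem' := by
    intro p q hp hq a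
    simp only [Prod.fst_add, Prod.snd_add, LinearMap.add_apply, map_add, hp a, hq a]
  smul_mem' := by intro r p hp a; simp [hp a]

def mulQ {α I J : Ideal B} (h : ∀ j ∈ J, ∀ i ∈ I, j * i ∈ α) (j : J) : (B ⧸ I) →ₗ[B] (B ⧸ α) :=
  Submodule.mapQ I α (LinearMap.mulLeft B j.1) (fun i hi => h j.1 j.2 i hi)

theorem mulQ_mk {α I J : Ideal B} (h : ∀ j ∈ J, ∀ i ∈ I, j * i ∈ α) (j : J) (u : B) :
    mulQ h j (Submodule.Quotient.mk u) = Submodule.Quotient.mk (j.1 * u) := rfl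

theorem mulQ_add {α I J : Ideal B} (h : ∀ j ∈ J, ∀ i ∈ I, j * i ∈ α) (j j' : J) (u : B ⧸ I) :
    mulQ h (j + j') u = mulQ h j u + mulQ h j' u := by
  obtain ⟨u, rfl⟩ := Submodule.Quotient.mk_surjective _ u
  simp only [mulQ_mk, ← Submodule.Quotient.mk_add]
  congr 1; simp [add_mul]

theorem mulQ_smul {α I J : Ideal B} (h : ∀ j ∈ J, ∀ i ∈ I, j * i ∈ α) (r : B) (j : J) (u : B ⧸ I) :
    mulQ h (r • j) u = r • mulQ h j u := by
  obtain ⟨u, rfl⟩ := Submodule.Quotient.mk_surjective _ u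
  simp only [mulQ_mk, ← Submodule.Quotient.mk_smul]
  congr 1; simp [mul_assoc]

theorem LinkD.mulJ {α I J : Ideal B} (h : LinkD α I J) : ∀ j ∈ J, ∀ i ∈ I, j * i ∈ α :=
  fun j hj => (h.mJ j).1 hj

/-- Compatible triples. -/
def TripM {α I J : Ideal B} (L : LinkD α I J) :
    Submodule B ((α →ₗ[B] B ⧸ α) × (I →ₗ[B] B ⧸ I) × (J →ₗ[B] B ⧸ J)) where
  carrier := {p | (∀ a : α, Submodule.factor L.leI (p.1 a) = p.2.1 ⟨a.1, L.leI a.2⟩) ∧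
    (∀ a : α, Submodule.factor L.leJ (p.1 a) = p.2.2 ⟨a.1, L.leJ a.2⟩) ∧
    ∀ (i : I) (j : J), p.1 ⟨j.1 * i.1, L.mulJ j.1 j.2 i.1 i.2⟩ =
      mulQ L.mulJ j (p.2.1 i) + mulQ L.symm.mulJ i (p.2.2 j)}
  zero_mem' := by refine ⟨?_, ?_, ?_⟩ <;> intros <;> simp
  add_mem' := by
    rintro p q ⟨h1, h2, h3⟩ ⟨h1', h2', h3'⟩
    refine ⟨fun a => by
      simp only [Prod.fst_add, Prod.snd_add, LinearMap.add_apply, map_add, h1 a, h1' a], fun a => by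
      simp only [Prod.fst_add, Prod.snd_add, LinearMap.add_apply, map_add, h2 a, h2' a], fun i j => ?_⟩
    simp only [Prod.fst_add, Prod.snd_add, LinearMap.add_apply, h3 i j, h3' i j, map_add]
    abel
  smul_mem' := by
    rintro r p ⟨h1, h2, h3⟩
    refine ⟨fun a => by simp [h1 a], fun a => by simp [h2 a], fun i j => ?_⟩
    simp only [Prod.smul_fst, Prod.smul_snd, LinearMap.smul_apply, h3 i j, map_smul, smul_add]

theorem mulQ_inj {α I J : Ideal B} (L : LinkD α I J) (s : B ⧸ J)
    (h : ∀ i : I, mulQ L.symm.mulJ i s = 0) : s = 0 := by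
  obtain ⟨s, rfl⟩ := Submodule.Quotient.mk_surjective _ s
  rw [Submodule.Quotient.mk_eq_zero, L.mJ]
  intro i hi
  have := h ⟨i, hi⟩
  rw [mulQ_mk, Submodule.Quotient.mk_eq_zero] at this
  rwa [mul_comm]

theorem trip_ex {α I J : Ideal B} (L : LinkD α I J) (f : α →ₗ[B] B ⧸ α) (g : I →ₗ[B] B ⧸ I)
    (hfg : (f, g) ∈ PairM L.leI) : ∃ h : J →ₗ[B] B ⧸ J, (f, g, h) ∈ TripM L := by
  have key : ∀ j : J, ∃ s : B ⧸ J, ∀ i : I, f ⟨j.1 * i.1, L.mulJ j.1 j.2 i.1 i.2⟩ =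
      mulQ L.mulJ j (g i) + mulQ L.symm.mulJ i s := by
    intro j
    let φ : I →ₗ[B] B ⧸ α :=
      { toFun := fun i => f ⟨j.1 * i.1, L.mulJ j.1 j.2 i.1 i.2⟩ - mulQ L.mulJ j (g i)
        map_add' := by
          intro i i'
          have : (⟨j.1 * (i + i').1, L.mulJ j.1 j.2 _ (i + i').2⟩ : α) =
            ⟨j.1 * i.1, L.mulJ j.1 j.2 i.1 i.2⟩ + ⟨j.1 * i'.1, L.mulJ j.1 j.2 i'.1 i'.2⟩ := by
            ext; simp [mul_add]
          rw [this]; simp only [map_add]; abel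
        map_smul' := by
          intro r i
          have : (⟨j.1 * (r • i).1, L.mulJ j.1 j.2 _ (r • i).2⟩ : α) =
            r • ⟨j.1 * i.1, L.mulJ j.1 j.2 i.1 i.2⟩ := by
            ext; simp; ring
          rw [this]; simp only [map_smul, smul_sub, RingHom.id_apply] }
    obtain ⟨s, hs⟩ := L.exI φ (by
      intro i hi
      show f ⟨j.1 * i.1, L.mulJ j.1 j.2 i.1 i.2⟩ - mulQ L.mulJ j (g i) = 0
      have e1 : (⟨j.1 * i.1, L.mulJ j.1 j.2 i.1 i.2⟩ : α) = j.1 • ⟨i.1, hi⟩ := rfl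
      have e2 := hfg ⟨i.1, hi⟩
      rw [e1, map_smul]
      change _ = g i at e2
      rw [← e2]
      obtain ⟨u, hu⟩ := Submodule.Quotient.mk_surjective _ (f ⟨i.1, hi⟩)
      change _ - mulQ L.mulJ j (Submodule.factor L.leI (f ⟨i.1, hi⟩)) = 0
      rw [← hu, sub_eq_zero]
      rfl)
    refine ⟨Submodule.Quotient.mk s, fun i => ?_⟩
    rw [mulQ_mk, mul_comm i.1 s, ← hs i]
    show _ = _ + (f _ - _)
    abel
  choose h hh using key
  have uniq : ∀ s s' : B ⧸ J, (∀ i : I, mulQ L.symm.mulJ i s = mulQ L.symm.mulJ i s') → s = s' := by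
    intro s s' e
    rw [← sub_eq_zero]
    exact mulQ_inj L _ fun i => by rw [map_sub, e, sub_self]
  have hh' : ∀ (j : J) (i : I), mulQ L.symm.mulJ i (h j) =
      f ⟨j.1 * i.1, L.mulJ j.1 j.2 i.1 i.2⟩ - mulQ L.mulJ j (g i) := by
    intro j i; rw [hh j i]; abel
  refine ⟨{ toFun := h, map_add' := ?_, map_smul' := ?_ }, hfg, ?_, fun i j => hh j i⟩
  · intro j j'
    refine uniq _ _ fun i => ?_
    have : (⟨(j + j').1 * i.1, L.mulJ _ (j + j').2 i.1 i.2⟩ : α) =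
      ⟨j.1 * i.1, L.mulJ j.1 j.2 i.1 i.2⟩ + ⟨j'.1 * i.1, L.mulJ j'.1 j'.2 i.1 i.2⟩ := by
      ext; simp [add_mul]
    rw [map_add, hh', hh', hh', this, map_add, mulQ_add]; abel
  · intro r j
    refine uniq _ _ fun i => ?_
    have : (⟨(r • j).1 * i.1, L.mulJ _ (r • j).2 i.1 i.2⟩ : α) =
      r • ⟨j.1 * i.1, L.mulJ j.1 j.2 i.1 i.2⟩ := by
      ext; simp [mul_assoc]
    rw [map_smul, hh', hh', this, map_smul, mulQ_smul, RingHom.id_apply, smul_sub]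
  · intro a
    refine uniq _ _ fun i => ?_
    show _ = mulQ L.symm.mulJ i (h ⟨a.1, L.leJ a.2⟩)
    have e1 : (⟨a.1 * i.1, L.mulJ a.1 (L.leJ a.2) i.1 i.2⟩ : α) = i.1 • a := by
      ext; simp [mul_comm]
    have e2 : mulQ L.mulJ ⟨a.1, L.leJ a.2⟩ (g i) = 0 := by
      obtain ⟨u, hu⟩ := Submodule.Quotient.mk_surjective _ (g i)
      rw [← hu, mulQ_mk, Submodule.Quotient.mk_eq_zero]
      exact α.mul_mem_right _ a.2
    rw [hh', e2, e1, map_smul, sub_zero]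
    obtain ⟨u, hu⟩ := Submodule.Quotient.mk_surjective _ (f a)
    change mulQ L.symm.mulJ i (Submodule.factor L.leJ (f a)) = _
    rw [← hu]; rfl

theorem trip_len {α I J : Ideal B} (L : LinkD α I J) :
    Module.length B (TripM L) = Module.length B (PairM L.leI) := by
  let p : TripM L →ₗ[B] PairM L.leI :=
    { toFun := fun t => ⟨(t.1.1, t.1.2.1), t.2.1⟩
      map_add' := fun _ _ => rfl
      map_smul' := fun _ _ => rfl }
  refine (LinearEquiv.ofBijective p ⟨?_, ?_⟩).length_eq
  · rw [injective_iff_map_eq_zero]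
    rintro ⟨⟨f, g, h⟩, h1, h2, h3⟩ h0
    have hf : f = 0 := congrArg (fun t => t.1.1) h0
    have hg : g = 0 := congrArg (fun t => t.1.2) h0
    subst hf hg
    have hh : h = 0 := by
      ext j
      refine mulQ_inj L _ fun i => ?_
      have := h3 i j
      simpa using this.symm
    subst hh
    rfl
  · rintro ⟨⟨f, g⟩, hfg⟩
    obtain ⟨h, hh⟩ := trip_ex L f g hfg
    exact ⟨⟨(f, g, h), hh⟩, rfl⟩

theorem trip_swap {α I J : Ideal B} (L : LinkD α I J) :
    Module.length B (TripM L) = Module.length B (TripM L.symm) := by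
  have sw : ∀ {I J : Ideal B} (L : LinkD α I J) (f) (g) (h), (f, g, h) ∈ TripM L →
      (f, h, g) ∈ TripM L.symm := by
    rintro I J L f g h ⟨h1, h2, h3⟩
    refine ⟨h2, h1, fun i j => ?_⟩
    have := h3 j i
    rw [add_comm]
    refine Eq.trans ?_ this
    congr 1; ext; simp [mul_comm]
  let p : TripM L →ₗ[B] TripM L.symm :=
    { toFun := fun t => ⟨(t.1.1, t.1.2.2, t.1.2.1), sw L _ _ _ t.2⟩
      map_add' := fun _ _ => rfl
      map_smul' := fun _ _ => rfl }
  refine (LinearEquiv.ofBijective p ⟨?_, ?_⟩).length_eq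
  · rintro ⟨⟨f, g, h⟩, _⟩ ⟨⟨f', g', h'⟩, _⟩ e
    have e1 : f = f' := congrArg (fun t => t.1.1) e
    have e2 : h = h' := congrArg (fun t => t.1.2.1) e
    have e3 : g = g' := congrArg (fun t => t.1.2.2) e
    subst e1 e2 e3; rfl
  · rintro ⟨⟨f, g, h⟩, ht⟩
    exact ⟨⟨(f, h, g), sw L.symm _ _ _ ht⟩, rfl⟩

theorem pair_len {α I J : Ideal B} (L : LinkD α I J) :
    Module.length B (PairM L.leI) = Module.length B (PairM L.leJ) := by
  rw [← trip_len L, trip_swap L, trip_len L.symm]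
end
end Part12

section Part13
open IsLocalRing
section
variable {B : Type*} [CommRing B]

theorem mem_sp3 (a b c r : B) : r ∈ Ideal.span {a, b, c} ↔ ∃ s t u, r = a * s + b * t + c * u := by
  rw [Ideal.mem_span_insert]
  constructor
  · rintro ⟨s, w, hw, rfl⟩
    obtain ⟨t, u, rfl⟩ := Ideal.mem_span_pair.1 hw
    exact ⟨s, t, u, by ring⟩
  · rintro ⟨s, t, u, rfl⟩
    exact ⟨s, _, Ideal.mem_span_pair.2 ⟨t, u, rfl⟩, by ring⟩

theorem mem3a (a b c : B) : a ∈ Ideal.span {a, b, c} := Ideal.subset_span (by simp)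
theorem mem3b (a b c : B) : b ∈ Ideal.span {a, b, c} := Ideal.subset_span (by simp)
theorem mem3c (a b c : B) : c ∈ Ideal.span {a, b, c} := Ideal.subset_span (by simp)

variable {a b c : B} {N : Type*} [AddCommGroup N] [Module B N]

theorem hom3_ext (f g : (Ideal.span {a, b, c} : Ideal B) →ₗ[B] N)
    (h0 : f ⟨a, mem3a a b c⟩ = g ⟨a, mem3a a b c⟩)
    (h1 : f ⟨b, mem3b a b c⟩ = g ⟨b, mem3b a b c⟩)
    (h2 : f ⟨c, mem3c a b c⟩ = g ⟨c, mem3c a b c⟩) : f = g := by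
  ext ⟨v, hv⟩
  obtain ⟨s, t, u, rfl⟩ := (mem_sp3 a b c v).1 hv
  have : (⟨a * s + b * t + c * u, hv⟩ : (Ideal.span {a, b, c} : Ideal B)) =
    s • ⟨a, mem3a a b c⟩ + t • ⟨b, mem3b a b c⟩ + u • ⟨c, mem3c a b c⟩ := by
    ext; simp; ring
  rw [this]; simp only [map_add, map_smul, h0, h1, h2]

theorem hom3_ex (hr : Reg3 a b c) (hN : ∀ r ∈ Ideal.span {a, b, c}, ∀ v : N, r • v = 0)
    (n0 n1 n2 : N) : ∃ f : (Ideal.span {a, b, c} : Ideal B) →ₗ[B] N,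
      f ⟨a, mem3a a b c⟩ = n0 ∧ f ⟨b, mem3b a b c⟩ = n1 ∧ f ⟨c, mem3c a b c⟩ = n2 := by
  let π : B × B × B →ₗ[B] (Ideal.span {a, b, c} : Ideal B) :=
    { toFun := fun v => ⟨a * v.1 + b * v.2.1 + c * v.2.2, (mem_sp3 a b c _).2 ⟨_, _, _, rfl⟩⟩
      map_add' := by intro v w; ext; simp; ring
      map_smul' := by intro v w; ext; simp; ring }
  have hπ : Function.Surjective π := by
    rintro ⟨v, hv⟩
    obtain ⟨s, t, u, rfl⟩ := (mem_sp3 a b c v).1 hv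
    exact ⟨(s, t, u), rfl⟩
  let ψ : B × B × B →ₗ[B] N :=
    { toFun := fun v => v.1 • n0 + v.2.1 • n1 + v.2.2 • n2
      map_add' := by intro v w; simp only [Prod.fst_add, Prod.snd_add]; module
      map_smul' := by intro v w; simp only [Prod.smul_fst, Prod.smul_snd, smul_eq_mul, RingHom.id_apply]; module }
  have hle : LinearMap.ker π ≤ LinearMap.ker ψ := by
    rintro ⟨u, v, w⟩ h
    have h0 : a * u + b * v + c * w = 0 := congrArg Subtype.val (LinearMap.mem_ker.1 h)
    obtain ⟨p, q, r, h1, h2, h3⟩ := hr.k1 h0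
    show u • n0 + v • n1 + w • n2 = 0
    rw [hN u ((mem_sp3 a b c u).2 ⟨0, p, q, by rw [h1]; ring⟩),
      hN v ((mem_sp3 a b c v).2 ⟨-p, 0, r, by rw [h2]; ring⟩),
      hN w ((mem_sp3 a b c w).2 ⟨-q, -r, 0, by rw [h3]; ring⟩)]
    simp
  let f := (LinearMap.ker π).liftQ ψ hle ∘ₗ (π.quotKerEquivOfSurjective hπ).symm.toLinearMap
  have hf : ∀ v, f (π v) = ψ v := by
    intro v
    have : (π.quotKerEquivOfSurjective hπ).symm (π v) = Submodule.Quotient.mk v := by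
      rw [LinearEquiv.symm_apply_eq]; rfl
    show (LinearMap.ker π).liftQ ψ hle ((π.quotKerEquivOfSurjective hπ).symm (π v)) = _
    rw [this]; rfl
  refine ⟨f, ?_, ?_, ?_⟩
  · have : (⟨a, mem3a a b c⟩ : (Ideal.span {a, b, c} : Ideal B)) = π (1, 0, 0) := by
      ext; simp [π]
    rw [this, hf]; simp [ψ]
  · have : (⟨b, mem3b a b c⟩ : (Ideal.span {a, b, c} : Ideal B)) = π (0, 1, 0) := by
      ext; simp [π]
    rw [this, hf]; simp [ψ]
  · have : (⟨c, mem3c a b c⟩ : (Ideal.span {a, b, c} : Ideal B)) = π (0, 0, 1) := by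
      ext; simp [π]
    rw [this, hf]; simp [ψ]

theorem hom3_len (hr : Reg3 a b c) (hN : ∀ r ∈ Ideal.span {a, b, c}, ∀ v : N, r • v = 0) :
    Module.length B ((Ideal.span {a, b, c} : Ideal B) →ₗ[B] N) = 3 * Module.length B N := by
  let p : ((Ideal.span {a, b, c} : Ideal B) →ₗ[B] N) →ₗ[B] N × N × N :=
    { toFun := fun f => (f ⟨a, mem3a a b c⟩, f ⟨b, mem3b a b c⟩, f ⟨c, mem3c a b c⟩)
      map_add' := fun _ _ => rfl
      map_smul' := fun _ _ => rfl }
  rw [(LinearEquiv.ofBijective p ⟨?_, ?_⟩).length_eq, Module.length_prod, Module.length_prod]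
  · ring
  · intro f g h
    exact hom3_ext f g (congrArg (fun t => t.1) h) (congrArg (fun t => t.2.1) h)
      (congrArg (fun t => t.2.2) h)
  · rintro ⟨n0, n1, n2⟩
    obtain ⟨f, h0, h1, h2⟩ := hom3_ex hr hN n0 n1 n2
    exact ⟨f, by simp [p, h0, h1, h2]⟩

theorem kill_quot {α : Ideal B} : ∀ r ∈ α, ∀ v : B ⧸ α, r • v = 0 := by
  intro r hr v
  obtain ⟨v, rfl⟩ := Submodule.Quotient.mk_surjective _ v
  rw [← Submodule.Quotient.mk_smul, Submodule.Quotient.mk_eq_zero]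
  exact α.mul_mem_right _ hr

theorem pairM_len (hr : Reg3 a b c) {I : Ideal B} (le : Ideal.span {a, b, c} ≤ I) :
    Module.length B (PairM le) =
      3 * Module.length B (LinearMap.ker (Submodule.factor le)) +
      Module.length B (I →ₗ[B] B ⧸ I) := by
  rw [← hom3_len (N := LinearMap.ker (Submodule.factor le)) hr
    (fun r hr v => by ext; exact kill_quot r hr v.1)]
  let ι : ((Ideal.span {a, b, c} : Ideal B) →ₗ[B] LinearMap.ker (Submodule.factor le)) →ₗ[B]
      PairM le :=
    { toFun := fun f => ⟨((LinearMap.ker (Submodule.factor le)).subtype ∘ₗ f, 0), fun x => (f x).2⟩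
      map_add' := fun f g => by ext <;> simp
      map_smul' := fun f g => by ext <;> simp }
  let p : PairM le →ₗ[B] (I →ₗ[B] B ⧸ I) := LinearMap.snd _ _ _ ∘ₗ (PairM le).subtype
  refine Module.length_eq_add_of_exact ι p ?_ ?_ ?_
  · intro f g h
    ext v
    exact LinearMap.congr_fun (congrArg (fun t => t.1.1) h) v
  · intro g
    have hs := Submodule.factor_surjective le
    obtain ⟨n0, h0⟩ := hs (g ⟨a, le (mem3a a b c)⟩)
    obtain ⟨n1, h1⟩ := hs (g ⟨b, le (mem3b a b c)⟩)
    obtain ⟨n2, h2⟩ := hs (g ⟨c, le (mem3c a b c)⟩)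
    obtain ⟨f, e0, e1, e2⟩ := hom3_ex hr kill_quot n0 n1 n2
    have := hom3_ext (Submodule.factor le ∘ₗ f) (g ∘ₗ Submodule.inclusion le)
      (by rw [← e0] at h0; exact h0) (by rw [← e1] at h1; exact h1)
      (by rw [← e2] at h2; exact h2)
    exact ⟨⟨(f, g), fun v => LinearMap.congr_fun this v⟩, rfl⟩
  · rintro ⟨⟨f, g⟩, h⟩
    constructor
    · intro hg
      have hg : g = 0 := hg
      subst hg
      refine ⟨LinearMap.codRestrict _ f (fun v => ?_), ?_⟩
      · exact h v
      · rfl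
    · rintro ⟨f', e⟩
      rw [← e]; rfl

/-- The numerical invariant. -/
def LInv (I : Ideal B) : Prop :=
  Module.length B (B ⧸ I) ≠ ⊤ ∧ Module.length B (I →ₗ[B] B ⧸ I) = 3 * Module.length B (B ⧸ I)

theorem LInv_top : LInv (⊤ : Ideal B) := by
  have : Subsingleton (B ⧸ (⊤ : Ideal B)) := Submodule.Quotient.subsingleton_iff.2 rfl
  refine ⟨by simp, ?_⟩
  simp

variable [IsLocalRing B] [IsNoetherianRing B] {x y z : B}

theorem socOne_ci (hX : Reg3 x y z)
    (hmax : maximalIdeal B = Ideal.span {x, y, z}) (hr : Reg3 a b c) :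
    SocOne (B := B) (B ⧸ Ideal.span {a, b, c}) := by
  intro s s' hs hs' hn
  obtain ⟨s, rfl⟩ := Submodule.Quotient.mk_surjective _ s
  obtain ⟨s', rfl⟩ := Submodule.Quotient.mk_surjective _ s'
  rw [Ne, Submodule.Quotient.mk_eq_zero] at hn
  obtain ⟨r, hr⟩ := socle_prop hX hmax hr (s := s) (s' := s')
    (fun m hm => (Submodule.Quotient.mk_eq_zero _).1 (hs m hm))
    (fun m hm => (Submodule.Quotient.mk_eq_zero _).1 (hs' m hm)) hn
  refine ⟨r, ?_⟩
  rw [← Submodule.Quotient.mk_smul, Submodule.Quotient.eq]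
  exact hr

theorem LInv_ci (hX : Reg3 x y z)
    (hmax : maximalIdeal B = Ideal.span {x, y, z}) (hr : Reg3 a b c) (ha : a ∈ maximalIdeal B)
    (hb : b ∈ maximalIdeal B) (hc : c ∈ maximalIdeal B) : LInv (Ideal.span {a, b, c}) :=
  ⟨finlen hX hmax hr ha hb hc, hom3_len hr kill_quot⟩

theorem LInv_link (hX : Reg3 x y z)
    (hmax : maximalIdeal B = Ideal.span {x, y, z}) (hr : Reg3 a b c) (ha : a ∈ maximalIdeal B)
    (hb : b ∈ maximalIdeal B) (hc : c ∈ maximalIdeal B) {I J : Ideal B}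
    (le : Ideal.span {a, b, c} ≤ I) (mJ : ∀ r, r ∈ J ↔ ∀ i ∈ I, r * i ∈ Ideal.span {a, b, c})
    (hJ : LInv J) : LInv I := by
  have L := linkD (socOne_ci hX hmax hr) (finlen hX hmax hr ha hb hc) le mJ
  have e := pair_len L
  rw [pairM_len hr, pairM_len hr] at e
  have k1 := len_ker_add (Submodule.factor L.leI)
  have k2 := len_ker_add (Submodule.factor L.leJ)
  rw [LinearMap.range_eq_top.2 (Submodule.factor_surjective _), Module.length_top] at k1 k2
  obtain ⟨h1, h2⟩ := hJ
  have l := L.len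
  have f := L.fin
  unfold LInv
  rw [h2] at e
  generalize Module.length B (I →ₗ[B] B ⧸ I) = H at *
  generalize Module.length B (B ⧸ I) = r at *
  generalize Module.length B (B ⧸ J) = s at *
  generalize Module.length B (B ⧸ Ideal.span {a, b, c}) = A at *
  generalize Module.length B (LinearMap.ker (Submodule.factor L.leI)) = k at *
  generalize Module.length B (LinearMap.ker (Submodule.factor L.leJ)) = k' at *
  have fr : r ≠ ⊤ := by rintro rfl; rw [top_add] at l; exact f l.symm
  have fk : k ≠ ⊤ := by rintro rfl; rw [top_add] at k1; exact f k1
  have fk' : k' ≠ ⊤ := by rintro rfl; rw [top_add] at k2; exact f k2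
  refine ⟨fr, ?_⟩
  clear h2 mJ L
  lift r to ℕ using fr
  lift s to ℕ using h1
  lift A to ℕ using f
  lift k to ℕ using fk
  lift k' to ℕ using fk'
  have fH : H ≠ ⊤ := by
    rintro rfl
    rw [add_top] at e
    exact absurd e.symm (by norm_cast)
  lift H to ℕ using fH
  norm_cast at *
  omega
end
end Part13

section Part14
open IsLocalRing Matrix
section
variable {B : Type*} [CommRing B] {m : ℕ} {g : Fin m → B}

theorem mem_spr (g : Fin m → B) (v : B) : v ∈ Ideal.span (Set.range g) ↔ ∃ w, g ⬝ᵥ w = v := by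
  rw [Ideal.mem_span_range_iff_exists_fun]
  constructor
  · rintro ⟨c, rfl⟩; exact ⟨c, dotProduct_comm _ _⟩
  · rintro ⟨c, rfl⟩; exact ⟨c, dotProduct_comm _ _⟩

theorem spanHom {N : Type*} [AddCommGroup N] [Module B N] (n : Fin m → N)
    (h : ∀ v, g ⬝ᵥ v = 0 → ∑ i, v i • n i = 0) :
    ∃ f : Ideal.span (Set.range g) →ₗ[B] N, ∀ (v : Fin m → B) (hv), f ⟨g ⬝ᵥ v, hv⟩ = ∑ i, v i • n i := by
  let π : (Fin m → B) →ₗ[B] Ideal.span (Set.range g) :=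
    LinearMap.codRestrict _ (dotL' g) (fun v => (mem_spr g _).2 ⟨v, rfl⟩)
  have hπ : Function.Surjective π := by
    rintro ⟨v, hv⟩
    obtain ⟨w, rfl⟩ := (mem_spr g v).1 hv
    exact ⟨w, rfl⟩
  let ψ : (Fin m → B) →ₗ[B] N := Fintype.linearCombination B n
  have hle : LinearMap.ker π ≤ LinearMap.ker ψ := by
    intro v hv
    have h0 : g ⬝ᵥ v = 0 := congrArg Subtype.val (LinearMap.mem_ker.1 hv)
    exact h v h0
  let f := (LinearMap.ker π).liftQ ψ hle ∘ₗ (π.quotKerEquivOfSurjective hπ).symm.toLinearMap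
  refine ⟨f, fun v hv => ?_⟩
  have : (π.quotKerEquivOfSurjective hπ).symm (π v) = Submodule.Quotient.mk v := by
    rw [LinearEquiv.symm_apply_eq]; rfl
  show (LinearMap.ker π).liftQ ψ hle ((π.quotKerEquivOfSurjective hπ).symm (π v)) = _
  rw [this]; rfl

theorem gi_mem (i : Fin m) : g i ∈ Ideal.span (Set.range g) := Ideal.subset_span ⟨i, rfl⟩

theorem low_bd (𝔟 : Ideal B) (hsyz : ∀ v, g ⬝ᵥ v = 0 → ∀ i, v i ∈ 𝔟)
    (N : Submodule B (B ⧸ Ideal.span (Set.range g))) (hN : ∀ b ∈ 𝔟, ∀ n ∈ N, b • n = 0) :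
    m * Module.length B N ≤
      Module.length B (Ideal.span (Set.range g) →ₗ[B] B ⧸ Ideal.span (Set.range g)) := by
  let ev : (Ideal.span (Set.range g) →ₗ[B] B ⧸ Ideal.span (Set.range g)) →ₗ[B] (Fin m → B ⧸ Ideal.span (Set.range g)) :=
    { toFun := fun f i => f ⟨g i, gi_mem i⟩
      map_add' := fun _ _ => rfl
      map_smul' := fun _ _ => rfl }
  have key : ∀ n : Fin m → N, (fun i => (n i).1) ∈ LinearMap.range ev := by
    intro n
    obtain ⟨f, hf⟩ := spanHom (g := g) (fun i => (n i).1) (fun v hv =>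
      Finset.sum_eq_zero fun i _ => hN _ (hsyz v hv i) _ (n i).2)
    refine ⟨f, ?_⟩
    ext i
    show f ⟨g i, _⟩ = _
    have e : g i = g ⬝ᵥ Pi.single i 1 := by simp
    have := hf (Pi.single i 1) (by rw [← e]; exact gi_mem i)
    simp only [← e] at this
    rw [this, Finset.sum_eq_single i]
    · simp
    · intro j _ hj; simp [hj]
    · simp
  let j : (Fin m → N) →ₗ[B] LinearMap.range ev :=
    { toFun := fun n => ⟨_, key n⟩
      map_add' := fun _ _ => rfl
      map_smul' := fun _ _ => rfl }
  have h1 : Module.length B (Fin m → N) = m * Module.length B N := by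
    rw [Module.length_pi]; simp
  rw [← h1]
  refine (Module.length_le_of_injective j ?_).trans
    (Module.length_le_of_surjective ev.rangeRestrict (LinearMap.surjective_rangeRestrict _))
  intro n n' e
  ext i
  exact congrFun (congrArg Subtype.val e) i

/-- Image of `𝔞` in `B ⧸ I`. -/
def imQ (𝔞 I : Ideal B) : Submodule B (B ⧸ I) := LinearMap.range (I.mkQ ∘ₗ 𝔞.subtype)

theorem imQ_len {𝔞 I : Ideal B} (le : I ≤ 𝔞) : Module.length B (B ⧸ I) =
    Module.length B (imQ 𝔞 I) + Module.length B (B ⧸ 𝔞) := by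
  have k := len_ker_add (Submodule.factor le)
  rw [LinearMap.range_eq_top.2 (Submodule.factor_surjective _), Module.length_top] at k
  have : LinearMap.ker (Submodule.factor le) = imQ 𝔞 I := by
    ext v
    obtain ⟨v, rfl⟩ := Submodule.Quotient.mk_surjective _ v
    constructor
    · intro h
      exact ⟨⟨v, (Submodule.Quotient.mk_eq_zero 𝔞).1 h⟩, rfl⟩
    · rintro ⟨w, hw⟩
      rw [← hw]
      exact (Submodule.Quotient.mk_eq_zero 𝔞).2 w.2
  rw [k, this]

variable [IsLocalRing B]

theorem len_k : Module.length B (B ⧸ maximalIdeal B) = 1 := by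
  have : IsSimpleModule B (B ⧸ maximalIdeal B) :=
    isSimpleModule_iff_isCoatom.2 (maximalIdeal.isMaximal B).out
  exact Module.length_eq_one _ _

theorem len_km : Module.length B (Fin m → B ⧸ maximalIdeal B) = m := by
  rw [Module.length_pi, len_k]; simp

theorem imQ_le {I : Ideal B} (h : maximalIdeal B * Ideal.span (Set.range g) ≤ I) :
    Module.length B (imQ (Ideal.span (Set.range g)) I) ≤ m := by
  have hk : ∀ i, maximalIdeal B ≤
      LinearMap.ker (LinearMap.toSpanSingleton B (B ⧸ I) (Submodule.Quotient.mk (g i))) := by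
    intro i r hr
    exact (Submodule.Quotient.mk_eq_zero I).2 (h (Ideal.mul_mem_mul hr (gi_mem i)))
  let p : (Fin m → B ⧸ maximalIdeal B) →ₗ[B] B ⧸ I :=
    ∑ i, (Submodule.liftQ _ _ (hk i)) ∘ₗ LinearMap.proj i
  have hle : imQ (Ideal.span (Set.range g)) I ≤ LinearMap.range p := by
    rintro _ ⟨⟨v, hv⟩, rfl⟩
    obtain ⟨w, rfl⟩ := (mem_spr g v).1 hv
    refine ⟨fun i => Submodule.Quotient.mk (w i), ?_⟩
    simp only [p, LinearMap.sum_apply, LinearMap.comp_apply, LinearMap.proj_apply]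
    show ∑ i, w i • I.mkQ (g i) = I.mkQ (g ⬝ᵥ w)
    simp only [← map_smul, ← map_sum]
    congr 1
    simp [dotProduct, mul_comm]
  rw [← len_km (B := B) (m := m)]
  exact (Module.length_le_of_injective _ (Submodule.inclusion_injective hle)).trans
    (Module.length_le_of_surjective p.rangeRestrict (LinearMap.surjective_rangeRestrict _))

theorem resHom (hsyz : ∀ v, g ⬝ᵥ v = 0 → ∀ i, v i ∈ maximalIdeal B) :
    ∃ φ : Ideal.span (Set.range g) →ₗ[B] (Fin m → B ⧸ maximalIdeal B),
      ∀ (v : Fin m → B) (hv) (j), φ ⟨g ⬝ᵥ v, hv⟩ j = Submodule.Quotient.mk (v j) := by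
  have key : ∀ (v : Fin m → B) (j : Fin m), (∑ i, v i • (Pi.single i (Submodule.Quotient.mk 1) :
      Fin m → B ⧸ maximalIdeal B)) j = Submodule.Quotient.mk (v j) := by
    intro v j
    rw [Finset.sum_apply, Finset.sum_eq_single j]
    · rw [Pi.smul_apply, Pi.single_eq_same, ← Submodule.Quotient.mk_smul, smul_eq_mul, mul_one]
    · intro i _ hi
      rw [Pi.smul_apply, Pi.single_eq_of_ne hi.symm, smul_zero]
    · simp
  obtain ⟨φ, hφ⟩ := spanHom (g := g) (N := Fin m → B ⧸ maximalIdeal B)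
    (fun i => Pi.single i (Submodule.Quotient.mk 1)) (fun v hv => by
      funext j
      rw [key]
      exact (Submodule.Quotient.mk_eq_zero _).2 (hsyz v hv j))
  exact ⟨φ, fun v hv j => by rw [hφ, key]⟩

theorem len_ge_aux {M : Type*} [AddCommGroup M] [Module B M]
    (φ : M →ₗ[B] (Fin m → B ⧸ maximalIdeal B)) (hs : Function.Surjective φ) :
    m ≤ Module.length B M ∧ ∀ w : M, φ w = 0 → w ≠ 0 → m + 1 ≤ Module.length B M := by
  have k := len_ker_add φ
  rw [LinearMap.range_eq_top.2 hs, Module.length_top, len_km] at k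
  rw [k]
  refine ⟨le_add_self, fun w hw hw0 => ?_⟩
  rw [add_comm (m : ℕ∞)]
  refine add_le_add_left ?_ _
  rw [ENat.one_le_iff_ne_zero, Ne, Module.length_eq_zero_iff]
  intro hsub
  exact hw0 (congrArg Subtype.val (Subsingleton.elim (α := LinearMap.ker φ) ⟨w, hw⟩ 0))

theorem kill_aux {𝔞 : Ideal B} (φ : 𝔞 →ₗ[B] (Fin m → B ⧸ maximalIdeal B)) (w : B)
    (hw : w ∈ maximalIdeal B * 𝔞) (hw' : w ∈ 𝔞) : φ ⟨w, hw'⟩ = 0 := by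
  have hw2 : w ∈ maximalIdeal B • 𝔞 := hw
  have : ∃ h : w ∈ 𝔞, φ ⟨w, h⟩ = 0 := by
    refine Submodule.smul_induction_on (p := fun w => ∃ h : w ∈ 𝔞, φ ⟨w, h⟩ = 0) hw2 ?_ ?_
    · intro r hr s hs
      refine ⟨𝔞.mul_mem_left r hs, ?_⟩
      have : (⟨r • s, 𝔞.mul_mem_left r hs⟩ : 𝔞) = r • ⟨s, hs⟩ := rfl
      rw [this, map_smul]
      funext j
      exact kill_quot r hr (φ ⟨s, hs⟩ j)
    · rintro s t ⟨hs, e1⟩ ⟨ht, e2⟩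
      refine ⟨𝔞.add_mem hs ht, ?_⟩
      have : (⟨s + t, 𝔞.add_mem hs ht⟩ : 𝔞) = ⟨s, hs⟩ + ⟨t, ht⟩ := rfl
      rw [this, map_add, e1, e2, add_zero]
  exact this.2

theorem imQ_ge' {I 𝔞 : Ideal B} (φ : 𝔞 →ₗ[B] (Fin m → B ⧸ maximalIdeal B))
    (hs : Function.Surjective φ)
    (h : I ≤ maximalIdeal B * 𝔞) :
    m ≤ Module.length B (imQ 𝔞 I) ∧
    ∀ w ∈ maximalIdeal B * 𝔞, w ∉ I → m + 1 ≤ Module.length B (imQ 𝔞 I) := by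
  have e0 : Module.length B (imQ 𝔞 I) = Module.length B (𝔞 ⧸ LinearMap.ker (I.mkQ ∘ₗ 𝔞.subtype)) :=
    ((LinearMap.quotKerEquivRange (I.mkQ ∘ₗ 𝔞.subtype)).length_eq).symm
  have hle : LinearMap.ker (I.mkQ ∘ₗ 𝔞.subtype) ≤ LinearMap.ker φ := fun v hv => by
      have : v.1 ∈ I := (Submodule.Quotient.mk_eq_zero I).1 hv
      exact kill_aux φ v.1 (h this) v.2
  rw [e0]
  have hs' : Function.Surjective ((LinearMap.ker (I.mkQ ∘ₗ 𝔞.subtype)).liftQ φ hle) := by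
    intro n
    obtain ⟨v, rfl⟩ := hs n
    exact ⟨Submodule.Quotient.mk v, rfl⟩
  obtain ⟨h1, h2⟩ := len_ge_aux _ hs'
  refine ⟨h1, fun w hw hwI => ?_⟩
  have hw' : w ∈ 𝔞 := (Ideal.mul_le_right : maximalIdeal B * 𝔞 ≤ 𝔞) hw
  refine h2 (Submodule.Quotient.mk ⟨w, hw'⟩) ?_ ?_
  · exact kill_aux φ w hw _
  · intro h0
    have := (Submodule.Quotient.mk_eq_zero _).1 h0
    exact hwI ((Submodule.Quotient.mk_eq_zero I).1 this)

theorem imQ_ge {I : Ideal B} (hsyz : ∀ v, g ⬝ᵥ v = 0 → ∀ i, v i ∈ maximalIdeal B)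
    (h : I ≤ maximalIdeal B * Ideal.span (Set.range g)) :
    m ≤ Module.length B (imQ (Ideal.span (Set.range g)) I) ∧
    ∀ w ∈ maximalIdeal B * Ideal.span (Set.range g), w ∉ I →
      m + 1 ≤ Module.length B (imQ (Ideal.span (Set.range g)) I) := by
  obtain ⟨φ, hφ⟩ := resHom hsyz
  refine imQ_ge' φ ?_ h
  intro n
  choose v hv using fun i => Submodule.Quotient.mk_surjective _ (n i)
  refine ⟨⟨g ⬝ᵥ v, (mem_spr g _).2 ⟨v, rfl⟩⟩, ?_⟩
  funext j
  rw [← hv j]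
  exact hφ v _ j
end
end Part14

section Part15
open IsLocalRing Matrix
section
variable {B : Type*} [CommRing B] {x y z : B}

theorem rng3 (x y z : B) : Set.range ![x, y, z] = {x, y, z} := by
  ext v; simp [Fin.exists_fin_succ, eq_comm]; tauto

theorem IBm (i : Fin 6) : B1 x y z i ∈ IB x y z := gi_mem i
theorem IAm (i : Fin 5) : A1 x y z i ∈ IA x y z := gi_mem i

theorem IBf : x ^ 2 ∈ IB x y z ∧ y ^ 2 ∈ IB x y z ∧ x * y ∈ IB x y z ∧ x * z ∈ IB x y z ∧
    z ^ 2 ∈ IB x y z ∧ y * z ∈ IB x y z :=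
  ⟨IBm 0, IBm 1, IBm 2, IBm 3, IBm 4, IBm 5⟩

theorem IAf : x ^ 3 ∈ IA x y z ∧ y ^ 3 ∈ IA x y z ∧ x * y * z ∈ IA x y z ∧
    x ^ 2 * y + x * z ^ 2 + y ^ 2 * z ∈ IA x y z ∧ z ^ 3 ∈ IA x y z :=
  ⟨IAm 0, IAm 1, IAm 2, IAm 3, IAm 4⟩

theorem IB_sq : IB x y z * IB x y z ≤ IA x y z := by
  obtain ⟨a, b, c, d, e⟩ := IAf (x := x) (y := y) (z := z)
  have m1 : ∀ {p q : B} (t : B), q ∈ IA x y z → p = t * q → p ∈ IA x y z := by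
    rintro p q t hq rfl; exact Ideal.mul_mem_left _ _ hq
  have xy : x ^ 2 * y ^ 2 ∈ IA x y z := by
    have := Ideal.sub_mem _ (Ideal.sub_mem _ (Ideal.mul_mem_left _ y d) (Ideal.mul_mem_left _ z b))
      (Ideal.mul_mem_left _ z c)
    convert this using 1; ring
  have yz : y ^ 2 * z ^ 2 ∈ IA x y z := by
    have := Ideal.sub_mem _ (Ideal.sub_mem _ (Ideal.mul_mem_left _ z d) (Ideal.mul_mem_left _ x c))
      (Ideal.mul_mem_left _ x e)
    convert this using 1; ring
  have zx : z ^ 2 * x ^ 2 ∈ IA x y z := by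
    have := Ideal.sub_mem _ (Ideal.sub_mem _ (Ideal.mul_mem_left _ x d) (Ideal.mul_mem_left _ y a))
      (Ideal.mul_mem_left _ y c)
    convert this using 1; ring
  unfold IB
  rw [Ideal.span_mul_span', Ideal.span_le]
  rintro _ ⟨_, ⟨i, rfl⟩, _, ⟨j, rfl⟩, rfl⟩
  show B1 x y z i * B1 x y z j ∈ IA x y z
  fin_cases i <;> fin_cases j <;> simp [B1] <;> first
    | exact m1 1 xy (by ring1)
    | exact m1 1 yz (by ring1)
    | exact m1 1 zx (by ring1)
    | exact m1 x a (by ring1)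
    | exact m1 y a (by ring1)
    | exact m1 z a (by ring1)
    | exact m1 x b (by ring1)
    | exact m1 y b (by ring1)
    | exact m1 z b (by ring1)
    | exact m1 x c (by ring1)
    | exact m1 y c (by ring1)
    | exact m1 z c (by ring1)
    | exact m1 x e (by ring1)
    | exact m1 y e (by ring1)
    | exact m1 z e (by ring1)

theorem IB_le {𝔫 : Ideal B} (hx : x ∈ 𝔫) (hy : y ∈ 𝔫) (hz : z ∈ 𝔫) : IB x y z ≤ 𝔫 * 𝔫 := by
  unfold IB
  rw [Ideal.span_le]
  rintro _ ⟨i, rfl⟩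
  have m : ∀ {p q r : B}, p ∈ 𝔫 → q ∈ 𝔫 → r = p * q → r ∈ 𝔫 * 𝔫 := by
    rintro p q _ hp hq rfl; exact Ideal.mul_mem_mul hp hq
  show B1 x y z i ∈ _
  fin_cases i
  · exact m hx hx (pow_two x)
  · exact m hy hy (pow_two y)
  · exact m hx hy rfl
  · exact m hx hz rfl
  · exact m hz hz (pow_two z)
  · exact m hy hz rfl

theorem IA_le {𝔫 : Ideal B} (hx : x ∈ 𝔫) (hy : y ∈ 𝔫) (hz : z ∈ 𝔫) :
    IA x y z ≤ 𝔫 * IB x y z := by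
  obtain ⟨a, b, c, d, e, f⟩ := IBf (x := x) (y := y) (z := z)
  have m : ∀ {p q r : B}, p ∈ 𝔫 → q ∈ IB x y z → r = p * q → r ∈ 𝔫 * IB x y z := by
    rintro p q _ hp hq rfl; exact Ideal.mul_mem_mul hp hq
  conv_lhs => unfold IA
  rw [Ideal.span_le]
  rintro _ ⟨i, rfl⟩
  show A1 x y z i ∈ _
  fin_cases i
  · exact m hx a (pow_succ' x 2)
  · exact m hy b (pow_succ' y 2)
  · exact m hx f (mul_assoc x y z)
  · exact Ideal.add_mem _ (Ideal.add_mem _ (m hx c (by ring)) (m hx e rfl)) (m hy f (by ring))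
  · exact m hz e (pow_succ' z 2)

theorem nn_le : Ideal.span {x, y, z} * Ideal.span {x, y, z} ≤ IB x y z := by
  obtain ⟨a, b, c, d, e, f⟩ := IBf (x := x) (y := y) (z := z)
  rw [Ideal.span_mul_span', Ideal.span_le]
  rintro _ ⟨p, hp, q, hq, rfl⟩
  show p * q ∈ IB x y z
  have m : ∀ {q r : B}, q ∈ IB x y z → r = q → r ∈ IB x y z := by
    rintro q _ hq rfl; exact hq
  rcases hp with rfl | rfl | rfl <;> rcases hq with rfl | rfl | rfl <;> first
    | exact m a (by ring1)
    | exact m b (by ring1)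
    | exact m c (by ring1)
    | exact m d (by ring1)
    | exact m e (by ring1)
    | exact m f (by ring1)

variable [IsLocalRing B] [IsNoetherianRing B]

theorem syzN (hX : Reg3 x y z) (hx : x ∈ maximalIdeal B) (hy : y ∈ maximalIdeal B)
    (hz : z ∈ maximalIdeal B) (v : Fin 3 → B) (h : ![x, y, z] ⬝ᵥ v = 0) (i : Fin 3) :
    v i ∈ maximalIdeal B := by
  have : x * v 0 + y * v 1 + z * v 2 = 0 := by
    rw [← h]; simp [dotProduct, Fin.sum_univ_succ]; ring
  obtain ⟨p, q, r, h0, h1, h2⟩ := hX.k1 this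
  rw [← residue_eq_zero_iff] at *
  fin_cases i
  · show residue B (v 0) = 0; rw [h0]; simp [hx, hy, hz]
  · show residue B (v 1) = 0; rw [h1]; simp [hx, hy, hz]
  · show residue B (v 2) = 0; rw [h2]; simp [hx, hy, hz]

theorem syzB (hX : Reg3 x y z) (hx : x ∈ maximalIdeal B) (hy : y ∈ maximalIdeal B)
    (hz : z ∈ maximalIdeal B) (v : Fin 6 → B) (h : B1 x y z ⬝ᵥ v = 0) (i : Fin 6) :
    v i ∈ maximalIdeal B := by
  have hr := hX.pow hx hy hz 2 2 2 (by norm_num) (by norm_num) (by norm_num)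
  rw [← residue_eq_zero_iff] at *
  obtain ⟨w, rfl⟩ := (IB_exact hr hx hy hz).1 v h
  rw [B2a]
  fin_cases i <;> simp [hx, hy, hz]

theorem syzA (hX : Reg3 x y z) (hx : x ∈ maximalIdeal B) (hy : y ∈ maximalIdeal B)
    (hz : z ∈ maximalIdeal B) (v : Fin 5 → B) (h : A1 x y z ⬝ᵥ v = 0) (i : Fin 5) :
    v i ∈ IB x y z := by
  obtain ⟨a, b, c, d, e, f⟩ := IBf (x := x) (y := y) (z := z)
  have hr := hX.pow hx hy hz 3 3 3 (by norm_num) (by norm_num) (by norm_num)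
  rw [← residue_eq_zero_iff] at hx hy hz
  obtain ⟨w, rfl⟩ := (IA_exact hr hx hy hz).1 v h
  rw [A2a]
  simp only [neg_mul]
  generalize IB x y z = I at *
  fin_cases i <;> simp only [Fin.reduceFinMk, Matrix.cons_val, Fin.zero_eta, Fin.mk_one] <;>
    repeat' first
    | assumption
    | apply Ideal.add_mem
    | apply Ideal.sub_mem
    | apply neg_mem
    | apply Ideal.mul_mem_right

theorem x2y (hX : Reg3 x y z) (hx : x ∈ maximalIdeal B) (hy : y ∈ maximalIdeal B)
    (hz : z ∈ maximalIdeal B) : x ^ 2 * y ∉ IA x y z := by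
  intro h
  obtain ⟨v, hv⟩ := (mem_spr (A1 x y z) _).1 h
  rw [A1a] at hv
  have yzx := hX.rot hx hy hz
  have zxy := yzx.rot hy hz hx
  have xzy : Reg3 x z y := hX.perm hx hy hz (List.Perm.cons _ (List.Perm.swap _ _ _))
  have r1 := yzx.pow hy hz hx 3 1 2 (by norm_num) (by norm_num) (by norm_num)
  have r2 := zxy.pow hz hx hy 3 1 2 (by norm_num) (by norm_num) (by norm_num)
  rw [pow_one] at r1 r2
  obtain ⟨u1, u2, h1⟩ := r1.2.2 (y * (1 - v 3) - x * v 0) (v 1)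
    (x * y * v 2 + (x * z + y ^ 2) * v 3 + z ^ 2 * v 4) (by linear_combination -hv)
  obtain ⟨u3, u4, h2⟩ := xzy.2.2 (1 - v 3 - y ^ 2 * u1) (v 0) u2 (by linear_combination h1)
  obtain ⟨u5, u6, h3⟩ := r2.2.2 (v 3 * z + y * v 1) (- v 4)
    (x * y * (1 - v 3) - x ^ 2 * v 0 - y * z * v 2 - z ^ 2 * v 3) (by linear_combination hv)
  obtain ⟨u7, u8, h4⟩ := hX.2.2 (v 3 - z ^ 2 * u5) u6 (- v 1) (by linear_combination h3)
  have : (1 : B) ∈ maximalIdeal B := by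
    have e : (1 : B) = y ^ 2 * u1 + x * u3 + z * u4 + z ^ 2 * u5 + x * u7 + y * u8 := by
      linear_combination h2 + h4
    rw [e]
    rw [← residue_eq_zero_iff] at *
    simp [hx, hy, hz]
  exact (Ideal.ne_top_iff_one _).1 (maximalIdeal.isMaximal B).ne_top this

theorem imQ_kill {𝔞 𝔟 I : Ideal B} (h : 𝔟 * 𝔞 ≤ I) : ∀ b ∈ 𝔟, ∀ n ∈ imQ 𝔞 I, b • n = 0 := by
  rintro b hb _ ⟨⟨a, ha⟩, rfl⟩
  exact (Submodule.Quotient.mk_eq_zero I).2 (h (Ideal.mul_mem_mul hb ha))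

theorem not_LInv_IB (hX : Reg3 x y z) (hmax : maximalIdeal B = Ideal.span {x, y, z}) :
    ¬ LInv (IB x y z) := by
  have hx : x ∈ maximalIdeal B := hmax ▸ mem3a x y z
  have hy : y ∈ maximalIdeal B := hmax ▸ mem3b x y z
  have hz : z ∈ maximalIdeal B := hmax ▸ mem3c x y z
  rintro ⟨hf, hl⟩
  have hle := IB_le hx hy hz
  have e := imQ_len (hle.trans Ideal.mul_le_right)
  rw [len_k] at e
  have hge := (imQ_ge (I := IB x y z) (syzN hX hx hy hz) (by
    rw [rng3, ← hmax]; exact hle)).1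
  rw [rng3, ← hmax] at hge
  have lb := low_bd (g := B1 x y z) (maximalIdeal B) (syzB hX hx hy hz)
    (imQ (maximalIdeal B) (IB x y z)) (imQ_kill (by conv_lhs => rw [hmax]
                                                    exact nn_le))
  change ((6 : ℕ) : ℕ∞) * Module.length B (imQ (maximalIdeal B) (IB x y z)) ≤ Module.length B (IB x y z →ₗ[B] B ⧸ IB x y z) at lb
  rw [hl, e] at lb
  rw [e] at hf
  generalize Module.length B (imQ (maximalIdeal B) (IB x y z)) = s at *
  have : s ≠ ⊤ := by rintro rfl; exact hf (by simp)
  lift s to ℕ using this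
  have lb' : ((6 * s : ℕ) : ℕ∞) ≤ ((3 * (s + 1) : ℕ) : ℕ∞) := by push_cast; exact lb
  have := ENat.coe_le_coe.1 lb'
  norm_cast at hge
  omega

theorem not_LInv_IA (hX : Reg3 x y z) (hmax : maximalIdeal B = Ideal.span {x, y, z}) :
    ¬ LInv (IA x y z) := by
  have hx : x ∈ maximalIdeal B := hmax ▸ mem3a x y z
  have hy : y ∈ maximalIdeal B := hmax ▸ mem3b x y z
  have hz : z ∈ maximalIdeal B := hmax ▸ mem3c x y z
  rintro ⟨hf, hl⟩
  have hle := IB_le hx hy hz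
  have e := imQ_len (hle.trans Ideal.mul_le_right)
  rw [len_k] at e
  have hle' := IA_le hx hy hz
  have e' := imQ_len (hle'.trans Ideal.mul_le_right)
  have hup := imQ_le (I := IB x y z) (g := ![x, y, z]) (by
    rw [rng3, hmax]; exact nn_le)
  rw [rng3, ← hmax] at hup
  have hge := (imQ_ge (I := IA x y z) (syzB hX hx hy hz) hle').2 (x ^ 2 * y) (by
    have := Ideal.mul_mem_mul hx (IBf (x := x) (y := y) (z := z)).2.2.1
    rw [pow_two, mul_assoc]; exact this) (x2y hX hx hy hz)
  change _ ≤ Module.length B (imQ (IB x y z) (IA x y z)) at hge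
  have lb := low_bd (g := A1 x y z) (IB x y z) (syzA hX hx hy hz)
    (imQ (IB x y z) (IA x y z)) (imQ_kill IB_sq)
  change ((5 : ℕ) : ℕ∞) * Module.length B (imQ (IB x y z) (IA x y z)) ≤ Module.length B (IA x y z →ₗ[B] B ⧸ IA x y z) at lb
  rw [hl, e', e] at lb
  rw [e'] at hf
  generalize Module.length B (imQ (maximalIdeal B) (IB x y z)) = s at *
  generalize Module.length B (imQ (IB x y z) (IA x y z)) = t at *
  have : t ≠ ⊤ := by rintro rfl; exact hf (by simp)
  lift t to ℕ using this
  have : s ≠ ⊤ := by rintro rfl; simp at hup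
  lift s to ℕ using this
  have lb' : ((5 * t : ℕ) : ℕ∞) ≤ ((3 * (t + (s + 1)) : ℕ) : ℕ∞) := by push_cast; exact lb
  have := ENat.coe_le_coe.1 lb'
  norm_cast at hge hup
  omega
end
end Part15

section Part16
open IsLocalRing Matrix
section
variable {Q B : Type*} [CommRing Q] [CommRing B] [Algebra Q B]

theorem Reg3.loc {a b c : Q} (h : Reg3 a b c) (M : Submonoid Q) [IsLocalization M B] :
    Reg3 (algebraMap Q B a) (algebraMap Q B b) (algebraMap Q B c) := by
  rw [reg3_iff_weak] at *
  exact RingTheory.Sequence.IsWeaklyRegular.of_isLocalization B M h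

theorem map3 {a b c : Q} : (Ideal.span {a, b, c}).map (algebraMap Q B) =
    Ideal.span {algebraMap Q B a, algebraMap Q B b, algebraMap Q B c} := by
  rw [Ideal.map_span]; congr 1; simp [Set.image_insert_eq]

theorem mapIA {x y z : Q} : (IA x y z).map (algebraMap Q B) =
    IA (algebraMap Q B x) (algebraMap Q B y) (algebraMap Q B z) := by
  unfold IA
  rw [Ideal.map_span, ← Set.range_comp]
  congr 2
  ext i; fin_cases i <;> simp [A1]

theorem mapIB {x y z : Q} : (IB x y z).map (algebraMap Q B) =
    IB (algebraMap Q B x) (algebraMap Q B y) (algebraMap Q B z) := by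
  unfold IB
  rw [Ideal.map_span, ← Set.range_comp]
  congr 2
  ext i; fin_cases i <;> simp [B1]

theorem colon_loc (M : Submonoid Q) [IsLocalization M B] {I J α : Ideal Q} (hI : I.FG)
    (hJ : ∀ r, r ∈ J ↔ ∀ i ∈ I, r * i ∈ α) (r : B) :
    r ∈ J.map (algebraMap Q B) ↔ ∀ i ∈ I.map (algebraMap Q B), r * i ∈ α.map (algebraMap Q B) := by
  constructor
  · intro hr i hi
    have := Ideal.mul_mem_mul hr hi
    rw [← Ideal.map_mul] at this
    refine Ideal.map_mono ?_ this
    rw [Ideal.mul_le]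
    exact fun r hr i hi => (hJ r).1 hr i hi
  · intro h
    obtain ⟨⟨a, s⟩, e⟩ := IsLocalization.surj M r
    simp only at e
    obtain ⟨S, rfl⟩ := hI
    have key : ∀ T : Finset Q, T ⊆ S → ∃ t ∈ M, ∀ i ∈ T, t * a * i ∈ α := by
      classical
      intro T
      induction T using Finset.induction_on with
      | empty => intro _; exact ⟨1, M.one_mem, by simp⟩
      | insert j T hj ih =>
        intro hT
        obtain ⟨t, ht, h1⟩ := ih ((Finset.subset_insert _ _).trans hT)
        have hjS : j ∈ Ideal.span (S : Set Q) := Ideal.subset_span (hT (Finset.mem_insert_self _ _))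
        have h2 := h _ (Ideal.mem_map_of_mem _ hjS)
        have h3 : algebraMap Q B (a * j) ∈ α.map (algebraMap Q B) := by
          rw [map_mul, ← e]
          have := Ideal.mul_mem_left _ (algebraMap Q B s) h2
          convert this using 1; ring
        obtain ⟨u, hu, h4⟩ := (IsLocalization.algebraMap_mem_map_algebraMap_iff M B α _).1 h3
        refine ⟨t * u, M.mul_mem ht hu, fun i hi => ?_⟩
        rcases Finset.mem_insert.1 hi with rfl | hi
        · have := Ideal.mul_mem_left _ t h4
          convert this using 1; ring
        · have := Ideal.mul_mem_left _ u (h1 i hi)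
          convert this using 1; ring
    obtain ⟨t, ht, h1⟩ := key S subset_rfl
    have h2 : t * a ∈ J := by
      rw [hJ]
      intro i hi
      induction hi using Submodule.span_induction with
      | mem i hi => exact h1 i hi
      | zero => simp
      | add p q _ _ hp hq => rw [mul_add]; exact Ideal.add_mem _ hp hq
      | smul p q _ hq =>
        have := Ideal.mul_mem_left _ p hq
        convert this using 1; simp; ring
    have h3 : algebraMap Q B a ∈ J.map (algebraMap Q B) :=
      (IsLocalization.algebraMap_mem_map_algebraMap_iff M B J _).2 ⟨t, ht, h2⟩
    rw [← e] at h3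
    exact (Ideal.mul_unit_mem_iff_mem _ (IsLocalization.map_units B s)).1 h3
end

section
variable {Q B : Type*} [CommRing Q] [IsNoetherianRing Q] [CommRing B] [Algebra Q B]
  [IsLocalRing B] [IsNoetherianRing B]

theorem ci_dich (a b c : B) : Ideal.span {a, b, c} = ⊤ ∨
    (a ∈ maximalIdeal B ∧ b ∈ maximalIdeal B ∧ c ∈ maximalIdeal B) := by
  by_cases h : Ideal.span {a, b, c} = ⊤
  · exact Or.inl h
  · have := le_maximalIdeal h
    exact Or.inr ⟨this (mem3a a b c), this (mem3b a b c), this (mem3c a b c)⟩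

theorem licci_LInv (M : Submonoid Q) [IsLocalization M B] {x y z : B} (hX : Reg3 x y z)
    (hmax : maximalIdeal B = Ideal.span {x, y, z}) {I : Ideal Q} (h : Licci I) :
    LInv (I.map (algebraMap Q B)) := by
  obtain ⟨C, hL, a, b, c, hreg, rfl⟩ := h
  induction hL using Relation.ReflTransGen.head_induction_on with
  | refl =>
    have hr := ((reg3_iff_weak _ _ _).2 hreg.toIsWeaklyRegular).loc (B := B) M
    rw [map3]
    rcases ci_dich (algebraMap Q B a) (algebraMap Q B b) (algebraMap Q B c) with h | ⟨ha, hb, hc⟩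
    · rw [h]; exact LInv_top
    · exact LInv_ci hX hmax hr ha hb hc
  | head h _ ih =>
    rename_i I J _
    obtain ⟨a, b, c, ha, hb, hc, hreg, rfl⟩ := h
    have hr := ((reg3_iff_weak _ _ _).2 hreg.toIsWeaklyRegular).loc (B := B) M
    have le : Ideal.span {a, b, c} ≤ I := by
      rw [Ideal.span_le]
      rintro _ (rfl | rfl | rfl) <;> assumption
    have le' := Ideal.map_mono (f := algebraMap Q B) le
    rw [map3] at le'
    rcases ci_dich (algebraMap Q B a) (algebraMap Q B b) (algebraMap Q B c) with h | ⟨ha, hb, hc⟩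
    · rw [h] at le'; rw [top_le_iff.1 le']; exact LInv_top
    · refine LInv_link hX hmax hr ha hb hc le' (J := _) ?_ ih
      rw [← map3]
      refine colon_loc M ((isNoetherianRing_iff_ideal_fg Q).1 inferInstance I) ?_
      intro r
      rw [Submodule.mem_colon]; rfl
end

section
variable {Q : Type*} [CommRing Q] [IsNoetherianRing Q]

theorem not_licci {x y z : Q} (hX : Reg3 x y z) (hP : (Ideal.span {x, y, z}).IsPrime) :
    ¬ Licci (IA x y z) ∧ ¬ Licci (IB x y z) := by
  have hr := hX.loc (B := Localization.AtPrime (Ideal.span {x, y, z}))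
    (Ideal.span {x, y, z}).primeCompl
  have hmax := Localization.AtPrime.map_eq_maximalIdeal (I := Ideal.span {x, y, z})
  rw [map3] at hmax
  constructor
  · intro h
    have := licci_LInv (Ideal.span {x, y, z}).primeCompl hr hmax.symm h
    rw [mapIA] at this
    exact not_LInv_IA hr hmax.symm this
  · intro h
    have := licci_LInv (Ideal.span {x, y, z}).primeCompl hr hmax.symm h
    rw [mapIB] at this
    exact not_LInv_IB hr hmax.symm this
end
end Part16

section Part17
open IsLocalRing Matrix
section
variable {k : Type*} [Field k] {σ : Type*}

open Classical in
noncomputable def killX (k : Type*) [Field k] {σ : Type*} (s : Set σ) :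
    MvPolynomial σ k →ₐ[k] MvPolynomial σ k :=
  MvPolynomial.aeval fun i => if i ∈ s then 0 else MvPolynomial.X i

theorem ker_killX (s : Set σ) : RingHom.ker (killX k s) = Ideal.span (MvPolynomial.X '' s) := by
  classical
  apply le_antisymm
  · intro p hp
    have h : (Ideal.Quotient.mkₐ k (Ideal.span (MvPolynomial.X '' s : Set (MvPolynomial σ k)))).comp (killX k s) =
        Ideal.Quotient.mkₐ k (Ideal.span (MvPolynomial.X '' s)) := by
      ext i
      by_cases hi : i ∈ s
      · have : (MvPolynomial.X i : MvPolynomial σ k) ∈ Ideal.span (MvPolynomial.X '' s : Set (MvPolynomial σ k)) :=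
          Ideal.subset_span ⟨i, hi, rfl⟩
        have h2 := Ideal.Quotient.eq_zero_iff_mem.2 this
        simp [killX, hi, h2]
      · simp [killX, hi]
    have h1 := DFunLike.congr_fun h p
    have h2 : killX k s p = 0 := hp
    rw [AlgHom.comp_apply, h2, map_zero] at h1
    exact Ideal.Quotient.eq_zero_iff_mem.1 h1.symm
  · rw [Ideal.span_le]
    rintro _ ⟨i, hi, rfl⟩
    show killX k s (MvPolynomial.X i) = 0
    simp [killX, hi]

theorem prime_spanX (s : Set σ) :
    (Ideal.span (MvPolynomial.X '' s : Set (MvPolynomial σ k))).IsPrime := by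
  rw [← ker_killX]; exact RingHom.ker_isPrime _

theorem X_notMem {s : Set σ} {i : σ} (hi : i ∉ s) :
    (MvPolynomial.X i : MvPolynomial σ k) ∉ Ideal.span (MvPolynomial.X '' s : Set (MvPolynomial σ k)) := by
  rw [← ker_killX]
  intro h
  have : killX k s (MvPolynomial.X i) = 0 := h
  simp [killX, hi] at this

theorem reg3_X {a b c : σ} (hab : b ≠ a) (hac : c ≠ a) (hbc : c ≠ b) :
    Reg3 (MvPolynomial.X a : MvPolynomial σ k) (MvPolynomial.X b) (MvPolynomial.X c) := by
  refine ⟨fun r h => ?_, fun r s h => ?_, fun r s t h => ?_⟩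
  · exact (mul_eq_zero.1 h).resolve_left (MvPolynomial.X_ne_zero _)
  · have p := prime_spanX (k := k) ({a} : Set σ)
    have n := X_notMem (k := k) (s := {a}) (i := b) (by simpa using hab)
    simp only [Set.image_singleton] at p n
    have := (p.mem_or_mem (x := MvPolynomial.X b) (y := r)
      (by rw [h]; exact Ideal.mul_mem_right _ _ (Ideal.mem_span_singleton_self _))).resolve_left n
    exact Ideal.mem_span_singleton.1 this
  · have p := prime_spanX (k := k) ({a, b} : Set σ)
    have n := X_notMem (k := k) (s := {a, b}) (i := c) (by simp [hac, hbc])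
    simp only [Set.image_pair] at p n
    have := (p.mem_or_mem (x := MvPolynomial.X c) (y := r)
      (by rw [h]; exact Ideal.mem_span_pair.2 ⟨s, t, by ring⟩)).resolve_left n
    obtain ⟨u, v, e⟩ := Ideal.mem_span_pair.1 this
    exact ⟨u, v, by rw [← e]; ring⟩
end

section
variable {Q : Type*} [CommRing Q] [IsLocalRing Q]

theorem mem_smul_top {m : ℕ} (v : Fin m → Q) (h : ∀ i, v i ∈ maximalIdeal Q) :
    v ∈ maximalIdeal Q • (⊤ : Submodule Q (Fin m → Q)) := by
  rw [pi_eq_sum_univ' v]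
  exact Submodule.sum_mem _ fun i _ => Submodule.smul_mem_smul (h i) trivial

theorem St.fmt {I : Ideal Q} {m n : ℕ} (hm : 3 ≤ m) (hn : 1 ≤ n) (h : St I m n) :
    IsGrade3PerfectOfFormat I m n := by
  obtain ⟨ι1, ι2, ι3, _, _, _, _, _, _, C, ⟨G⟩, h1, h2, h3⟩ := h
  refine ⟨⟨C.g G.i0, C.g G.i1, C.g G.i4, C.g_mem _, C.g_mem _, C.g_mem _, ?_⟩, hm, hn, ?_⟩
  · rw [← reg3_iff (C.g_max _) (C.g_max _) (C.g_max _), G.pw]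
    exact G.reg.pow_last _ G.hN
  · have f1 : Fin m ≃ ι1 := (Fintype.equivFinOfCardEq h1).symm
    have f2 : Fin (m + n - 1) ≃ ι2 := (Fintype.equivFinOfCardEq (by omega)).symm
    have f3 : Fin n ≃ ι3 := (Fintype.equivFinOfCardEq h3).symm
    let E1 : (ι1 → Q) ≃ₗ[Q] (Fin m → Q) := LinearEquiv.funCongrLeft Q Q f1
    let E2 : (ι2 → Q) ≃ₗ[Q] (Fin (m + n - 1) → Q) := LinearEquiv.funCongrLeft Q Q f2
    let E3 : (ι3 → Q) ≃ₗ[Q] (Fin n → Q) := LinearEquiv.funCongrLeft Q Q f3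
    refine ⟨C.d1 ∘ₗ E1.symm.toLinearMap, E1.toLinearMap ∘ₗ C.d2 ∘ₗ E2.symm.toLinearMap,
      E2.toLinearMap ∘ₗ C.d3 ∘ₗ E3.symm.toLinearMap, ?_, ?_, ?_, ?_, C.m1, ?_, ?_⟩
    · ext r
      rw [C.r1]
      constructor
      · rintro ⟨v, rfl⟩; exact ⟨E1.symm v, rfl⟩
      · rintro ⟨v, rfl⟩; exact ⟨E1 v, by simp⟩
    · ext v
      constructor
      · rintro ⟨w, rfl⟩; simp [C.c1]
      · intro hv
        obtain ⟨w, hw⟩ := C.e1 (E1.symm v) hv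
        exact ⟨E2 w, by simp [hw]⟩
    · ext v
      constructor
      · rintro ⟨w, rfl⟩; simp [C.c2]
      · intro hv
        have hv' : E1 (C.d2 (E2.symm v)) = 0 := hv
        rw [LinearEquiv.map_eq_zero_iff] at hv'
        obtain ⟨w, hw⟩ := C.e2 (E2.symm v) hv'
        exact ⟨E3 w, by simp [hw]⟩
    · rw [LinearMap.ker_eq_bot']
      intro v hv
      have hv' : E2 (C.d3 (E3.symm v)) = 0 := hv
      rw [LinearEquiv.map_eq_zero_iff] at hv'
      simpa using C.e3 _ hv'
    · rintro _ ⟨w, rfl⟩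
      exact mem_smul_top _ fun i => C.m2 _ (f1 i)
    · rintro _ ⟨w, rfl⟩
      exact mem_smul_top _ fun i => C.m3 _ (f2 i)

def NL (Q : Type*) [CommRing Q] [IsLocalRing Q] (m n : ℕ) : Prop :=
  ∃ I : Ideal Q, St I m n ∧ ¬ Licci I
end
end Part17

section Part18
open IsLocalRing Matrix
section
variable {Q : Type*} [CommRing Q] [IsLocalRing Q] [IsNoetherianRing Q]

theorem NL.D {m n : ℕ} (h : NL Q m n) : NL Q m (n + 1) := by
  obtain ⟨I, hS, hI⟩ := h
  obtain ⟨J, hJ, hL⟩ := D_step hS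
  exact ⟨J, hJ, fun h => hI (licci_of_linked hL h)⟩

theorem NL.L {m n : ℕ} (hn : 2 ≤ n) (h : NL Q m n) : NL Q (n + 3) (m - 3) := by
  obtain ⟨I, hS, hI⟩ := h
  obtain ⟨J, hJ, hL⟩ := L_step hn hS
  exact ⟨J, hJ, fun h => hI (licci_of_linked hL h)⟩

theorem NL.Ds {m n n' : ℕ} (h : NL Q m n) (hn : n ≤ n') : NL Q m n' := by
  induction n', hn using Nat.le_induction with
  | base => exact h
  | succ _ _ ih => exact ih.D

theorem NL_all (hA : NL Q 5 5) (hB : NL Q 6 3) (m n : ℕ) (hm : 3 ≤ m) (hn : 1 ≤ n)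
    (h : 2 * (m + n - 1) ≤ (m - 2) * (n + 1)) : NL Q m n := by
  obtain ⟨m, rfl⟩ := Nat.exists_eq_add_of_le hm
  have e1 : 3 + m - 2 = m + 1 := by omega
  have e2 : 3 + m + n - 1 = m + n + 2 := by omega
  rw [e1, e2] at h
  rcases lt_or_ge m 5 with hm5 | hm5
  · interval_cases m
    · omega
    · omega
    · exact hA.Ds (by omega)
    · exact hB.Ds (by omega)
    · have h1 := hB.D.L (by norm_num)
      exact h1.Ds (by omega)
  · have hn2 : 2 ≤ n := by
      by_contra hc
      have : n = 1 := by omega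
      subst this
      omega
    have h1 := (hA.Ds hm5).L (by omega)
    rw [add_comm m 3] at h1
    exact h1.Ds hn2

theorem NL_of {x y z : Q} (hX : Reg3 x y z) (hx : x ∈ maximalIdeal Q) (hy : y ∈ maximalIdeal Q)
    (hz : z ∈ maximalIdeal Q) (hP : (Ideal.span {x, y, z}).IsPrime) : NL Q 5 5 ∧ NL Q 6 3 := by
  obtain ⟨hA, hB⟩ := not_licci hX hP
  have r3 := hX.pow hx hy hz 3 3 3 (by norm_num) (by norm_num) (by norm_num)
  have r31 := hX.pow hx hy hz 3 3 1 (by norm_num) (by norm_num) (by norm_num)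
  have r2 := hX.pow hx hy hz 2 2 2 (by norm_num) (by norm_num) (by norm_num)
  have r21 := hX.pow hx hy hz 2 2 1 (by norm_num) (by norm_num) (by norm_num)
  rw [pow_one] at r31 r21
  rw [← residue_eq_zero_iff] at hx hy hz
  exact ⟨⟨_, StA r3 hx hy hz r31, hA⟩, ⟨_, StB r2 hx hy hz r21, hB⟩⟩
end
end Part18

/-- **Theorem 2.1.** Let `k` be a field, `e ≥ 3`, and `Q` the localization of the
polynomial ring `k[X₁, …, X_e]` at the maximal ideal `𝔪 = (X₁, …, X_e)`.  For every
resolution format `(1, m, m+n-1, n)` with `m ≥ 3` and `n ≥ 1` that is not Dynkin, i.e.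
with `2(m+n-1) ≤ (m-2)(n+1)`, there exists a grade `3` perfect ideal in `Q` of
resolution format `(1, m, m+n-1, n)` that is not licci.
(The hypothesis `𝔪.IsPrime` is a consequence of `h𝔪` and is recorded only so that the
localization `Localization.AtPrime 𝔪` makes sense.) -/
theorem stmt_7 (k : Type*) [Field k] (e : ℕ) (he : 3 ≤ e)
    (𝔪 : Ideal (MvPolynomial (Fin e) k))
    (h𝔪 : 𝔪 = Ideal.span (Set.range MvPolynomial.X)) [𝔪.IsPrime]
    (m n : ℕ) (hm : 3 ≤ m) (hn : 1 ≤ n)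
    (hnotDynkin : 2 * (m + n - 1) ≤ (m - 2) * (n + 1)) :
    ∃ I : Ideal (Localization.AtPrime 𝔪),
      IsGrade3PerfectOfFormat I m n ∧ ¬ Licci I := by
  have n01 : (⟨1, by omega⟩ : Fin e) ≠ ⟨0, by omega⟩ := by simp
  have n02 : (⟨2, by omega⟩ : Fin e) ≠ ⟨0, by omega⟩ := by simp
  have n12 : (⟨2, by omega⟩ : Fin e) ≠ ⟨1, by omega⟩ := by simp
  have hX := reg3_X (k := k) n01 n02 n12
  have hP := prime_spanX (k := k) ({⟨0, by omega⟩, ⟨1, by omega⟩, ⟨2, by omega⟩} : Set (Fin e))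
  simp only [Set.image_insert_eq, Set.image_singleton] at hP
  have hmem : ∀ i, MvPolynomial.X i ∈ 𝔪 := fun i => by
    rw [h𝔪]; exact Ideal.subset_span ⟨i, rfl⟩
  have hmem' : ∀ i, algebraMap _ (Localization.AtPrime 𝔪) (MvPolynomial.X i) ∈
      IsLocalRing.maximalIdeal (Localization.AtPrime 𝔪) := fun i =>
    (IsLocalization.AtPrime.to_map_mem_maximal_iff (Localization.AtPrime 𝔪) 𝔪 _).2 (hmem i)
  have hX' := hX.loc (B := Localization.AtPrime 𝔪) 𝔪.primeCompl
  have hP' := IsLocalization.isPrime_of_isPrime_disjoint 𝔪.primeCompl (Localization.AtPrime 𝔪) _ hP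
    (by
      rw [Set.disjoint_left]
      intro r hr hr'
      refine hr (?_ : r ∈ 𝔪)
      refine (Ideal.span_le.2 ?_ : Ideal.span _ ≤ 𝔪) hr'
      rintro _ (rfl | rfl | rfl) <;> exact hmem _)
  rw [map3] at hP'
  obtain ⟨hA, hB⟩ := NL_of hX' (hmem' _) (hmem' _) (hmem' _) hP'
  obtain ⟨I, hI, hL⟩ := NL_all hA hB m n hm hn hnotDynkin
  exact ⟨I, hI.fmt hm hn, hL⟩
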